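/- arXiv:2404.15476 — 7 statements merged into one kernel-verified Lean document; each statement's English description precedes it below -/
import Mathlib

section
/- Let (Y,σ_Y) be an infinite topologically mixing shift of finite type over a finite alphabet. Then Y contains a nonempty closed shift-invariant subset X such that the restriction of the shift to X is chaotic almost minimal. -/
/-!
Let `a` and `b` be two words labelling loops at a common vertex of the shift of finite type, so
that all their concatenations are allowed in `Y`, and suppose that `b` violates the period `|a|`.
They exist by mixing and because `Y`, being infinite, does not consist of `|a|`-periodic points.

Put `q₀ = b`, `P₀ = {a}`, and inductively `Pₙ₊₁ = Pₙ ∪ {qₙ}` and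
`qₙ₊₁ = (∏_{p ∈ Pₙ} qₙ pⁿ⁺¹) qₙ` (`stage`). Let `X` be the set of sequences each finite window of
which occurs in some `qₙ` (`camShift`). It is a subshift of `Y`.

* Growing powers of each `p ∈ Pₙ` occur in later `q_N`, so the repetition of `p` lies in `X`
  (`per_mem`). In particular the repetitions of the `qₙ` lie in `X`. As `qₙ` occurs in every later
  `q`, they are dense and yield transitivity (`exists_translate`).
* For `n ≤ N`, the word `q_N` is a concatenation of blocks `qₙ pᵐ` with `p ∈ Pₙ` and `m ≥ 0`
  (`stage_conc`). A stretch of it without `qₙ` is therefore, away from its ends, part of a power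
  of a single `p`. Hence the points of `X` in which `qₙ` does not occur all have the period
  `∏_{p ∈ Pₙ} |p|`, and there are finitely many of them (`exists_period`). So an infinite closed
  invariant subset of `X` contains points in which `qₙ` occurs, for every `n`, and is all of `X`.
* If some power `σᵈ`, `d > 0`, were the identity on `X`, a point of `X` containing both `aᵈ` and
  `b` would be a translate of the repetition of `a`, which the choice of `b` excludes.
-/


open Set MeasureTheory

instance homeomorphGroup {X : Type*} [TopologicalSpace X] : Group (X ≃ₜ X) where
  mul f g := g.trans f
  one := Homeomorph.refl X
  inv f := f.symm
  mul_assoc f g h := Homeomorph.ext fun _ => rfl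
  one_mul f := Homeomorph.ext fun _ => rfl
  mul_one f := Homeomorph.ext fun _ => rfl
  inv_mul_cancel f := Homeomorph.ext fun x => f.symm_apply_apply x

def shiftHomeo (A : Type*) [TopologicalSpace A] : (ℤ → A) ≃ₜ (ℤ → A) where
  toFun x := fun n => x (n + 1)
  invFun x := fun n => x (n - 1)
  left_inv x := funext fun n => by simp
  right_inv x := funext fun n => by simp
  continuous_toFun := continuous_pi fun n => continuous_apply (n + 1)
  continuous_invFun := continuous_pi fun n => continuous_apply (n - 1)

def restrictHomeo {X : Type*} [TopologicalSpace X] (e : X ≃ₜ X) (s : Set X)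
    (h : ∀ x, x ∈ s ↔ e x ∈ s) : s ≃ₜ s where
  toEquiv := e.toEquiv.subtypeEquiv h
  continuous_toFun := by
    exact Continuous.subtype_mk (e.continuous.comp continuous_subtype_val) _
  continuous_invFun := by
    exact Continuous.subtype_mk (e.symm.continuous.comp continuous_subtype_val) _

def IsCAMZ {X : Type*} [TopologicalSpace X] (T : X ≃ₜ X) : Prop :=
  (∀ n : ℤ, n ≠ 0 → T ^ n ≠ 1) ∧
  (∀ U V : Set X, IsOpen U → IsOpen V → U.Nonempty → V.Nonempty →
      ∃ n : ℤ, ((T ^ n) '' U ∩ V).Nonempty) ∧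
  Dense {x : X | ∃ k : ℕ, 0 < k ∧ (T ^ k) x = x} ∧
  ∀ A : Set X, IsClosed A → T '' A = A → A ≠ Set.univ → A.Finite

def IsCAM {G X : Type*} [Group G] [TopologicalSpace X] (T : G →* (X ≃ₜ X)) : Prop :=
  Function.Injective T ∧
  (∀ U V : Set X, IsOpen U → IsOpen V → U.Nonempty → V.Nonempty →
      ∃ g : G, ((T g) '' U ∩ V).Nonempty) ∧
  Dense {x : X | (Set.range fun g : G => T g x).Finite} ∧
  ∀ A : Set X, IsClosed A → (∀ g : G, T g '' A = A) → A ≠ Set.univ → A.Finite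

/-- The word `w` occurs as a block somewhere in the bi-infinite sequence `x`. -/
def occursIn {A : Type*} (w : List A) (x : ℤ → A) : Prop :=
  ∃ k : ℤ, ∀ i : Fin w.length, x (k + (i.val : ℤ)) = w.get i

/-! ### Lists -/

/-- The `m`-th power of the word `p` under concatenation. -/
def rep {A : Type*} (p : List A) (m : ℕ) : List A := (List.replicate m p).flatten

lemma rep_zero {A : Type*} (p : List A) : rep p 0 = [] := by simp [rep]

lemma rep_succ {A : Type*} (p : List A) (m : ℕ) : rep p (m + 1) = p ++ rep p m := by
  simp [rep, List.replicate_succ]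

lemma length_rep {A : Type*} (p : List A) (m : ℕ) : (rep p m).length = m * p.length := by
  simp [rep]

lemma getElem?_rep {A : Type*} (p : List A) (m i : ℕ) (hi : i < m * p.length) :
    (rep p m)[i]? = p[i % p.length]? := by
  induction m generalizing i with
  | zero => simp at hi
  | succ m ih =>
    rw [rep_succ]
    by_cases h : i < p.length
    · rw [List.getElem?_append_left h, Nat.mod_eq_of_lt h]
    · push Not at h
      rw [List.getElem?_append_right h, ih _ (by rw [Nat.succ_mul] at hi; omega),
        ← Nat.mod_eq_sub_mod h]

lemma rep_infix {A : Type*} (p : List A) {m n : ℕ} (h : m ≤ n) : rep p m <:+: rep p n := by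
  obtain ⟨k, rfl⟩ := Nat.exists_eq_add_of_le h
  refine List.IsPrefix.isInfix ⟨rep p k, ?_⟩
  rw [rep, rep, rep, ← List.flatten_append, List.replicate_append_replicate]

lemma infix_getElem? {A : Type*} {u w : List A} (h : u <:+: w) :
    ∃ j, ∀ i < u.length, w[j + i]? = u[i]? := by
  obtain ⟨s, t, rfl⟩ := h
  refine ⟨s.length, fun i hi => ?_⟩
  rw [List.append_assoc, List.getElem?_append_right (by omega),
    Nat.add_sub_cancel_left, List.getElem?_append_left hi]

lemma infix_of_getElem? {A : Type*} {u w : List A} {j : ℕ}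
    (h : ∀ i < u.length, w[j + i]? = u[i]?) : u <:+: w := by
  have : u = (w.drop j).take u.length := by
    apply List.ext_getElem?
    intro i
    rw [List.getElem?_take, List.getElem?_drop]
    split_ifs with hi
    · exact (h i hi).symm
    · exact List.getElem?_eq_none (by omega)
  rw [this]
  exact (List.take_prefix _ _).isInfix.trans (List.drop_suffix _ _).isInfix

/-- A word no longer than the overlap `v` cannot straddle it, so forbidden words are seen in one of
the two overlapping pieces. -/
lemma infix_overlap {A : Type*} {f s v w : List A} (hf : f.length ≤ v.length)
    (h : f <:+: s ++ v ++ w) : f <:+: s ++ v ∨ f <:+: v ++ w := by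
  obtain ⟨p, r, h⟩ := h
  by_cases hps : p.length ≤ s.length
  · left
    have h1 : p ++ f <+: s ++ v := List.prefix_of_prefix_length_le ⟨r, h⟩ ⟨w, rfl⟩ (by simp; omega)
    exact (List.suffix_append p f).isInfix.trans h1.isInfix
  · right
    have h1 : s <+: p := List.prefix_of_prefix_length_le (l₃ := s ++ v ++ w)
      ⟨v ++ w, by simp⟩ ⟨f ++ r, by simpa using h⟩ (by omega)
    obtain ⟨p', rfl⟩ := h1
    exact ⟨p', r, by simpa using h⟩

/-! ### Bi-infinite sequences -/

/-- The bi-infinite periodic sequence obtained by repeating the nonempty word `p`. -/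
def per {A : Type*} (p : List A) (h : p ≠ []) (k : ℤ) : A :=
  p[(k % (p.length : ℤ)).toNat]'(by
    have h0 : 0 < p.length := List.length_pos_iff.2 h
    have h1 := Int.emod_nonneg k (b := (p.length : ℤ)) (by omega)
    have h2 := Int.emod_lt_of_pos k (b := (p.length : ℤ)) (by omega)
    omega)

lemma per_spec {A : Type*} (p : List A) (h : p ≠ []) (k : ℤ) :
    p[(k % (p.length : ℤ)).toNat]? = some (per p h k) := by
  simp [per]

lemma per_nat {A : Type*} (p : List A) (h : p ≠ []) (k : ℕ) :
    p[k % p.length]? = some (per p h k) := by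
  rw [← per_spec]
  congr 1

lemma per_add {A : Type*} (p : List A) (h : p ≠ []) (k : ℤ) :
    per p h (k + p.length) = per p h k := by
  have := per_spec p h (k + p.length)
  rw [Int.add_emod_right, per_spec] at this
  simpa using this.symm

lemma periodic_mul {A : Type*} {x : ℤ → A} {d : ℤ} (h : ∀ i, x (i + d) = x i) (m : ℤ) (i : ℤ) :
    x (i + m * d) = x i := by
  have : Function.Periodic x d := h
  exact this.int_mul m i

/-- Two sequences with a common period that agree on one period are equal. -/
lemma periodic_ext {A : Type*} {x y : ℤ → A} {D : ℕ} (hD : 0 < D)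
    (hx : ∀ i, x (i + D) = x i) (hy : ∀ i, y (i + D) = y i)
    (h : ∀ i : ℕ, i < D → x i = y i) : x = y := by
  funext k
  have h1 := Int.emod_nonneg k (b := (D : ℤ)) (by omega)
  have h2 := Int.emod_lt_of_pos k (b := (D : ℤ)) (by omega)
  have e : k = ((k % (D : ℤ)).toNat : ℤ) + (k / D) * D := by
    rw [Int.toNat_of_nonneg h1, mul_comm]; exact (Int.emod_add_mul_ediv k D).symm
  rw [e, periodic_mul hx, periodic_mul hy]
  exact h _ (by omega)

lemma finite_periodic (A : Type*) [Finite A] {D : ℕ} (hD : 0 < D) :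
    {x : ℤ → A | ∀ i, x (i + D) = x i}.Finite := by
  refine Set.Finite.of_finite_image (f := fun (x : ℤ → A) (i : Fin D) => x (i.val : ℤ))
    (Set.toFinite _) ?_
  intro x hx y hy hxy
  exact periodic_ext hD hx hy fun i hi => congrFun hxy ⟨i, hi⟩

/-- An open set around `x` contains every sequence agreeing with `x` on a large enough window. -/
lemma exists_window {A : Type*} [TopologicalSpace A] {U : Set (ℤ → A)} (hU : IsOpen U)
    {x : ℤ → A} (hx : x ∈ U) :
    ∃ L : ℕ, ∀ y : ℤ → A, (∀ i : ℤ, |i| ≤ L → y i = x i) → y ∈ U := by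
  obtain ⟨I, u, hu, hIU⟩ := isOpen_pi_iff.1 hU x hx
  refine ⟨I.sup Int.natAbs, fun y hy => hIU fun i hi => ?_⟩
  rw [hy i]
  · exact (hu i hi).2
  · have : i.natAbs ≤ I.sup Int.natAbs := Finset.le_sup (f := Int.natAbs) hi
    rw [Int.abs_eq_natAbs]
    exact_mod_cast this

lemma isOpen_window {A : Type*} [TopologicalSpace A] [DiscreteTopology A] (x : ℤ → A) (L : ℕ) :
    IsOpen {y : ℤ → A | ∀ i : ℤ, |i| ≤ L → y i = x i} := by
  have : {y : ℤ → A | ∀ i : ℤ, |i| ≤ L → y i = x i} =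
      (Set.Icc (-(L : ℤ)) L).pi fun i => {x i} := by
    ext y; simp [Set.mem_pi, abs_le]
  rw [this]
  exact isOpen_set_pi (Set.finite_Icc _ _) fun i _ => isOpen_discrete _

lemma restrict_zpow {A : Type*} [TopologicalSpace A] (X : Set (ℤ → A))
    (h : ∀ x, x ∈ X ↔ shiftHomeo A x ∈ X) (n : ℤ) (x : X) (i : ℤ) :
    ((restrictHomeo (shiftHomeo A) X h ^ n) x).1 i = x.1 (i + n) := by
  set T := restrictHomeo (shiftHomeo A) X h with hT
  have hmul : ∀ (f g : X ≃ₜ X) (x : X), (f * g) x = f (g x) := fun _ _ _ => rfl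
  have h1 : ∀ (x : X) (i : ℤ), (T x).1 i = x.1 (i + 1) := fun _ _ => rfl
  have h2 : ∀ (x : X) (i : ℤ), (T⁻¹ x).1 i = x.1 (i - 1) := fun _ _ => rfl
  induction n generalizing x i with
  | zero => rw [zpow_zero, add_zero]; rfl
  | succ n ih => rw [zpow_add_one, hmul, ih, h1]; ring_nf
  | pred n ih => rw [zpow_sub_one, hmul, ih, h2]; ring_nf

lemma restrict_pow {A : Type*} [TopologicalSpace A] (X : Set (ℤ → A))
    (h : ∀ x, x ∈ X ↔ shiftHomeo A x ∈ X) (n : ℕ) (x : X) (i : ℤ) :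
    ((restrictHomeo (shiftHomeo A) X h ^ n) x).1 i = x.1 (i + n) := by
  rw [← restrict_zpow X h n x i, zpow_natCast]

/-! ### The nested words -/

/-- Stage `n` of the construction: a list of words, the repetitions of which are to be points of
the subshift, and the connecting word. The next connecting word is
`q p₁ⁿ⁺¹ q p₂ⁿ⁺¹ ⋯ q pₖⁿ⁺¹ q`, and the old `q` joins the list of repeated words. -/
def stage {A : Type*} (a b : List A) : ℕ → List (List A) × List A
  | 0 => ([a], b)
  | n + 1 => ((stage a b n).2 :: (stage a b n).1,
      ((stage a b n).1.flatMap fun p => (stage a b n).2 ++ rep p (n + 1)) ++ (stage a b n).2)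

/-- `Conc P q w` says that `w` is a concatenation of blocks `q pᵐ` with `p ∈ P` and `m ≥ 0`. -/
inductive Conc {A : Type*} (P : List (List A)) (q : List A) : List A → Prop
  | nil : Conc P q []
  | cons (p : List A) (hp : p ∈ P) (m : ℕ) (w : List A) (hw : Conc P q w) :
      Conc P q (q ++ rep p m ++ w)

section Conc

variable {A : Type*} {P : List (List A)} {q : List A}

lemma Conc.append {w w' : List A} (h : Conc P q w) (h' : Conc P q w') : Conc P q (w ++ w') := by
  induction h with
  | nil => simpa
  | cons p hp m w hw ih =>
    rw [List.append_assoc]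
    exact .cons p hp m _ ih

lemma Conc.block {p : List A} (hp : p ∈ P) (m : ℕ) : Conc P q (q ++ rep p m) := by
  simpa using Conc.cons (q := q) p hp m [] .nil

lemma Conc.self {p : List A} (hp : p ∈ P) : Conc P q q := by
  simpa [rep_zero] using Conc.block (q := q) hp 0

lemma Conc.rep {w : List A} (h : Conc P q w) (m : ℕ) : Conc P q (rep w m) := by
  induction m with
  | zero => rw [rep_zero]; exact .nil
  | succ m ih => rw [rep_succ]; exact h.append ih

lemma Conc.flatMap (m : ℕ) (R : List (List A)) (hR : ∀ p ∈ R, p ∈ P) :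
    Conc P q (R.flatMap fun p => q ++ _root_.rep p m) := by
  induction R with
  | nil => exact .nil
  | cons p R ih =>
    rw [List.flatMap_cons]
    exact (Conc.block (hR p (by simp)) m).append (ih fun p' hp' => hR p' (by simp [hp']))

lemma Conc.step (m : ℕ) {p₀ : List A} (hp₀ : p₀ ∈ P) {w : List A}
    (h : Conc (q :: P) ((P.flatMap fun p => q ++ _root_.rep p m) ++ q) w) : Conc P q w := by
  induction h with
  | nil => exact .nil
  | cons p hp k w hw ih =>
    refine Conc.append ?_ ih
    rw [List.append_assoc]
    refine (Conc.flatMap m P fun _ h => h).append ?_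
    rcases List.mem_cons.1 hp with rfl | hp
    · exact (Conc.self hp₀).append ((Conc.self hp₀).rep k)
    · exact Conc.block hp k

lemma Conc.starts {w : List A} (h : Conc P q w) (hw : w ≠ []) :
    ∀ i < q.length, w[i]? = q[i]? := by
  cases h with
  | nil => exact absurd rfl hw
  | cons p hp m w hw =>
    intro i hi
    rw [List.append_assoc, List.getElem?_append_left hi]

/-- A concatenation of blocks is `π`-periodic wherever `q` does not occur nearby, when `π` is a
common multiple of the lengths of the words in `P`. -/
lemma Conc.periodic_or_occurs {π : ℕ} (hπ : ∀ p ∈ P, p.length ∣ π) {w : List A}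
    (h : Conc P q w) (k : ℕ) (hk : k + π < w.length) :
    w[k]? = w[k + π]? ∨
      ∃ j, k < j + q.length ∧ j ≤ k + π ∧ ∀ i < q.length, w[j + i]? = q[i]? := by
  induction h generalizing k with
  | nil => simp at hk
  | cons p hp m w hw ih =>
    set u := q ++ _root_.rep p m with hu
    have hul : u.length = q.length + m * p.length := by simp [hu, length_rep]
    rw [List.length_append] at hk
    by_cases h1 : u.length ≤ k
    · rcases ih (k - u.length) (by omega) with h | ⟨j, hj1, hj2, hj3⟩
      · left
        rw [List.getElem?_append_right h1, List.getElem?_append_right (by omega), h]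
        congr 1; omega
      · refine Or.inr ⟨u.length + j, by omega, by omega, fun i hi => ?_⟩
        rw [List.getElem?_append_right (by omega), ← hj3 i hi]
        congr 1; omega
    push Not at h1
    by_cases h2 : k < q.length
    · refine Or.inr ⟨0, by omega, by omega, fun i hi => ?_⟩
      rw [zero_add, hu, List.append_assoc, List.getElem?_append_left hi]
    push Not at h2
    by_cases h3 : k + π < u.length
    · left
      rw [List.getElem?_append_left h1, List.getElem?_append_left h3, hu,
        List.getElem?_append_right h2, List.getElem?_append_right (by omega),
        getElem?_rep _ _ _ (by omega), getElem?_rep _ _ _ (by omega)]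
      obtain ⟨c, rfl⟩ := hπ p hp
      rw [show k + p.length * c - q.length = k - q.length + p.length * c by omega,
        Nat.add_mul_mod_self_left]
    · have hne : w ≠ [] := by
        rintro rfl
        simp at hk; omega
      refine Or.inr ⟨u.length, by omega, by omega, fun i hi => ?_⟩
      rw [List.getElem?_append_right (by omega), Nat.add_sub_cancel_left]
      exact hw.starts hne i hi

end Conc

section Stage

variable {A : Type*} (a b : List A)

lemma stage_mono {n N : ℕ} (h : n ≤ N) : ∀ p ∈ (stage a b n).1, p ∈ (stage a b N).1 := by
  induction h with
  | refl => exact fun _ h => h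
  | step _ ih => exact fun p hp => List.mem_cons_of_mem _ (ih p hp)

lemma mem_stage (n : ℕ) : a ∈ (stage a b n).1 :=
  stage_mono a b (Nat.zero_le n) a (by simp [stage])

lemma stage_conc {n N : ℕ} (h : n ≤ N) :
    Conc (stage a b n).1 (stage a b n).2 (stage a b N).2 := by
  have key : ∀ w, Conc (stage a b N).1 (stage a b N).2 w →
      Conc (stage a b n).1 (stage a b n).2 w := by
    induction h with
    | refl => exact fun _ h => h
    | step _ ih => exact fun w hw => ih w (Conc.step _ (mem_stage a b _) hw)
  exact key _ (Conc.self (mem_stage a b N))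

lemma stage_infix {n N : ℕ} (h : n ≤ N) : (stage a b n).2 <:+: (stage a b N).2 := by
  induction h with
  | refl => exact List.infix_rfl
  | step _ ih => exact ih.trans (List.suffix_append _ _).isInfix

lemma rep_infix_stage {n : ℕ} {p : List A} (hp : p ∈ (stage a b n).1) {m : ℕ} (hm : m ≤ n + 1) :
    rep p m <:+: (stage a b (n + 1)).2 := by
  refine (rep_infix p hm).trans ?_
  refine List.IsInfix.trans ?_ (List.prefix_append _ _).isInfix
  refine List.IsInfix.trans (List.suffix_append (stage a b n).2 _).isInfix ?_
  obtain ⟨s, t, hst⟩ := List.append_of_mem hp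
  rw [hst, List.flatMap_append, List.flatMap_cons, ← List.append_assoc]
  exact ⟨_, _, rfl⟩

lemma stage_good {Good : List A → Prop} (hnil : Good [])
    (happ : ∀ u v, Good u → Good v → Good (u ++ v)) (ha : Good a) (hb : Good b) (n : ℕ) :
    (∀ p ∈ (stage a b n).1, Good p) ∧ Good (stage a b n).2 := by
  have hrep : ∀ p, Good p → ∀ m, Good (rep p m) := by
    intro p hp m
    induction m with
    | zero => rwa [rep_zero]
    | succ m ih => rw [rep_succ]; exact happ _ _ hp ih
  induction n with
  | zero => simp [stage, ha, hb]
  | succ n ih =>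
    obtain ⟨ih1, ih2⟩ := ih
    refine ⟨?_, happ _ _ ?_ ih2⟩
    · intro p hp
      rcases List.mem_cons.1 hp with rfl | hp
      · exact ih2
      · exact ih1 p hp
    · generalize (stage a b n).1 = R at ih1
      induction R with
      | nil => exact hnil
      | cons p R ih =>
        rw [List.flatMap_cons]
        exact happ _ _ (happ _ _ ih2 (hrep p (ih1 p (by simp)) _))
          (ih fun p' hp' => ih1 p' (by simp [hp']))

variable {a b}

lemma stage_ne_nil (ha : a ≠ []) (hb : b ≠ []) (n : ℕ) :
    (∀ p ∈ (stage a b n).1, p ≠ []) ∧ (stage a b n).2 ≠ [] := by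
  induction n with
  | zero => simp [stage, ha, hb]
  | succ n ih =>
    refine ⟨?_, by simp [stage, ih.2]⟩
    intro p hp
    rcases List.mem_cons.1 hp with rfl | hp
    · exact ih.2
    · exact ih.1 p hp

end Stage

/-! ### The subshift generated by the connecting words -/

/-- The subshift of all sequences each finite window of which occurs in some connecting word. -/
def camShift {A : Type*} (a b : List A) : Set (ℤ → A) :=
  {x | ∀ (k : ℤ) (l : ℕ), ∃ N j : ℕ, ∀ i < l, (stage a b N).2[j + i]? = some (x (k + i))}

/-- The word `w` occurs in `x` starting at the coordinate `t`. -/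
def OccAt {A : Type*} (w : List A) (x : ℤ → A) (t : ℤ) : Prop :=
  ∀ i < w.length, w[i]? = some (x (t + i))

section Shift

variable {A : Type*} {a b : List A}

lemma OccAt.of_infix {u w : List A} {x : ℤ → A} {t : ℤ} (h : OccAt w x t) (huw : u <:+: w) :
    ∃ s, OccAt u x s := by
  obtain ⟨p, r, rfl⟩ := huw
  refine ⟨t + p.length, fun i hi => ?_⟩
  have := h (p.length + i) (by simp; omega)
  rw [List.append_assoc, List.getElem?_append_right (by omega), Nat.add_sub_cancel_left,
    List.getElem?_append_left hi] at this
  rw [this]; push_cast; rw [add_assoc]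

lemma occAt_per (p : List A) (h : p ≠ []) : OccAt p (per p h) 0 := by
  intro i hi
  rw [zero_add, ← per_nat, Nat.mod_eq_of_lt hi]

lemma camShift_translate {x : ℤ → A} (hx : x ∈ camShift a b) (s : ℤ) :
    (fun i => x (i + s)) ∈ camShift a b := by
  intro k l
  obtain ⟨N, j, h⟩ := hx (k + s) l
  refine ⟨N, j, fun i hi => ?_⟩
  rw [h i hi]
  congr 2; ring

lemma camShift_inv [TopologicalSpace A] (x : ℤ → A) :
    x ∈ camShift a b ↔ shiftHomeo A x ∈ camShift a b := by
  refine ⟨fun h => camShift_translate h 1, fun h => ?_⟩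
  convert camShift_translate h (-1) using 1
  funext i
  simp [shiftHomeo]

lemma isClosed_camShift [Finite A] [TopologicalSpace A] [DiscreteTopology A] :
    IsClosed (camShift a b) := by
  have : camShift a b = ⋂ (k : ℤ), ⋂ (l : ℕ),
      (fun (x : ℤ → A) (i : Fin l) => x (k + (i.val : ℤ))) ⁻¹'
        {y | ∃ N j : ℕ, ∀ i : Fin l, (stage a b N).2[j + i.val]? = some (y i)} := by
    ext x
    simp only [camShift, mem_ofPred_eq, mem_iInter, mem_preimage, Fin.forall_iff]
  rw [this]
  refine isClosed_iInter fun k => isClosed_iInter fun l => IsClosed.preimage ?_ (isClosed_discrete _)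
  exact continuous_pi fun i => continuous_apply _

/-- The repetition of a word of any stage is a point of the subshift: its powers occur in later
connecting words. -/
lemma per_mem {n : ℕ} {p : List A} (hp : p ∈ (stage a b n).1) (h : p ≠ []) :
    per p h ∈ camShift a b := by
  intro k l
  have h0 : 0 < p.length := List.length_pos_iff.2 h
  have h1 := Int.emod_nonneg k (b := (p.length : ℤ)) (by omega)
  have h2 := Int.emod_lt_of_pos k (b := (p.length : ℤ)) (by omega)
  obtain ⟨j, hj⟩ := infix_getElem? (rep_infix_stage a b
    (stage_mono a b (Nat.le_add_right n l) p hp) (m := l + 1) (by omega))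
  set r := (k % (p.length : ℤ)).toNat with hr
  have hlen : ∀ i < l, r + i < (l + 1) * p.length := by
    intro i hi
    have : l ≤ l * p.length := Nat.le_mul_of_pos_right l h0
    rw [Nat.succ_mul]; omega
  refine ⟨n + l + 1, j + r, fun i hi => ?_⟩
  rw [add_assoc j, hj _ (by rw [length_rep]; exact hlen i hi), getElem?_rep _ _ _ (hlen i hi),
    ← per_spec]
  congr 1
  zify
  rw [hr, Int.toNat_of_nonneg h1, Int.toNat_of_nonneg (Int.emod_nonneg _ (by omega)),
    Int.emod_add_emod]

/-- The sequences of the subshift avoiding a given connecting word share a common period. -/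
lemma exists_period (ha : a ≠ []) (hb : b ≠ []) (n : ℕ) :
    ∃ π : ℕ, 0 < π ∧ ∀ x ∈ camShift a b, (∀ t, ¬ OccAt (stage a b n).2 x t) →
      ∀ i, x (i + π) = x i := by
  refine ⟨((stage a b n).1.map List.length).prod, ?_, fun x hx hno t => ?_⟩
  · refine Nat.pos_of_ne_zero fun h0 => ?_
    rw [List.prod_eq_zero_iff, List.mem_map] at h0
    obtain ⟨p, hp, h⟩ := h0
    exact (stage_ne_nil ha hb n).1 p hp (List.length_eq_zero_iff.1 h)
  have hdvd : ∀ p ∈ (stage a b n).1, p.length ∣ ((stage a b n).1.map List.length).prod :=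
    fun p hp => List.dvd_prod (List.mem_map_of_mem hp)
  generalize ((stage a b n).1.map List.length).prod = π at hdvd
  set q := (stage a b n).2 with hq
  -- The window `[t - |q|, t + π + |q|]` is large enough to see every relevant occurrence of `q`.
  obtain ⟨N, j, hj⟩ := hx (t - q.length) (π + 2 * q.length + 1)
  obtain ⟨j', hj'⟩ := infix_getElem? (stage_infix a b (le_max_right n N))
  have hw : ∀ i < π + 2 * q.length + 1,
      (stage a b (max n N)).2[j' + j + i]? = some (x (t - q.length + i)) := by
    intro i hi
    have h1 := hj i hi
    have h2 : j + i < (stage a b N).2.length := (List.getElem?_eq_some_iff.1 h1).1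
    rw [add_assoc, hj' _ h2, h1]
  have hl := (List.getElem?_eq_some_iff.1 (hw (q.length + π) (by omega))).1
  rcases (stage_conc a b (le_max_left n N)).periodic_or_occurs hdvd (j' + j + q.length)
    (by omega) with h | ⟨s, hs1, hs2, hs3⟩
  · rw [hw q.length (by omega), add_assoc, hw (q.length + π) (by omega)] at h
    have h := Option.some.inj h
    push_cast at h
    rw [sub_add_cancel, ← add_assoc, sub_add_cancel] at h
    exact h.symm
  · exfalso
    refine hno (t - q.length + (s - (j' + j) : ℕ)) fun i hi => ?_
    rw [← hq] at hs1 hs3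
    rw [← hs3 i hi]
    have := hw (s - (j' + j) + i) (by omega)
    rw [show j' + j + (s - (j' + j) + i) = s + i by omega] at this
    rw [this]; push_cast; rw [add_assoc]

/-- Every sequence containing a late enough connecting word has a translate in a given open set
that meets the subshift. -/
lemma exists_translate [TopologicalSpace A] {U : Set (ℤ → A)} (hU : IsOpen U) {x : ℤ → A}
    (hx : x ∈ camShift a b) (hxU : x ∈ U) :
    ∃ n, ∀ N, n ≤ N → ∀ (y : ℤ → A) (t : ℤ), OccAt (stage a b N).2 y t →
      ∃ s : ℤ, (fun i => y (i + s)) ∈ U := by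
  obtain ⟨L, hL⟩ := exists_window hU hxU
  obtain ⟨n, j, hj⟩ := hx (-L) (2 * L + 1)
  refine ⟨n, fun N hN y t hy => ?_⟩
  obtain ⟨s, hs⟩ := hy.of_infix (stage_infix a b hN)
  refine ⟨s + j + L, hL _ fun i hi => ?_⟩
  rw [abs_le] at hi
  have h1 := hj (i + L).toNat (by omega)
  have h2 := hs _ (List.getElem?_eq_some_iff.1 h1).1
  rw [h1] at h2
  have h2 := Option.some.inj h2
  push_cast at h2
  rw [Int.toNat_of_nonneg (by omega)] at h2
  rw [show -(L : ℤ) + (i + L) = i by ring] at h2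
  rw [h2]; congr 1; ring

/-- That `b` violates the period `|a|` excludes that a power of the shift is the identity. -/
theorem isCAMZ_camShift [Finite A] [TopologicalSpace A] [DiscreteTopology A] (ha : a ≠ [])
    (hab : ∃ i, i + a.length < b.length ∧ b[i]? ≠ b[i + a.length]?) :
    IsCAMZ (restrictHomeo (shiftHomeo A) (camShift a b) camShift_inv) := by
  have hb : b ≠ [] := by
    rintro rfl
    simp at hab
  have ha0 : 0 < a.length := List.length_pos_iff.2 ha
  have hq : ∀ N, (stage a b N).2 ≠ [] := fun N => (stage_ne_nil ha hb N).2
  have hqmem : ∀ N, per _ (hq N) ∈ camShift a b := fun N =>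
    per_mem (n := N + 1) (by simp [stage]) (hq N)
  refine ⟨fun n hn hT => ?_, fun U V hU hV ⟨x, hx⟩ ⟨y, hy⟩ => ?_, ?_, fun C hC hTC hne => ?_⟩
  · -- If every point had period `n`, the repetition of a connecting word containing `a^|n|` would
    -- be a translate of the repetition of `a`, which contains no copy of `b`.
    set d := n.natAbs with hd
    set x := per _ (hq (d + 1)) with hx
    have hper : ∀ i, x (i + n) = x i := by
      intro i
      have := restrict_zpow (camShift a b) camShift_inv n ⟨x, hqmem _⟩ i
      rw [hT] at this
      exact this.symm
    obtain ⟨t, ht⟩ := (occAt_per _ (hq (d + 1))).of_infix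
      (rep_infix_stage a b (mem_stage a b d) (m := d) (by omega))
    obtain ⟨s, hs⟩ := (occAt_per _ (hq (d + 1))).of_infix
      (stage_infix a b (Nat.zero_le (d + 1)))
    rw [← hx] at ht hs
    have hD : 0 < d * a.length := Nat.mul_pos (by omega) ha0
    have hxD : ∀ i, x (i + (d * a.length : ℕ)) = x i := by
      intro i
      rcases Int.natAbs_eq n with h | h
      · rw [← periodic_mul hper a.length i, mul_comm d, Nat.cast_mul, hd, ← h]
      · rw [← periodic_mul hper (-a.length) i, mul_comm d, Nat.cast_mul, neg_mul, ← mul_neg,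
          show (d : ℤ) = -n by omega]
    have heq : (fun i => x (t + i)) = per a ha := by
      refine periodic_ext hD (fun i => ?_) (fun i => ?_) fun i hi => ?_
      · rw [← add_assoc]; exact hxD _
      · push_cast; exact periodic_mul (per_add a ha) d i
      · have := ht i (by rwa [length_rep])
        rw [getElem?_rep _ _ _ hi, per_nat a ha] at this
        exact (Option.some.inj this).symm
    have hxa : ∀ i, x (i + a.length) = x i := by
      intro i
      have h1 := congrFun heq (i - t)
      have h2 := congrFun heq (i - t + a.length)
      rw [per_add, ← h1] at h2
      rw [show t + (i - t + a.length) = i + a.length by ring, show t + (i - t) = i by ring] at h2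
      exact h2
    obtain ⟨i, hi, hne⟩ := hab
    apply hne
    have e1 := hs i (by simp only [stage]; omega)
    have e2 := hs (i + a.length) (by simp only [stage]; omega)
    simp only [stage] at e1 e2
    rw [e1, e2]
    push_cast
    rw [← add_assoc, hxa]
  · obtain ⟨U', hU', rfl⟩ := isOpen_induced_iff.1 hU
    obtain ⟨V', hV', rfl⟩ := isOpen_induced_iff.1 hV
    obtain ⟨n, hn⟩ := exists_translate hU' x.2 hx
    obtain ⟨m, hm⟩ := exists_translate hV' y.2 hy
    have hocc := occAt_per _ (hq (max n m))
    obtain ⟨s, hs⟩ := hn _ (le_max_left n m) _ _ hocc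
    obtain ⟨r, hr⟩ := hm _ (le_max_right n m) _ _ hocc
    refine ⟨r - s, _, ⟨⟨_, camShift_translate (hqmem (max n m)) s⟩, hs, rfl⟩, ?_⟩
    rw [mem_preimage]
    convert hr using 1
    funext i
    rw [restrict_zpow]
    change per _ (hq _) (i + (r - s) + s) = _
    congr 1; ring
  · rw [dense_iff_inter_open]
    rintro U hU ⟨x, hx⟩
    obtain ⟨U', hU', rfl⟩ := isOpen_induced_iff.1 hU
    obtain ⟨n, hn⟩ := exists_translate hU' x.2 hx
    obtain ⟨s, hs⟩ := hn n le_rfl _ _ (occAt_per _ (hq n))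
    refine ⟨⟨_, camShift_translate (hqmem n) s⟩, hs, (stage a b n).2.length,
      List.length_pos_iff.2 (hq n), ?_⟩
    apply Subtype.ext
    funext i
    rw [restrict_pow]
    change per _ (hq n) (i + _ + s) = per _ (hq n) (i + s)
    rw [add_right_comm, per_add]
  · by_contra hinf
    apply hne
    refine eq_univ_of_forall fun x => by_contra fun hx => ?_
    obtain ⟨U', hU', hUC⟩ := isOpen_induced_iff.1 hC.isOpen_compl
    have hxU : x.1 ∈ U' := by
      have : x ∈ Subtype.val ⁻¹' U' := by rw [hUC]; exact hx
      exact this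
    obtain ⟨n, hn⟩ := exists_translate hU' x.2 hxU
    obtain ⟨π, hπ, hper⟩ := exists_period ha hb n
    -- Only finitely many points avoid the connecting word, so some point of `C` contains it.
    have hex : ∃ y ∈ C, ∃ t, OccAt (stage a b n).2 y.1 t := by
      by_contra! hno
      refine hinf (Set.Finite.of_finite_image (f := Subtype.val)
        ((finite_periodic A hπ).subset ?_) Subtype.val_injective.injOn)
      rintro _ ⟨y, hy, rfl⟩
      exact hper y.1 y.2 (hno y hy)
    obtain ⟨y, hy, t, ht⟩ := hex
    obtain ⟨s, hs⟩ := hn n le_rfl _ _ ht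
    set T := restrictHomeo (shiftHomeo A) (camShift a b) camShift_inv with hTdef
    have hmul : ∀ (f g : camShift a b ≃ₜ camShift a b) z, (f * g) z = f (g z) :=
      fun _ _ _ => rfl
    have hinv : ∀ (k : ℤ) (z), z ∈ C → (T ^ k) z ∈ C := by
      intro k
      induction k with
      | zero => exact fun z hz => by rw [zpow_zero]; exact hz
      | succ k ih =>
        intro z hz
        rw [zpow_add_one, hmul]
        exact ih _ (hTC ▸ mem_image_of_mem T hz)
      | pred k ih =>
        intro z hz
        rw [zpow_sub_one, hmul]
        refine ih _ ?_
        rw [← hTC] at hz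
        obtain ⟨z', hz', rfl⟩ := hz
        have : T⁻¹ (T z') = z' := T.symm_apply_apply z'
        rwa [this]
    have h1 : (T ^ s) y ∈ Subtype.val ⁻¹' U' := by
      rw [mem_preimage]
      convert hs using 1
      funext i
      exact restrict_zpow _ _ _ _ _
    rw [hUC] at h1
    exact h1 (hinv s y hy)

end Shift

/-! ### Loops in a mixing shift of finite type -/

/-- The word of length `l` read off `x` from the coordinate `k` on. -/
def win {A : Type*} (x : ℤ → A) (k : ℤ) (l : ℕ) : List A :=
  (List.range l).map fun i : ℕ => x (k + (i : ℤ))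

section Loops

variable {A : Type*}

lemma length_win (x : ℤ → A) (k : ℤ) (l : ℕ) : (win x k l).length = l := by simp [win]

lemma getElem?_win (x : ℤ → A) (k : ℤ) {l i : ℕ} (h : i < l) :
    (win x k l)[i]? = some (x (k + i)) := by
  simp [win, h]

lemma win_add (x : ℤ → A) (k : ℤ) (l m : ℕ) :
    win x k (l + m) = win x k l ++ win x (k + l) m := by
  simp [win, List.range_add, add_assoc, Function.comp_def]

lemma win_congr {x y : ℤ → A} {k k' : ℤ} {l : ℕ}
    (h : ∀ i : ℕ, i < l → x (k + i) = y (k' + i)) : win x k l = win y k' l := by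
  simp only [win]
  exact List.map_congr_left fun i hi => h i (List.mem_range.1 hi)

lemma occursIn_of_infix_win {f : List A} {x : ℤ → A} {k : ℤ} {l : ℕ} (h : f <:+: win x k l) :
    occursIn f x := by
  have hl := h.length_le
  obtain ⟨s, t, hst⟩ := h
  have hlen := congrArg List.length hst
  simp only [List.length_append, length_win] at hlen
  refine ⟨k + s.length, fun i => ?_⟩
  have h1 := getElem?_win x k (l := l) (i := s.length + i) (by have := i.2; omega)
  rw [← hst, List.append_assoc, List.getElem?_append_right (by omega), Nat.add_sub_cancel_left,
    List.getElem?_append_left i.2, List.getElem?_eq_getElem i.2] at h1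
  have h2 := Option.some.inj h1
  push_cast at h2
  rw [List.get_eq_getElem, h2, add_assoc]

/-- `w` labels a loop at the vertex `v` of the shift of finite type with forbidden words `F`:
`v ++ w` is free of forbidden words and ends in `v` again. -/
def IsLoop (F : Set (List A)) (v w : List A) : Prop :=
  (∃ s, v ++ w = s ++ v) ∧ ∀ f ∈ F, ¬ f <:+: v ++ w

lemma IsLoop.append {F : Set (List A)} {v w w' : List A} (hF : ∀ f ∈ F, f.length ≤ v.length)
    (h : IsLoop F v w) (h' : IsLoop F v w') : IsLoop F v (w ++ w') := by
  obtain ⟨⟨s, hs⟩, h2⟩ := h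
  obtain ⟨⟨s', hs'⟩, h2'⟩ := h'
  rw [IsLoop, ← List.append_assoc, hs]
  refine ⟨⟨s ++ s', by rw [List.append_assoc, hs', List.append_assoc]⟩, fun f hf hfi => ?_⟩
  rcases infix_overlap (hF f hf) hfi with h | h
  · rw [← hs] at h
    exact h2 f hf h
  · exact h2' f hf h

lemma isLoop_win {F : Set (List A)} {y : ℤ → A} (hy : ∀ f ∈ F, ¬ occursIn f y) {M n : ℕ}
    (h : win y n M = win y 0 M) : IsLoop F (win y 0 M) (win y M n) := by
  have e : win y 0 M ++ win y M n = win y 0 (M + n) := by rw [win_add, zero_add]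
  refine ⟨⟨win y 0 n, ?_⟩, fun f hf hfi => ?_⟩
  · rw [e, add_comm, win_add, zero_add, h]
  · rw [e] at hfi
    exact hy f hf (occursIn_of_infix_win hfi)

/-- Mixing, phrased with windows: two windows of points of `Y` can be glued at every large
enough distance. -/
lemma exists_glue [TopologicalSpace A] [DiscreteTopology A] {Y : Set (ℤ → A)}
    (hYinv : ∀ x, x ∈ Y ↔ shiftHomeo A x ∈ Y)
    (hmix : ∀ U V : Set Y, IsOpen U → IsOpen V → U.Nonempty → V.Nonempty →
      ∃ N : ℕ, ∀ n : ℕ, N ≤ n →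
        (((restrictHomeo (shiftHomeo A) Y hYinv) ^ n) '' U ∩ V).Nonempty)
    {x y : ℤ → A} (hx : x ∈ Y) (hy : y ∈ Y) (L B : ℕ) :
    ∃ n : ℕ, B ≤ n ∧ ∃ z ∈ Y, (∀ i : ℤ, |i| ≤ L → z i = x i) ∧
      ∀ i : ℤ, |i| ≤ L → z (n + i) = y i := by
  obtain ⟨N, hN⟩ := hmix _ _ ((isOpen_window x L).preimage continuous_subtype_val)
    ((isOpen_window y L).preimage continuous_subtype_val) ⟨⟨x, hx⟩, fun _ _ => rfl⟩
    ⟨⟨y, hy⟩, fun _ _ => rfl⟩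
  obtain ⟨_, ⟨z, hz, rfl⟩, hz'⟩ := hN (max N B) (le_max_left _ _)
  refine ⟨max N B, le_max_right _ _, z.1, z.2, hz, fun i hi => ?_⟩
  have h1 := hz' i hi
  rw [restrict_pow] at h1
  rw [← h1, add_comm]

end Loops

/-- Every infinite topologically mixing shift of finite type contains a
chaotic almost minimal subshift. -/
theorem statement8 {A : Type*} [Fintype A] [TopologicalSpace A] [DiscreteTopology A]
    (F : Set (List A)) (hF : F.Finite)
    (Y : Set (ℤ → A)) (hYdef : Y = {x | ∀ w ∈ F, ¬ occursIn w x})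
    (hYne : Y.Nonempty) (hYinf : Y.Infinite)
    (hYinv : ∀ x, x ∈ Y ↔ shiftHomeo A x ∈ Y)
    (hmix : ∀ U V : Set Y, IsOpen U → IsOpen V → U.Nonempty → V.Nonempty →
      ∃ N : ℕ, ∀ n : ℕ, N ≤ n →
        (((restrictHomeo (shiftHomeo A) Y hYinv) ^ n) '' U ∩ V).Nonempty) :
    ∃ (X : Set (ℤ → A)) (hXinv : ∀ x, x ∈ X ↔ shiftHomeo A x ∈ X),
      X ⊆ Y ∧ X.Nonempty ∧ IsClosed X ∧
      IsCAMZ (restrictHomeo (shiftHomeo A) X hXinv) := by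
  obtain ⟨M, hM⟩ : ∃ M, ∀ f ∈ F, f.length ≤ M := by
    obtain ⟨M, hM⟩ := (hF.image List.length).bddAbove
    exact ⟨M, fun f hf => hM (mem_image_of_mem _ hf)⟩
  have hYF : ∀ y ∈ Y, ∀ f ∈ F, ¬ occursIn f y := by
    intro y hy
    rw [hYdef] at hy
    exact hy
  obtain ⟨y₀, hy₀⟩ := hYne
  set v := win y₀ 0 M with hv
  have hvl : v.length = M := length_win _ _ _
  have hnil : IsLoop F v [] := by
    refine ⟨⟨[], by simp⟩, fun f hf hfi => hYF y₀ hy₀ f hf ?_⟩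
    rw [List.append_nil] at hfi
    exact occursIn_of_infix_win hfi
  -- Any loop at `v` serves as `a`.
  obtain ⟨n, hn, z, hz, hz1, hz2⟩ := exists_glue hYinv hmix hy₀ hy₀ M 1
  have hzv : win z 0 M = v := win_congr fun i hi => hz1 _ (by rw [abs_le]; omega)
  have hzv' : win z n M = v := win_congr fun i hi => by
    rw [hz2 _ (by rw [abs_le]; omega), zero_add]
  have hloopa : IsLoop F v (win z M n) := by
    rw [← hzv]
    exact isLoop_win (hYF z hz) (by rw [hzv, hzv'])
  set a := win z M n with ha
  have hal : a.length = n := length_win _ _ _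
  -- As `Y` is infinite, some point violates the period `n`; `b` is a loop through the violation.
  obtain ⟨y, hy, k, hk⟩ : ∃ y ∈ Y, ∃ k : ℤ, y (k + n) ≠ y k := by
    by_contra! h
    exact hYinf ((finite_periodic A (D := n) (by omega)).subset h)
  set L := M + k.natAbs + n with hL
  obtain ⟨m, hm, u, hu, hu1, hu2⟩ := exists_glue hYinv hmix hy₀ hy L L
  obtain ⟨r, hr, x, hx, hx1, hx2⟩ := exists_glue hYinv hmix hu hy₀ (L + m) (L + m + 1)
  have hxu : ∀ i : ℤ, |i| ≤ L → x (m + i) = y i := by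
    intro i hi
    rw [hx1 _ (by rw [abs_le] at hi ⊢; push_cast; omega), hu2 i hi]
  have hxv : win x 0 M = v := win_congr fun i hi => by
    rw [hx1 _ (by rw [abs_le]; omega), hu1 _ (by rw [abs_le]; omega)]
  have hxv' : win x r M = v := win_congr fun i hi => by
    rw [hx2 _ (by rw [abs_le]; omega), zero_add]
  have hloopb : IsLoop F v (win x M r) := by
    rw [← hxv]
    exact isLoop_win (hYF x hx) (by rw [hxv, hxv'])
  set b := win x M r with hb
  have hbl : b.length = r := length_win _ _ _
  have hab : ∃ i, i + a.length < b.length ∧ b[i]? ≠ b[i + a.length]? := by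
    refine ⟨(m + k - M).toNat, by omega, fun h => hk ?_⟩
    rw [hb, getElem?_win _ _ (by omega), getElem?_win _ _ (by omega)] at h
    have h := Option.some.inj h
    rw [show (M : ℤ) + ((m + k - M).toNat : ℤ) = m + k by omega,
      show (M : ℤ) + (((m + k - M).toNat + a.length : ℕ) : ℤ) = m + (k + n) by omega,
      hxu _ (by rw [abs_le]; omega), hxu _ (by rw [abs_le]; omega)] at h
    exact h.symm
  have ha0 : a ≠ [] := by
    rw [← List.length_pos_iff]; omega
  refine ⟨camShift a b, camShift_inv, fun w hw => ?_,
    ⟨_, per_mem (mem_stage a b 0) ha0⟩, isClosed_camShift, isCAMZ_camShift ha0 hab⟩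
  rw [hYdef]
  rintro f hf ⟨t, ht⟩
  obtain ⟨N, j, hj⟩ := hw t f.length
  have hgood := (stage_good a b (Good := IsLoop F v) hnil
    (fun _ _ h h' => h.append (by rwa [hvl]) h') hloopa hloopb N).2
  refine hgood.2 f hf (List.IsInfix.trans (infix_of_getElem? (j := j) fun i hi => ?_)
    (List.suffix_append _ _).isInfix)
  rw [hj i hi, List.getElem?_eq_getElem hi]
  exact congrArg some (ht ⟨i, hi⟩)
end

section
/- Fix n ≥ 2 and let A be an alphabet with n letters. Let W ⊆ A^ℤ be an infinite totally transitive subshift. Then for every ε > 0 there exists a subshift X ⊆ A^ℤ such that the shift on X is chaotic almost minimal and the Hausdorff distance between X and W (as compact subsets of A^ℤ) is less than ε. -/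
/-!
Only the stretches of a fixed length `N` matter for being `ε`-close to `W`, so it suffices to find
a chaotic almost minimal subshift with the same `N`-stretches as `W` (`exists_dist_lt`,
`exists_approx`).

*Two words.* Transitivity of `σ²` excludes isolated points of the infinite subshift `W`, so
transitivity can be used with arbitrarily late positive times (`exists_late_visit`). Fix an
`N`-word `c` of `W`. Reading points of `W` from one occurrence of `c` up to a later one yields a
word `u`, and a word `v` which displays all `N`-words of `W` and also a word absent from the
periodic sequence `u^∞`; such a word exists because `W` is infinite. Both `u` and `v` begin with
`c` and may be followed by `c`, so all `N`-stretches of products of copies of `u` and `v` are read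
in `W` (`Con.stretch`).

*The hierarchy.* Put `w₀ = u`, `w₁ = v`, `w_{k+1} = w_k · (w_j)^k · w_k`, where `j = j(k) ≤ k` takes
every value for arbitrarily large `k`, and let `X` consist of the sequences all of whose finite
stretches occur in some `w_M`. Every power of every `w_m` occurs in all late `w_M`
(`rep_infix_wd`), so each `w_m^∞` lies in `X`, these periodic points are dense, and any two
stretches of `X` occur together in one `w_M^∞`, whence transitivity. For `1 ≤ k ≤ M` the word `w_M`
is a product of copies of `w_k` separated by powers of single words `w_j` with `j < k` (`gap_wd`).
Hence a point of `X` in which `w_k` does not occur is a shift of some `w_j^∞` with `j < k`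
(`mem_orb`). A proper closed invariant subset of `X` misses some stretch of `X`, so misses some
`w_k`, and is therefore contained in finitely many periodic orbits. Finally the powers of the
shift are nontrivial on `X`, since otherwise transitivity would put `u^∞` and `v^∞` on the same
orbit.
-/


open Set MeasureTheory

namespace CAMApprox

/-- The `n`-th power of the shift, as a map on all of `A^ℤ`. -/
def sh {A : Type*} (n : ℤ) (x : ℤ → A) : ℤ → A := fun i => x (i + n)

/-- The word `l` repeated `n` times. -/
def rep {A : Type*} (l : List A) (n : ℕ) : List A := (List.replicate n l).flatten

/-- The bi-infinite periodic sequence `l^∞`, with a copy of `l` starting at `0`.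
For the empty word the value is the constant sequence `default`. -/
def per {A : Type*} [Inhabited A] (l : List A) (i : ℤ) : A :=
  (l[(i % (l.length : ℤ)).toNat]?).getD default

/-- The word read in `x` on the `L` places from `i` on occurs in the word `l`. -/
def Inw {A : Type*} (x : ℤ → A) (i : ℤ) (L : ℕ) (l : List A) : Prop :=
  ∃ s : ℕ, ∀ j < L, l[s + j]? = some (x (i + j))

/-- The word `l` occurs in `x` at place `i`. -/
def Occ {A : Type*} (x : ℤ → A) (i : ℤ) (l : List A) : Prop :=
  ∀ j < l.length, l[j]? = some (x (i + j))

/-! ### Shifts and cylinders -/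

section Shifts

variable {A : Type*}

lemma sh_sh (a b : ℤ) (x : ℤ → A) : sh a (sh b x) = sh (a + b) x := by
  funext i; simp only [sh]; congr 1; ring

@[simp] lemma sh_zero (x : ℤ → A) : sh 0 x = x := by
  funext i; simp [sh]

variable [TopologicalSpace A]

lemma continuous_sh (n : ℤ) : Continuous (sh n : (ℤ → A) → ℤ → A) :=
  continuous_pi fun i => continuous_apply (i + n)

lemma val_zpow (X : Set (ℤ → A)) (h : ∀ x, x ∈ X ↔ shiftHomeo A x ∈ X) (n : ℤ) (x : X) :
    (((restrictHomeo (shiftHomeo A) X h) ^ n) x).val = sh n x.val := by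
  have key : ∀ (k : ℕ) (x : X),
      (((restrictHomeo (shiftHomeo A) X h) ^ k) x).val = sh (k : ℤ) x.val := by
    intro k
    induction k with
    | zero => intro x; simp
    | succ k ih =>
      intro x
      rw [pow_succ]
      have : ((restrictHomeo (shiftHomeo A) X h) ^ k * restrictHomeo (shiftHomeo A) X h) x
          = ((restrictHomeo (shiftHomeo A) X h) ^ k) (restrictHomeo (shiftHomeo A) X h x) := rfl
      rw [this, ih]
      have h1 : (restrictHomeo (shiftHomeo A) X h x).val = sh 1 x.val := rfl
      rw [h1, sh_sh]
      push_cast; rfl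
  obtain ⟨k, rfl | rfl⟩ := n.eq_nat_or_neg
  · rw [zpow_natCast]; exact key k x
  · rw [zpow_neg, zpow_natCast]
    set T := (restrictHomeo (shiftHomeo A) X h) ^ k with hT
    have h2 : T (T⁻¹ x) = x := T.apply_symm_apply x
    have h3 := key k (T⁻¹ x)
    rw [← hT, h2] at h3
    rw [h3, sh_sh]; simp

lemma mem_sh {W : Set (ℤ → A)} (h : ∀ x, x ∈ W ↔ shiftHomeo A x ∈ W) (n : ℤ) {x : ℤ → A}
    (hx : x ∈ W) : sh n x ∈ W := by
  rw [← val_zpow W h n ⟨x, hx⟩]; exact Subtype.property _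

lemma exists_cyl [DiscreteTopology A] {U : Set (ℤ → A)} (hU : IsOpen U) {x : ℤ → A}
    (hx : x ∈ U) : ∃ R : ℕ, ∀ y : ℤ → A, (∀ t : ℤ, |t| ≤ R → y t = x t) → y ∈ U := by
  obtain ⟨I, u, h1, h2⟩ := isOpen_pi_iff.1 hU x hx
  refine ⟨I.sup Int.natAbs, fun y hy => h2 ?_⟩
  intro i hi
  rw [hy i ?_]
  · exact (h1 i hi).2
  · have : i.natAbs ≤ I.sup Int.natAbs := Finset.le_sup (f := Int.natAbs) hi
    rw [Int.abs_eq_natAbs]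
    omega

lemma isOpen_cyl [DiscreteTopology A] (a b : ℤ) (x : ℤ → A) :
    IsOpen {y : ℤ → A | ∀ t : ℤ, a ≤ t → t < b → y t = x t} := by
  have : {y : ℤ → A | ∀ t : ℤ, a ≤ t → t < b → y t = x t}
      = ⋂ t ∈ Set.Ico a b, (fun y : ℤ → A => y t) ⁻¹' {x t} := by
    ext y; simp
  rw [this]
  exact (Set.finite_Ico a b).isOpen_biInter
    fun t _ => (isOpen_discrete _).preimage (continuous_apply t)

lemma mem_of_isClosed [DiscreteTopology A] {S : Set (ℤ → A)} (hS : IsClosed S) {x : ℤ → A}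
    (h : ∀ R : ℕ, ∃ y ∈ S, ∀ t : ℤ, |t| ≤ R → y t = x t) : x ∈ S := by
  by_contra hx
  obtain ⟨R, hR⟩ := exists_cyl hS.isOpen_compl (x := x) hx
  obtain ⟨y, hy, hyx⟩ := h R
  exact hR y hyx hy

lemma isClosed_of_cyl [DiscreteTopology A] {S : Set (ℤ → A)}
    (h : ∀ x, (∀ R : ℕ, ∃ y ∈ S, ∀ t : ℤ, |t| ≤ R → y t = x t) → x ∈ S) : IsClosed S := by
  rw [← isOpen_compl_iff, isOpen_iff_forall_mem_open]
  intro x hx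
  have : ¬ ∀ R : ℕ, ∃ y ∈ S, ∀ t : ℤ, |t| ≤ R → y t = x t := fun h' => hx (h x h')
  push Not at this
  obtain ⟨R, hR⟩ := this
  refine ⟨_, ?_, isOpen_cyl (-R) (R + 1) x, fun t _ _ => rfl⟩
  intro y hy hyS
  obtain ⟨t, ht, hne⟩ := hR y hyS
  rw [abs_le] at ht
  exact hne (hy t ht.1 (by omega))

end Shifts

/-! ### Periodic sequences -/

section Periodic

variable {A : Type*}

lemma length_rep (l : List A) (n : ℕ) : (rep l n).length = n * l.length := by
  simp [rep]

lemma rep_add (l : List A) (m n : ℕ) : rep l (m + n) = rep l m ++ rep l n := by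
  simp only [rep, List.replicate_add, List.flatten_append]

lemma rep_succ (l : List A) (n : ℕ) : rep l (n + 1) = l ++ rep l n := by
  simp [rep, List.replicate_succ]

variable [Inhabited A]

lemma some_per {l : List A} (hl : l ≠ []) (i : ℤ) :
    l[(i % (l.length : ℤ)).toNat]? = some (per l i) := by
  have hpos : (0 : ℤ) < l.length := by exact_mod_cast List.length_pos_iff.2 hl
  have h1 := Int.emod_nonneg i hpos.ne'
  have h2 := Int.emod_lt_of_pos i hpos
  have h3 : (i % (l.length : ℤ)).toNat < l.length := by omega
  simp [per, List.getElem?_eq_getElem h3]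

lemma per_congr (l : List A) {i j : ℤ} (h : i % (l.length : ℤ) = j % (l.length : ℤ)) :
    per l i = per l j := by
  simp [per, h]

lemma per_nat {l : List A} {i : ℕ} (hi : i < l.length) : l[i]? = some (per l i) := by
  have hl : l ≠ [] := by rintro rfl; simp at hi
  rw [← some_per hl, Int.emod_eq_of_lt (by omega) (by exact_mod_cast hi)]
  simp

lemma getElem?_rep (l : List A) (n : ℕ) (i : ℕ) (hi : i < n * l.length) :
    (rep l n)[i]? = some (per l i) := by
  induction n generalizing i with
  | zero => simp at hi
  | succ n ih =>
    rw [rep_succ, List.getElem?_append]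
    split_ifs with h
    · exact per_nat h
    · push Not at h
      rw [ih _ (by rw [add_mul] at hi; omega)]
      congr 1
      apply per_congr
      push_cast [h]
      simp

lemma orbit_per_finite (l : List A) : {y | ∃ φ : ℤ, y = sh φ (per l)}.Finite := by
  by_cases hl : l = []
  · subst hl
    refine (Set.finite_singleton (per [])).subset ?_
    rintro y ⟨φ, rfl⟩
    funext i
    simp [sh, per]
  · have hpos : (0 : ℤ) < l.length := by exact_mod_cast List.length_pos_iff.2 hl
    refine ((Set.finite_Ico (0 : ℤ) l.length).image (fun φ => sh φ (per l))).subset ?_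
    rintro y ⟨φ, rfl⟩
    refine ⟨φ % l.length, ⟨Int.emod_nonneg _ hpos.ne', Int.emod_lt_of_pos _ hpos⟩, ?_⟩
    funext i
    exact per_congr l (by simp)

lemma sh_length_per (l : List A) : sh (l.length : ℤ) (per l) = per l := by
  funext i
  exact per_congr l (by simp)

end Periodic

/-! ### Occurrences of words -/

section Words

variable {A : Type*}

lemma Inw.mono {x : ℤ → A} {i : ℤ} {L : ℕ} {l l' : List A} (h : l <:+: l')
    (hx : Inw x i L l) : Inw x i L l' := by
  obtain ⟨a, b, rfl⟩ := h
  obtain ⟨s, hs⟩ := hx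
  refine ⟨a.length + s, fun j hj => ?_⟩
  have h1 := hs j hj
  have h2 : s + j < l.length := by
    by_contra hc
    rw [List.getElem?_eq_none (by omega)] at h1
    simp at h1
  rw [List.append_assoc, List.getElem?_append_right (by omega),
    List.getElem?_append_left (by omega), ← h1]
  congr 1; omega

lemma rep_isInfix_rep (l : List A) {m n : ℕ} (h : m ≤ n) : rep l m <:+: rep l n := by
  obtain ⟨k, rfl⟩ := Nat.exists_eq_add_of_le h
  rw [rep_add]
  exact (List.prefix_append _ _).isInfix

lemma inw_per [Inhabited A] {l : List A} (hl : l ≠ []) (φ i : ℤ) (L : ℕ) :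
    ∃ n, Inw (sh φ (per l)) i L (rep l n) := by
  have hpos : (0 : ℤ) < l.length := by exact_mod_cast List.length_pos_iff.2 hl
  have h1 := Int.emod_nonneg (i + φ) hpos.ne'
  refine ⟨((i + φ) % l.length).toNat + L, ((i + φ) % l.length).toNat, fun j hj => ?_⟩
  rw [getElem?_rep]
  · congr 1
    apply per_congr
    push_cast
    rw [Int.toNat_of_nonneg h1]
    simp only [Int.emod_add_emod]
    congr 1; ring
  · have : 1 ≤ l.length := by omega
    nlinarith

end Words

/-! ### The hierarchy of words -/

section Hierarchy

variable {A : Type*}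

/-- The hierarchy of words: `wd 0 = u`, `wd 1 = v`, and each later word is
`wd (k+1) = wd k · (wd j)^k · wd k`, where `j = k.unpair.1 ≤ k` is chosen so that every index
`j` is used for arbitrarily large `k`. -/
def wd (u v : List A) : ℕ → List A
  | 0 => u
  | 1 => v
  | k + 2 => wd u v (k + 1) ++ rep (wd u v (k + 1).unpair.1) (k + 1) ++ wd u v (k + 1)
termination_by n => n
decreasing_by
  all_goals have := Nat.unpair_left_le (k + 1)
  all_goals omega

lemma wd_zero (u v : List A) : wd u v 0 = u := by rw [wd]

lemma wd_one (u v : List A) : wd u v 1 = v := by rw [wd]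

lemma wd_succ (u v : List A) {k : ℕ} (hk : 1 ≤ k) :
    wd u v (k + 1) = wd u v k ++ rep (wd u v k.unpair.1) k ++ wd u v k := by
  obtain ⟨k, rfl⟩ := Nat.exists_eq_add_of_le' hk
  rw [wd]

lemma wd_mono (u v : List A) {k m : ℕ} (hk : 1 ≤ k) (h : k ≤ m) : wd u v k <:+: wd u v m := by
  induction m, h using Nat.le_induction with
  | base => exact List.infix_rfl
  | succ m hm ih =>
    refine ih.trans ?_
    rw [wd_succ u v (hk.trans hm), List.append_assoc]
    exact (List.prefix_append _ _).isInfix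

/-- Every power of every word of the hierarchy occurs in all sufficiently late words. -/
lemma rep_infix_wd (u v : List A) (m r : ℕ) :
    ∃ K, ∀ M, K ≤ M → rep (wd u v m) r <:+: wd u v M := by
  set k := Nat.pair m (r + 1) with hk
  have h1 : r + 1 ≤ k := Nat.right_le_pair _ _
  refine ⟨k + 1, fun M hM => List.IsInfix.trans ?_ (wd_mono u v (by omega) hM)⟩
  rw [wd_succ u v (by omega)]
  have h2 : k.unpair.1 = m := by rw [hk, Nat.unpair_pair]
  rw [h2]
  exact (rep_isInfix_rep _ (by omega)).trans (List.infix_append _ _ _)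

lemma wd_ne_nil {u v : List A} (hu : u ≠ []) (hv : v ≠ []) (m : ℕ) : wd u v m ≠ [] := by
  induction m with
  | zero => rwa [wd_zero]
  | succ k ih =>
    rcases Nat.eq_zero_or_pos k with rfl | hk
    · rwa [wd_one]
    · rw [wd_succ u v hk]; simp [ih]

/-- `Gap w k l` says that `l` starts and ends with `w k`, and that it is a product of copies of
`w k` separated by (possibly empty) powers of single words `w j` with `j < k`. -/
inductive Gap (w : ℕ → List A) (k : ℕ) : List A → Prop
  | base : Gap w k (w k)
  | step (l : List A) (j n : ℕ) (hj : j < k) (hl : Gap w k l) :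
      Gap w k (l ++ (rep (w j) n ++ w k))

lemma Gap.append_rep {w : ℕ → List A} {k : ℕ} {l l' : List A} (hl : Gap w k l)
    (hl' : Gap w k l') {j : ℕ} (hj : j < k) (n : ℕ) : Gap w k (l ++ rep (w j) n ++ l') := by
  induction hl' with
  | base => rw [List.append_assoc]; exact Gap.step l j n hj hl
  | step l' i m hi _ ih => rw [← List.append_assoc]; exact Gap.step _ i m hi ih

lemma Gap.append {w : ℕ → List A} {k : ℕ} (hk : 1 ≤ k) {l l' : List A} (hl : Gap w k l)
    (hl' : Gap w k l') : Gap w k (l ++ l') := by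
  simpa [rep] using hl.append_rep hl' (j := 0) hk 0

lemma Gap.append_pow {w : ℕ → List A} {k : ℕ} (hk : 1 ≤ k) {l l' : List A} (hl : Gap w k l)
    (hl' : Gap w k l') (n : ℕ) : Gap w k (rep l n ++ l') := by
  induction n with
  | zero => simpa [rep] using hl'
  | succ n ih => rw [rep_succ, List.append_assoc]; exact hl.append hk ih

lemma Gap.suffix {w : ℕ → List A} {k : ℕ} {l : List A} (hl : Gap w k l) :
    ∃ l₀, l = l₀ ++ w k := by
  cases hl with
  | base => exact ⟨[], rfl⟩
  | step l j n hj hl => exact ⟨l ++ rep (w j) n, by simp⟩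

lemma gap_wd (u v : List A) {k M : ℕ} (hk : 1 ≤ k) (hM : k ≤ M) : Gap (wd u v) k (wd u v M) := by
  induction M using Nat.strong_induction_on with
  | _ M ih =>
    rcases hM.eq_or_lt with rfl | hlt
    · exact Gap.base
    · obtain ⟨M, rfl⟩ := Nat.exists_eq_add_of_le' (hk.trans hM)
      have h1 := ih M (by omega) (by omega)
      rw [wd_succ u v (by omega)]
      by_cases hj : M.unpair.1 < k
      · exact h1.append_rep h1 hj M
      · have h2 := ih M.unpair.1 (by have := Nat.unpair_left_le M; omega) (by omega)
        rw [List.append_assoc]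
        exact h1.append hk (h2.append_pow hk h1 M)

lemma inw_lt {x : ℤ → A} {i : ℤ} {L s : ℕ} {l : List A}
    (hs : ∀ j < L, l[s + j]? = some (x (i + j))) (hL : 0 < L) : s + L ≤ l.length := by
  by_contra hc
  have h1 := hs (L - 1) (by omega)
  rw [List.getElem?_eq_none (by omega)] at h1
  simp at h1

/-- A stretch of a sequence avoiding `w k` that is read inside a `Gap` word meets at most one of
its gaps. -/
lemma Gap.inw {w : ℕ → List A} {k : ℕ} (hk : 1 ≤ k) {x : ℤ → A}
    (hx : ∀ i, ¬ Occ x i (w k)) {i : ℤ} {L : ℕ} {l : List A} (hl : Gap w k l)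
    (h : Inw x i L l) : ∃ j < k, ∃ n, Inw x i L (w k ++ (rep (w j) n ++ w k)) := by
  induction hl with
  | base => exact ⟨0, hk, 0, h.mono (List.prefix_append _ _).isInfix⟩
  | step l j n hj hl ih =>
    obtain ⟨l₀, rfl⟩ := hl.suffix
    obtain ⟨s, hs⟩ := h
    rw [List.append_assoc] at hs
    by_cases h1 : s + L ≤ l₀.length + (w k).length
    · refine ih ⟨s, fun t ht => ?_⟩
      rw [← hs t ht, ← List.append_assoc]
      exact (List.getElem?_append_left (by rw [List.length_append]; omega)).symm
    · by_cases h2 : l₀.length ≤ s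
      · refine ⟨j, hj, n, s - l₀.length, fun t ht => ?_⟩
        have h3 := hs t ht
        rw [List.getElem?_append_right (by omega)] at h3
        rw [← h3]
        congr 1; omega
      · exfalso
        refine hx (i + (l₀.length - s : ℕ)) fun t ht => ?_
        have h3 := hs (l₀.length - s + t) (by omega)
        rw [List.getElem?_append_right (by omega), List.getElem?_append_left (by omega)] at h3
        have h4 : s + (l₀.length - s + t) - l₀.length = t := by omega
        rw [h4] at h3
        rw [h3]
        push_cast
        congr 2; ring

end Hierarchy

/-! ### The subshift of the hierarchy -/

section Subshift

variable {A : Type*}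

/-- The subshift generated by the hierarchy: sequences all of whose finite stretches occur in
some word `wd u v M`. -/
def XS (u v : List A) : Set (ℤ → A) := {x | ∀ (i : ℤ) (L : ℕ), ∃ M, Inw x i L (wd u v M)}

lemma sh_mem_XS {u v : List A} {x : ℤ → A} (n : ℤ) (hx : x ∈ XS u v) : sh n x ∈ XS u v := by
  intro i L
  obtain ⟨M, s, hs⟩ := hx (i + n) L
  refine ⟨M, s, fun j hj => ?_⟩
  rw [hs j hj]; simp only [sh]; congr 2; ring

lemma XS_inv [TopologicalSpace A] (u v : List A) (x : ℤ → A) :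
    x ∈ XS u v ↔ shiftHomeo A x ∈ XS u v := by
  refine ⟨fun h => sh_mem_XS 1 h, fun h => ?_⟩
  have h1 := sh_mem_XS (-1) h
  have h2 : sh (-1) (shiftHomeo A x) = x := by
    funext i; simp [sh, shiftHomeo]
  rwa [h2] at h1

lemma XS_closed [TopologicalSpace A] [DiscreteTopology A] (u v : List A) :
    IsClosed (XS u v) := by
  refine isClosed_of_cyl fun x hx i L => ?_
  obtain ⟨y, hy, hyx⟩ := hx (i.natAbs + L)
  obtain ⟨M, s, hs⟩ := hy i L
  refine ⟨M, s, fun j hj => ?_⟩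
  rw [hs j hj, hyx _ (by rw [abs_le]; omega)]

/-- A stretch of a point of `XS u v` occurs in all sufficiently late words. -/
lemma XS_late {u v : List A} {x : ℤ → A} (hx : x ∈ XS u v) (i : ℤ) (L : ℕ) :
    ∃ K, ∀ M, K ≤ M → Inw x i L (wd u v M) := by
  obtain ⟨M, hM⟩ := hx i L
  obtain ⟨K, hK⟩ := rep_infix_wd u v M 1
  refine ⟨K, fun N hN => hM.mono ?_⟩
  have := hK N hN
  simpa [rep] using this

variable [Inhabited A]

lemma per_mem_XS {u v : List A} (hu : u ≠ []) (hv : v ≠ []) (m : ℕ) (φ : ℤ) :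
    sh φ (per (wd u v m)) ∈ XS u v := by
  intro i L
  obtain ⟨n, hn⟩ := inw_per (wd_ne_nil hu hv m) φ i L
  obtain ⟨K, hK⟩ := rep_infix_wd u v m n
  exact ⟨K, hn.mono (hK K le_rfl)⟩

/-- A stretch read in a word `l` is read in a suitable shift of `l^∞`. -/
lemma per_of_inw {x : ℤ → A} {i : ℤ} {L : ℕ} {l : List A} (h : Inw x i L l) :
    ∃ φ : ℤ, ∀ t : ℤ, i ≤ t → t < i + L → sh φ (per l) t = x t := by
  obtain ⟨s, hs⟩ := h
  refine ⟨s - i, fun t h1 h2 => ?_⟩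
  obtain ⟨j, rfl⟩ := Int.le.dest h1
  have h3 := hs j (by omega)
  have h4 := inw_lt hs (by omega)
  rw [per_nat (by omega)] at h3
  simp only [Option.some.injEq] at h3
  rw [← h3]
  simp only [sh]
  congr 1; push_cast; ring

/-- The union of the orbits of `(wd u v j)^∞` for `j < k`. -/
def orb (u v : List A) (k : ℕ) : Set (ℤ → A) :=
  ⋃ j ∈ Set.Iio k, {y | ∃ φ : ℤ, y = sh φ (per (wd u v j))}

lemma orb_finite (u v : List A) (k : ℕ) : (orb u v k).Finite :=
  (Set.finite_Iio k).biUnion fun _ _ => orbit_per_finite _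

variable [TopologicalSpace A] [DiscreteTopology A]

/-- A point of `XS u v` avoiding `wd u v k` lies on one of the first `k` periodic orbits: the
gaps between occurrences of `wd u v k` are powers of earlier words. -/
lemma mem_orb {u v : List A} {k : ℕ} (hk : 1 ≤ k) {x : ℤ → A} (hxX : x ∈ XS u v)
    (hx : ∀ i, ¬ Occ x i (wd u v k)) : x ∈ orb u v k := by
  refine mem_of_isClosed (orb_finite u v k).isClosed fun R => ?_
  set c := (wd u v k).length with hc
  obtain ⟨K, hK⟩ := XS_late hxX (-R - c) (2 * R + 1 + 2 * c)
  have h1 := hK (max K k) (le_max_left _ _)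
  obtain ⟨j, hj, n, s, hs⟩ :=
    (gap_wd u v hk (le_max_right K k)).inw hk hx h1
  have h2 := inw_lt hs (by omega)
  simp only [List.length_append, length_rep, ← hc] at h2
  refine ⟨sh (s + R) (per (wd u v j)), ?_, fun t ht => ?_⟩
  · simp only [orb, Set.mem_iUnion]
    exact ⟨j, hj, _, rfl⟩
  · rw [abs_le] at ht
    obtain ⟨p, hp⟩ := Int.le.dest ht.1
    have h3 := hs (p + c) (by omega)
    rw [List.getElem?_append_right (by omega), List.getElem?_append_left
      (by rw [length_rep]; omega), getElem?_rep _ _ _ (by omega)] at h3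
    simp only [Option.some.injEq] at h3
    have h4 : (-R - c + (p + c : ℕ) : ℤ) = t := by push_cast; omega
    rw [h4] at h3
    rw [← h3]
    simp only [sh]
    congr 1
    omega

lemma XS_trans {u v : List A} (hu : u ≠ []) (hv : v ≠ []) {U V : Set (ℤ → A)} (hU : IsOpen U)
    (hV : IsOpen V) {x y : ℤ → A} (hxX : x ∈ XS u v) (hxU : x ∈ U) (hyX : y ∈ XS u v)
    (hyV : y ∈ V) : ∃ n : ℤ, ∃ z ∈ XS u v, z ∈ U ∧ sh n z ∈ V := by
  obtain ⟨R, hR⟩ := exists_cyl hU hxU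
  obtain ⟨R', hR'⟩ := exists_cyl hV hyV
  obtain ⟨K, hK⟩ := XS_late hxX (-R) (2 * R + 1)
  obtain ⟨K', hK'⟩ := XS_late hyX (-R') (2 * R' + 1)
  obtain ⟨φ, hφ⟩ := per_of_inw (hK (max K K') (le_max_left _ _))
  obtain ⟨ψ, hψ⟩ := per_of_inw (hK' (max K K') (le_max_right _ _))
  refine ⟨ψ - φ, _, per_mem_XS hu hv (max K K') φ, hR _ fun t ht => ?_, hR' _ fun t ht => ?_⟩
  · rw [abs_le] at ht
    exact hφ t ht.1 (by push_cast; omega)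
  · rw [abs_le] at ht
    rw [sh_sh, sub_add_cancel]
    exact hψ t ht.1 (by push_cast; omega)

lemma isCAMZ_XS {u v : List A} (hu : u ≠ []) (hv : v ≠ [])
    (huv : ∀ φ : ℤ, sh φ (per u) ≠ per v) :
    IsCAMZ (restrictHomeo (shiftHomeo A) (XS u v) (XS_inv u v)) := by
  refine ⟨fun n hn hT => ?_, fun U V hU hV hUne hVne => ?_, ?_, fun B hB hTB hne => ?_⟩
  · -- If a power of the shift were trivial, the two open sets of points agreeing on a full
    -- period with `u^∞` and with `v^∞` would be singletons, against transitivity.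
    have hper : ∀ x ∈ XS u v, sh n x = x := by
      intro x hx
      rw [← val_zpow (XS u v) (XS_inv u v) n ⟨x, hx⟩, hT]
      rfl
    have hdet : ∀ x ∈ XS u v, ∀ y ∈ XS u v,
        (∀ t : ℤ, 0 ≤ t → t < |n| → x t = y t) → x = y := by
      intro x hx y hy hxy
      have hp : ∀ z ∈ XS u v, ∀ t, z t = z (t % |n|) := by
        intro z hz t
        have hper' : Function.Periodic z n := fun i => congrFun (hper z hz) i
        have h1 : Function.Periodic z |n| := by
          rcases abs_choice n with h | h <;> rw [h]
          · exact hper'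
          · exact hper'.neg
        have h2 := h1.int_mul (t / |n|) (t % |n|)
        rw [← h2]
        congr 1
        have := Int.emod_add_mul_ediv t |n|
        push_cast
        linarith
      funext t
      rw [hp x hx, hp y hy]
      exact hxy _ (Int.emod_nonneg _ (abs_pos.2 hn).ne') (Int.emod_lt_of_pos _ (abs_pos.2 hn))
    have hu' := per_mem_XS hu hv 0 0
    have hv' := per_mem_XS hu hv 1 0
    rw [wd_zero, sh_zero] at hu'
    rw [wd_one, sh_zero] at hv'
    obtain ⟨m, z, hzX, hzu, hzv⟩ := XS_trans hu hv (isOpen_cyl 0 |n| (per u))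
      (isOpen_cyl 0 |n| (per v)) hu' (fun t _ _ => rfl) hv' (fun t _ _ => rfl)
    have e1 := hdet _ hzX _ hu' hzu
    have e2 := hdet _ (sh_mem_XS m hzX) _ hv' hzv
    exact huv m (e1 ▸ e2)
  · obtain ⟨U', hU', rfl⟩ := hU
    obtain ⟨V', hV', rfl⟩ := hV
    obtain ⟨x, hx⟩ := hUne
    obtain ⟨y, hy⟩ := hVne
    obtain ⟨n, z, hz, hzU, hzV⟩ := XS_trans hu hv hU' hV' x.2 hx y.2 hy
    refine ⟨n, _, ⟨⟨z, hz⟩, hzU, rfl⟩, ?_⟩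
    rw [Set.mem_preimage, val_zpow]
    exact hzV
  · rw [dense_iff_inter_open]
    rintro U ⟨U', hU', rfl⟩ ⟨x, hx⟩
    obtain ⟨R, hR⟩ := exists_cyl hU' hx
    obtain ⟨K, hK⟩ := XS_late x.2 (-R) (2 * R + 1)
    obtain ⟨φ, hφ⟩ := per_of_inw (hK K le_rfl)
    refine ⟨⟨_, per_mem_XS hu hv K φ⟩, hR _ fun t ht => ?_, (wd u v K).length,
      List.length_pos_iff.2 (wd_ne_nil hu hv K), Subtype.ext ?_⟩
    · rw [abs_le] at ht
      exact hφ t ht.1 (by push_cast; omega)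
    · rw [← zpow_natCast, val_zpow]
      simp only
      rw [sh_sh, add_comm, ← sh_sh, sh_length_per]
  · have hTn : ∀ n : ℤ, ∀ y ∈ B,
        ((restrictHomeo (shiftHomeo A) (XS u v) (XS_inv u v)) ^ n) y ∈ B := by
      set T := restrictHomeo (shiftHomeo A) (XS u v) (XS_inv u v) with hT
      have h1 : ∀ y ∈ B, T y ∈ B := fun y hy => hTB ▸ Set.mem_image_of_mem T hy
      have h2 : ∀ y ∈ B, T⁻¹ y ∈ B := by
        intro y hy
        rw [← hTB] at hy
        obtain ⟨z, hz, rfl⟩ := hy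
        have : T⁻¹ (T z) = z := T.symm_apply_apply z
        rwa [this]
      intro n
      induction n with
      | zero => intro y hy; simpa using hy
      | succ n ih => intro y hy; rw [zpow_add_one]; exact ih _ (h1 y hy)
      | pred n ih => intro y hy; rw [zpow_sub_one]; exact ih _ (h2 y hy)
    obtain ⟨x, hx⟩ := (Set.ne_univ_iff_exists_notMem B).1 hne
    obtain ⟨U', hU', hUB⟩ := hB.isOpen_compl
    have hxU : x.1 ∈ U' := by
      have : x ∈ Subtype.val ⁻¹' U' := by rw [hUB]; exact hx
      exact this
    obtain ⟨R, hR⟩ := exists_cyl hU' hxU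
    obtain ⟨K, hK⟩ := XS_late x.2 (-R) (2 * R + 1)
    obtain ⟨s, hs⟩ := hK (K + 1) (by omega)
    have hlen := inw_lt hs (by omega)
    refine ((orb_finite u v (K + 1)).preimage Subtype.val_injective.injOn).subset ?_
    intro y hy
    refine mem_orb (by omega) y.2 fun i hocc => ?_
    -- A shift of `y` agrees with `x` around the origin, so lies outside `B`.
    have h1 := hTn (i + s + R) y hy
    have h2 : ((restrictHomeo (shiftHomeo A) (XS u v) (XS_inv u v)) ^ (i + s + R)) y
        ∈ Subtype.val ⁻¹' U' := by
      refine hR _ fun t ht => ?_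
      rw [abs_le] at ht
      obtain ⟨p, hp⟩ := Int.le.dest ht.1
      have h3 := hs p (by omega)
      have h4 := hocc (s + p) (by omega)
      rw [h3] at h4
      simp only [Option.some.injEq] at h4
      rw [hp] at h4
      rw [val_zpow, h4]
      have h5 : t + (i + s + R) = i + (s + p : ℕ) := by push_cast; omega
      simp only [sh]
      rw [h5]
    rw [hUB] at h2
    exact h2 h1

end Subshift

/-! ### Recurrence in a totally transitive subshift -/

section Recurrence

variable {A : Type*} [TopologicalSpace A]

/-- Total transitivity of the shift on `W`, in terms of open subsets of `A^ℤ` and of the maps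
`sh`. -/
def TotTrans (W : Set (ℤ → A)) : Prop :=
  ∀ k : ℕ, 0 < k → ∀ U V : Set (ℤ → A), IsOpen U → IsOpen V → (U ∩ W).Nonempty →
    (V ∩ W).Nonempty → ∃ n : ℤ, ∃ z ∈ W, z ∈ U ∧ sh (k * n) z ∈ V

lemma totTrans_of {W : Set (ℤ → A)} (hWinv : ∀ x, x ∈ W ↔ shiftHomeo A x ∈ W)
    (htt : ∀ k : ℕ, 0 < k →
      ∀ U V : Set W, IsOpen U → IsOpen V → U.Nonempty → V.Nonempty →
        ∃ n : ℤ,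
          ((((restrictHomeo (shiftHomeo A) W hWinv) ^ (k : ℤ)) ^ n) '' U ∩ V).Nonempty) :
    TotTrans W := by
  rintro k hk U V hU hV ⟨x, hxU, hxW⟩ ⟨y, hyV, hyW⟩
  obtain ⟨n, _, ⟨z, hzU, rfl⟩, hzV⟩ := htt k hk (Subtype.val ⁻¹' U) (Subtype.val ⁻¹' V)
    (hU.preimage continuous_subtype_val) (hV.preimage continuous_subtype_val)
    ⟨⟨x, hxW⟩, hxU⟩ ⟨⟨y, hyW⟩, hyV⟩
  refine ⟨n, z.1, z.2, hzU, ?_⟩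
  rw [← zpow_mul, Set.mem_preimage, val_zpow] at hzV
  exact hzV

variable [DiscreteTopology A] {W : Set (ℤ → A)}

/-- An infinite totally transitive subshift has no isolated points: transitivity of `σ²` makes an
isolated point periodic, and then its orbit is everything. -/
lemma exists_two (hinf : W.Infinite) (hsh : ∀ (n : ℤ), ∀ x ∈ W, sh n x ∈ W) (ht : TotTrans W)
    {U : Set (ℤ → A)} (hU : IsOpen U) (hne : (U ∩ W).Nonempty) :
    ∃ x ∈ U ∩ W, ∃ y ∈ U ∩ W, x ≠ y := by
  by_contra! hc
  obtain ⟨x, hxU, hxW⟩ := hne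
  obtain ⟨n, z, hzW, hzU, hzV⟩ := ht 2 (by norm_num) U (sh (-1) ⁻¹' U) hU
    (hU.preimage (continuous_sh (-1))) ⟨x, hxU, hxW⟩
    ⟨sh 1 x, by rw [Set.mem_preimage, sh_sh]; simpa using hxU, hsh 1 x hxW⟩
  have hzx : x = z := hc x ⟨hxU, hxW⟩ z ⟨hzU, hzW⟩
  subst hzx
  rw [Set.mem_preimage, sh_sh] at hzV
  have hp := hc _ ⟨hzV, hsh _ _ hxW⟩ x ⟨hxU, hxW⟩
  set p : ℤ := -1 + ((2 : ℕ) : ℤ) * n with hpdef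
  have hp0 : p ≠ 0 := by push_cast at hpdef; omega
  have hper : Function.Periodic x p := fun i => congrFun hp i
  have hfin : (Set.range fun m : ℤ => sh m x).Finite := by
    refine ((Set.finite_Ico (0 : ℤ) |p|).image (fun m => sh m x)).subset ?_
    rintro _ ⟨m, rfl⟩
    refine ⟨m % p, ⟨Int.emod_nonneg _ hp0, Int.emod_lt_abs _ hp0⟩, ?_⟩
    funext i
    have h2 := hper.int_mul (m / p) (i + m % p)
    simp only [sh]
    rw [← h2]
    congr 1
    have := Int.emod_add_mul_ediv m p
    push_cast
    linarith
  refine hinf (hfin.subset fun y hy => ?_)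
  by_contra hyr
  obtain ⟨m, z, hzW', hzU', hzV'⟩ := ht 1 one_pos U _ hU hfin.isClosed.isOpen_compl
    ⟨x, hxU, hxW⟩ ⟨y, hyr, hy⟩
  have hzx : x = z := hc x ⟨hxU, hxW⟩ z ⟨hzU', hzW'⟩
  subst hzx
  exact hzV' ⟨_, rfl⟩

lemma exists_return (hinf : W.Infinite) (hsh : ∀ (n : ℤ), ∀ x ∈ W, sh n x ∈ W)
    (ht : TotTrans W) {U : Set (ℤ → A)} (hU : IsOpen U) (hne : (U ∩ W).Nonempty) :
    ∃ n : ℕ, 0 < n ∧ ∃ z ∈ W, z ∈ U ∧ sh n z ∈ U := by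
  obtain ⟨x, hx, y, hy, hxy⟩ := exists_two hinf hsh ht hU hne
  obtain ⟨i, hi⟩ := Function.ne_iff.1 hxy
  obtain ⟨n, z, hzW, hz1, hz2⟩ := ht 1 one_pos
    (U ∩ {w | ∀ t, i ≤ t → t < i + 1 → w t = x t}) (U ∩ {w | ∀ t, i ≤ t → t < i + 1 → w t = y t})
    (hU.inter (isOpen_cyl _ _ _)) (hU.inter (isOpen_cyl _ _ _))
    ⟨x, ⟨hx.1, fun _ _ _ => rfl⟩, hx.2⟩ ⟨y, ⟨hy.1, fun _ _ _ => rfl⟩, hy.2⟩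
  rw [Nat.cast_one, one_mul] at hz2
  have hn : n ≠ 0 := by
    rintro rfl
    rw [sh_zero] at hz2
    exact hi ((hz1.2 i le_rfl (by omega)).symm.trans (hz2.2 i le_rfl (by omega)))
  obtain ⟨k, rfl | rfl⟩ := n.eq_nat_or_neg
  · exact ⟨k, by omega, z, hzW, hz1.1, hz2.1⟩
  · refine ⟨k, by omega, sh (-k) z, hsh _ _ hzW, hz2.1, ?_⟩
    rw [sh_sh, add_neg_cancel, sh_zero]; exact hz1.1

lemma exists_late_return (hinf : W.Infinite) (hsh : ∀ (n : ℤ), ∀ x ∈ W, sh n x ∈ W)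
    (ht : TotTrans W) {U : Set (ℤ → A)} (hU : IsOpen U) (hne : (U ∩ W).Nonempty) (B : ℕ) :
    ∃ n : ℕ, B ≤ n ∧ ∃ z ∈ W, z ∈ U ∧ sh n z ∈ U := by
  induction B with
  | zero =>
    obtain ⟨x, hx⟩ := hne
    exact ⟨0, le_rfl, x, hx.2, hx.1, by simpa using hx.1⟩
  | succ B ih =>
    obtain ⟨n, hn, z, hzW, hz1, hz2⟩ := ih
    obtain ⟨m, hm, y, hyW, hy1, hy2⟩ := exists_return hinf hsh ht
      (hU.inter (hU.preimage (continuous_sh n))) ⟨z, ⟨hz1, hz2⟩, hzW⟩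
    refine ⟨n + m, by omega, y, hyW, hy1.1, ?_⟩
    have := hy2.2
    rw [Set.mem_preimage, sh_sh] at this
    push_cast; exact this

/-- One-sided transitivity, with arbitrarily late transition times. -/
lemma exists_late_visit (hinf : W.Infinite) (hsh : ∀ (n : ℤ), ∀ x ∈ W, sh n x ∈ W)
    (ht : TotTrans W) {U V : Set (ℤ → A)} (hU : IsOpen U) (hV : IsOpen V)
    (hneU : (U ∩ W).Nonempty) (hneV : (V ∩ W).Nonempty) (B : ℕ) :
    ∃ n : ℕ, B ≤ n ∧ ∃ z ∈ W, z ∈ U ∧ sh n z ∈ V := by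
  obtain ⟨m, x, hxW, hxU, hxV⟩ := ht 1 one_pos U V hU hV hneU hneV
  rw [Nat.cast_one, one_mul] at hxV
  obtain ⟨k, hk, y, hyW, hy1, hy2⟩ := exists_late_return hinf hsh ht
    (hV.inter (hU.preimage (continuous_sh (-m))))
    ⟨sh m x, ⟨hxV, by rw [Set.mem_preimage, sh_sh, neg_add_cancel, sh_zero]; exact hxU⟩,
      hsh m x hxW⟩ (B + m.natAbs)
  refine ⟨(k + m).toNat, by omega, sh (-m) y, hsh _ _ hyW, hy1.2, ?_⟩
  rw [sh_sh, Int.toNat_of_nonneg (by omega), add_neg_cancel_right]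
  exact hy2.1

/-- Finitely many open sets can be visited, at common times, by a whole open set of points. -/
lemma exists_visit_all (hinf : W.Infinite) (hsh : ∀ (n : ℤ), ∀ x ∈ W, sh n x ∈ W)
    (ht : TotTrans W) {U : Set (ℤ → A)} (hU : IsOpen U) (hneU : (U ∩ W).Nonempty)
    (F : Set (Set (ℤ → A))) (hF : F.Finite) (hFo : ∀ V ∈ F, IsOpen V ∧ (V ∩ W).Nonempty) :
    ∃ U' ⊆ U, IsOpen U' ∧ (U' ∩ W).Nonempty ∧
      ∃ B : ℕ, ∀ V ∈ F, ∃ n ≤ B, ∀ x ∈ U', sh (n : ℤ) x ∈ V := by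
  induction F, hF using Set.Finite.induction_on with
  | empty => exact ⟨U, subset_rfl, hU, hneU, 0, by simp⟩
  | @insert V F _ _ ih =>
    obtain ⟨U', hsub, hU', hne', B, hB⟩ := ih fun V' hV' => hFo V' (Set.mem_insert_of_mem _ hV')
    obtain ⟨hV, hneV⟩ := hFo V (Set.mem_insert _ _)
    obtain ⟨n, -, z, hzW, hz1, hz2⟩ := exists_late_visit hinf hsh ht hU' hV hne' hneV 0
    refine ⟨U' ∩ sh n ⁻¹' V, Set.inter_subset_left.trans hsub,
      hU'.inter (hV.preimage (continuous_sh _)), ⟨z, ⟨hz1, hz2⟩, hzW⟩, max B n, ?_⟩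
    rintro V' (rfl | hV')
    · exact ⟨n, le_max_right _ _, fun x hx => hx.2⟩
    · obtain ⟨k, hk, hk'⟩ := hB V' hV'
      exact ⟨k, hk.trans (le_max_left _ _), fun x hx => hk' x hx.1⟩

end Recurrence

/-! ### Words of the hierarchy inside a subshift -/

section Local

variable {A : Type*}

/-- The word read in `x` on the places `0, …, n - 1`. -/
def win (x : ℤ → A) (n : ℕ) : List A := (List.range n).map fun j : ℕ => x j

lemma length_win (x : ℤ → A) (n : ℕ) : (win x n).length = n := by simp [win]

lemma getElem?_win (x : ℤ → A) {n j : ℕ} (hj : j < n) : (win x n)[j]? = some (x j) := by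
  simp [win, List.getElem?_range hj]

/-- Products of copies of `u` and `v`. -/
inductive Con (u v : List A) : List A → Prop
  | nil : Con u v []
  | left (l : List A) (hl : Con u v l) : Con u v (u ++ l)
  | right (l : List A) (hl : Con u v l) : Con u v (v ++ l)

lemma Con.append {u v l l' : List A} (hl : Con u v l) (hl' : Con u v l') :
    Con u v (l ++ l') := by
  induction hl with
  | nil => exact hl'
  | left l _ ih => rw [List.append_assoc]; exact Con.left _ ih
  | right l _ ih => rw [List.append_assoc]; exact Con.right _ ih

lemma Con.rep {u v l : List A} (hl : Con u v l) (n : ℕ) : Con u v (rep l n) := by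
  induction n with
  | zero => exact Con.nil
  | succ n ih => rw [rep_succ]; exact hl.append ih

lemma con_wd (u v : List A) (M : ℕ) : Con u v (wd u v M) := by
  induction M using Nat.strong_induction_on with
  | _ M ih =>
    match M with
    | 0 => rw [wd_zero]; simpa using Con.left (u := u) (v := v) [] Con.nil
    | 1 => rw [wd_one]; simpa using Con.right (u := u) (v := v) [] Con.nil
    | k + 2 =>
      have hj := Nat.unpair_left_le (k + 1)
      rw [wd_succ u v (by omega)]
      exact ((ih _ (by omega)).append ((ih _ (by omega)).rep _)).append (ih _ (by omega))

/-- If `u` and `v` are read in points of `W` up to a return to the word `c`, then every stretch of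
length `N = |c|` in a product of copies of `u` and `v` is read in a point of `W`. -/
lemma Con.stretch {W : Set (ℤ → A)} (hsh : ∀ (n : ℤ), ∀ x ∈ W, sh n x ∈ W) {N : ℕ}
    {c x₁ x₂ : ℤ → A} {n₁ n₂ : ℕ} (hx₁ : x₁ ∈ W) (hx₂ : x₂ ∈ W) (hn₁ : N ≤ n₁) (hn₂ : N ≤ n₂)
    (h₁ : ∀ j < N, x₁ (j : ℕ) = c (j : ℕ)) (h₁' : ∀ j < N, x₁ ((n₁ + j : ℕ) : ℤ) = c (j : ℕ))
    (h₂ : ∀ j < N, x₂ (j : ℕ) = c (j : ℕ)) (h₂' : ∀ j < N, x₂ ((n₂ + j : ℕ) : ℤ) = c (j : ℕ))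
    {l : List A} (hl : Con (win x₁ n₁) (win x₂ n₂) l) :
    (∀ j < N, (l ++ win c N)[j]? = some (c (j : ℕ))) ∧
    ∀ s, s + N ≤ (l ++ win c N).length →
      ∃ y ∈ W, ∀ j < N, (l ++ win c N)[s + j]? = some (y (j : ℕ)) := by
  have main : ∀ (x : ℤ → A) (n : ℕ) (l : List A), x ∈ W → N ≤ n →
      (∀ j < N, x (j : ℕ) = c (j : ℕ)) → (∀ j < N, x ((n + j : ℕ) : ℤ) = c (j : ℕ)) →
      ((∀ j < N, (l ++ win c N)[j]? = some (c (j : ℕ))) ∧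
        ∀ s, s + N ≤ (l ++ win c N).length →
          ∃ y ∈ W, ∀ j < N, (l ++ win c N)[s + j]? = some (y (j : ℕ))) →
      ((∀ j < N, (win x n ++ l ++ win c N)[j]? = some (c (j : ℕ))) ∧
        ∀ s, s + N ≤ (win x n ++ l ++ win c N).length →
          ∃ y ∈ W, ∀ j < N, (win x n ++ l ++ win c N)[s + j]? = some (y (j : ℕ))) := by
    intro x n l hx hn h h' ⟨ih1, ih2⟩
    refine ⟨fun j hj => ?_, fun s hs => ?_⟩
    · rw [List.append_assoc, List.getElem?_append_left (by rw [length_win]; omega),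
        getElem?_win x (by omega), h j hj]
    · rw [List.append_assoc, List.length_append, length_win] at hs
      by_cases hsn : n ≤ s
      · obtain ⟨y, hy, hyj⟩ := ih2 (s - n) (by omega)
        refine ⟨y, hy, fun j hj => ?_⟩
        rw [List.append_assoc, List.getElem?_append_right (by rw [length_win]; omega), length_win,
          ← hyj j hj]
        congr 1; omega
      · refine ⟨sh s x, hsh _ _ hx, fun j hj => ?_⟩
        have e : sh s x (j : ℕ) = x ((s + j : ℕ) : ℤ) := by
          simp only [sh]; congr 1; push_cast; ring
        rw [e, List.append_assoc]
        by_cases hj' : s + j < n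
        · rw [List.getElem?_append_left (by rw [length_win]; omega), getElem?_win x hj']
        · rw [List.getElem?_append_right (by rw [length_win]; omega), length_win,
            ih1 _ (by omega), ← h' _ (by omega)]
          congr 3; omega
  induction hl with
  | nil =>
    refine ⟨fun j hj => by simpa using getElem?_win c hj, fun s hs => ?_⟩
    simp only [List.nil_append, length_win] at hs ⊢
    obtain rfl : s = 0 := by omega
    exact ⟨x₁, hx₁, fun j hj => by rw [zero_add, getElem?_win c hj, h₁ j hj]⟩
  | left l _ ih => exact main x₁ n₁ l hx₁ hn₁ h₁ h₁' ih
  | right l _ ih => exact main x₂ n₂ l hx₂ hn₂ h₂ h₂' ih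

end Local

/-! ### The approximation -/

section Approx

variable {A : Type*} [TopologicalSpace A] [DiscreteTopology A]

/-- For a compatible metric, sequences agreeing on a long central stretch are uniformly close. -/
lemma exists_dist_lt [Finite A] (m : MetricSpace (ℤ → A))
    (hm : m.toPseudoMetricSpace.toUniformSpace.toTopologicalSpace
      = (inferInstance : TopologicalSpace (ℤ → A))) {ε : ℝ} (hε : 0 < ε) :
    ∃ R : ℕ, ∀ x y : ℤ → A, (∀ t : ℤ, |t| ≤ R → x t = y t) →
      @dist _ m.toPseudoMetricSpace.toDist x y < ε := by
  have hball : ∀ x : ℤ → A, IsOpen (@Metric.ball _ m.toPseudoMetricSpace x (ε / 2)) := by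
    intro x
    have := @Metric.isOpen_ball _ m.toPseudoMetricSpace x (ε / 2)
    rwa [hm] at this
  have hmem : ∀ x : ℤ → A, x ∈ @Metric.ball _ m.toPseudoMetricSpace x (ε / 2) := fun x =>
    @Metric.mem_ball_self _ m.toPseudoMetricSpace x (ε / 2) (by linarith)
  choose R hR using fun x => exists_cyl (hball x) (hmem x)
  obtain ⟨F, hF⟩ := isCompact_univ.elim_finite_subcover
    (fun x : ℤ → A => {y : ℤ → A | ∀ t : ℤ, -(R x : ℤ) ≤ t → t < R x + 1 → y t = x t})
    (fun x => isOpen_cyl _ _ x)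
    (fun x _ => Set.mem_iUnion.2 ⟨x, fun t _ _ => rfl⟩)
  refine ⟨F.sup R, fun x y hxy => ?_⟩
  obtain ⟨z, hz⟩ := Set.mem_iUnion.1 (hF (Set.mem_univ x))
  obtain ⟨hzF, hz⟩ := Set.mem_iUnion.1 hz
  have hle : R z ≤ F.sup R := Finset.le_sup hzF
  have h1 : @dist _ m.toPseudoMetricSpace.toDist x z < ε / 2 := hR z x fun t ht => by
    rw [abs_le] at ht
    exact hz t ht.1 (by omega)
  have h2 : @dist _ m.toPseudoMetricSpace.toDist y z < ε / 2 := hR z y fun t ht => by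
    rw [← hxy t (by omega)]
    rw [abs_le] at ht
    exact hz t ht.1 (by omega)
  have h3 := @dist_triangle_right _ m.toPseudoMetricSpace x y z
  linarith

/-- Two words `u`, `v` as required by `isCAMZ_XS`, such that `XS u v` and the given infinite totally
transitive subshift have the same stretches of length `N`. -/
lemma exists_approx [Finite A] [Inhabited A] {W : Set (ℤ → A)} (hne : W.Nonempty)
    (hinf : W.Infinite) (hsh : ∀ (n : ℤ), ∀ x ∈ W, sh n x ∈ W) (ht : TotTrans W) (N : ℕ) :
    ∃ u v : List A, u ≠ [] ∧ v ≠ [] ∧ (∀ φ : ℤ, sh φ (per u) ≠ per v) ∧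
      (∀ x ∈ XS u v, ∃ y ∈ W, ∀ j < N, x (j : ℕ) = y (j : ℕ)) ∧
      (∀ y ∈ W, ∃ x ∈ XS u v, ∀ j < N, x (j : ℕ) = y (j : ℕ)) := by
  obtain ⟨c, hc⟩ := hne
  set C : Set (ℤ → A) := {y | ∀ t : ℤ, 0 ≤ t → t < N → y t = c t} with hC
  have hCo : IsOpen C := isOpen_cyl _ _ _
  have hCne : (C ∩ W).Nonempty := ⟨c, fun _ _ _ => rfl, hc⟩
  have hC1 : ∀ x ∈ C, ∀ j < N, x (j : ℕ) = c (j : ℕ) := fun x hx j hj =>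
    hx j (by omega) (by omega)
  have hC2 : ∀ (x : ℤ → A) (n : ℕ), sh n x ∈ C →
      ∀ j < N, x ((n + j : ℕ) : ℤ) = c (j : ℕ) := fun x n hx j hj => by
    rw [← hC1 _ hx j hj]; simp only [sh]; congr 1; push_cast; ring
  -- The first word `u` is read up to some return to `C`.
  obtain ⟨n₁, hn₁, x₁, hx₁, hx₁C, hx₁C'⟩ :=
    exists_late_visit hinf hsh ht hCo hCo hCne hCne (N + 1)
  set u := win x₁ n₁ with hu
  -- As `W` is infinite, some stretch `[-L, L]` of a point `q` of `W` does not occur in `u^∞`.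
  obtain ⟨q, hqW, hq⟩ : ∃ q ∈ W, q ∉ {y | ∃ φ : ℤ, y = sh φ (per u)} := by
    by_contra! hcon
    exact hinf ((orbit_per_finite u).subset hcon)
  obtain ⟨L, hL⟩ := exists_cyl (orbit_per_finite u).isClosed.isOpen_compl (x := q) hq
  -- The second word `v` shows that stretch and all stretches of length `N` of points of `W`.
  set F : Set (Set (ℤ → A)) :=
    insert {y | ∀ t : ℤ, 0 ≤ t → t < (2 * L + 1 : ℕ) → y t = sh (-L) q t}
      ((fun y : ℤ → A => {z : ℤ → A | ∀ t : ℤ, 0 ≤ t → t < N → z t = y t}) '' W) with hF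
  have hFfin : F.Finite := by
    refine Set.Finite.insert _ ?_
    have : ((fun y : ℤ → A => {z : ℤ → A | ∀ t : ℤ, 0 ≤ t → t < N → z t = y t}) '' W) ⊆
        Set.range (fun f : Fin N → A => {z : ℤ → A | ∀ j : Fin N, z (j : ℕ) = f j}) := by
      rintro _ ⟨y, -, rfl⟩
      refine ⟨fun j => y (j : ℕ), ?_⟩
      ext z
      simp only [Set.mem_ofPred_eq]
      constructor
      · intro h t h0 h1
        lift t to ℕ using h0
        exact h ⟨t, by omega⟩
      · intro h j
        exact h _ (by omega) (by have := j.2; omega)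
    exact (Set.finite_range _).subset this
  have hFo : ∀ V ∈ F, IsOpen V ∧ (V ∩ W).Nonempty := by
    rintro V (rfl | ⟨y, hy, rfl⟩)
    · exact ⟨isOpen_cyl _ _ _, sh (-L) q, fun _ _ _ => rfl, hsh _ _ hqW⟩
    · exact ⟨isOpen_cyl _ _ _, y, fun _ _ _ => rfl, hy⟩
  obtain ⟨U', hU'C, hU', hU'ne, B, hB⟩ := exists_visit_all hinf hsh ht hCo hCne F hFfin hFo
  obtain ⟨n₂, hn₂, x₂, hx₂, hx₂U, hx₂C'⟩ :=
    exists_late_visit hinf hsh ht hU' hCo hU'ne hCne (B + N + 2 * L + 1)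
  set v := win x₂ n₂ with hv
  have hu0 : u ≠ [] := by
    rw [← List.length_pos_iff, hu, length_win]; omega
  have hv0 : v ≠ [] := by
    rw [← List.length_pos_iff, hv, length_win]; omega
  have hperv : ∀ i : ℕ, i < n₂ → per v i = x₂ i := by
    intro i hi
    have h1 : v[i]? = some (x₂ i) := getElem?_win x₂ hi
    rw [per_nat (by rw [hv, length_win]; exact hi)] at h1
    exact Option.some.inj h1
  refine ⟨u, v, hu0, hv0, fun φ hφ => ?_, fun x hx => ?_, fun y hy => ?_⟩
  · obtain ⟨n, hn, hnU⟩ := hB _ (Set.mem_insert _ _)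
    have h1 := hnU x₂ hx₂U
    refine hL (sh (n + L) (per v)) (fun t ht => ?_) ⟨n + L + φ, by rw [← hφ, sh_sh]⟩
    rw [abs_le] at ht
    have h2 := h1 (t + L) (by omega) (by push_cast; omega)
    simp only [sh, add_neg_cancel_right] at h2 ⊢
    rw [← h2]
    have e : t + (n + L) = ((t + L + n).toNat : ℤ) := by omega
    rw [e, hperv _ (by omega)]
    congr 1; omega
  · obtain ⟨M, s, hs⟩ := hx 0 N
    have hloc := (con_wd u v M).stretch hsh hx₁ hx₂ (by omega) (by omega) (hC1 _ hx₁C)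
      (hC2 _ _ hx₁C') (hC1 _ (hU'C hx₂U)) (hC2 _ _ hx₂C')
    rcases Nat.eq_zero_or_pos N with rfl | hN
    · exact ⟨c, hc, by simp⟩
    have hlen := inw_lt hs hN
    obtain ⟨y, hy, hyj⟩ := hloc.2 s (by rw [List.length_append]; omega)
    refine ⟨y, hy, fun j hj => ?_⟩
    have h1 := hyj j hj
    rw [List.getElem?_append_left (by omega), hs j hj, zero_add] at h1
    exact Option.some.inj h1
  · obtain ⟨n, hn, hnU⟩ := hB _ (Set.mem_insert_of_mem _ ⟨y, hy, rfl⟩)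
    have h1 := hnU x₂ hx₂U
    have h2 := per_mem_XS hu0 hv0 1 n
    rw [wd_one] at h2
    refine ⟨_, h2, fun j hj => ?_⟩
    rw [← h1 j (by omega) (by omega)]
    simp only [sh]
    have := hperv (j + n) (by omega)
    push_cast at this
    exact this

end Approx

end CAMApprox

/-- For an alphabet `A` with at least two letters, any metric on `A^ℤ`
compatible with the product topology, and any infinite totally transitive subshift
`W ⊆ A^ℤ`, for every `ε > 0` there is a chaotic almost minimal subshift `X ⊆ A^ℤ`
whose Hausdorff distance to `W` is less than `ε`. -/
theorem statement9 {A : Type*} [Fintype A] [TopologicalSpace A] [DiscreteTopology A]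
    (hA : 2 ≤ Fintype.card A)
    (m : MetricSpace (ℤ → A))
    (hm : m.toPseudoMetricSpace.toUniformSpace.toTopologicalSpace
      = (inferInstance : TopologicalSpace (ℤ → A)))
    (W : Set (ℤ → A)) (hWne : W.Nonempty) (hWcl : IsClosed W) (hWinf : W.Infinite)
    (hWinv : ∀ x, x ∈ W ↔ shiftHomeo A x ∈ W)
    (htt : ∀ k : ℕ, 0 < k →
      ∀ U V : Set W, IsOpen U → IsOpen V → U.Nonempty → V.Nonempty →
        ∃ n : ℤ,
          ((((restrictHomeo (shiftHomeo A) W hWinv) ^ (k : ℤ)) ^ n) '' U ∩ V).Nonempty) :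
    ∀ ε : ℝ, 0 < ε →
      ∃ (X : Set (ℤ → A)) (hXinv : ∀ x, x ∈ X ↔ shiftHomeo A x ∈ X),
        X.Nonempty ∧ IsClosed X ∧
        IsCAMZ (restrictHomeo (shiftHomeo A) X hXinv) ∧
        @Metric.hausdorffDist _ m.toPseudoMetricSpace X W < ε := by
  open CAMApprox in
  intro ε hε
  have : Nonempty A := Fintype.card_pos_iff.1 (by omega)
  have : Inhabited A := Classical.inhabited_of_nonempty this
  obtain ⟨R, hR⟩ := exists_dist_lt m hm (half_pos hε)
  have hsh : ∀ (n : ℤ), ∀ x ∈ W, sh n x ∈ W := fun n x hx => mem_sh hWinv n hx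
  obtain ⟨u, v, hu, hv, huv, h1, h2⟩ := exists_approx hWne hWinf hsh (totTrans_of hWinv htt)
    (2 * R + 1)
  -- Stretches on `[0, 2R]` are moved to `[-R, R]` by the shift.
  have move : ∀ x y : ℤ → A, (∀ j < 2 * R + 1, sh (-R) x (j : ℕ) = y (j : ℕ)) →
      ∀ t : ℤ, |t| ≤ R → x t = sh R y t := by
    intro x y h t ht
    rw [abs_le] at ht
    have := h (t + R).toNat (by omega)
    rw [Int.toNat_of_nonneg (by omega)] at this
    simpa [sh] using this
  refine ⟨XS u v, XS_inv u v, ⟨_, per_mem_XS hu hv 0 0⟩, XS_closed u v, isCAMZ_XS hu hv huv, ?_⟩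
  refine lt_of_le_of_lt (@Metric.hausdorffDist_le_of_mem_dist _ m.toPseudoMetricSpace _ _ (ε / 2)
    (by linarith) (fun x hx => ?_) (fun y hy => ?_)) (half_lt_self hε)
  · obtain ⟨y, hy, hxy⟩ := h1 (sh (-R) x) (sh_mem_XS _ hx)
    exact ⟨sh R y, hsh _ _ hy, (hR _ _ (move x y hxy)).le⟩
  · obtain ⟨x, hx, hxy⟩ := h2 (sh (-R) y) (hsh _ _ hy)
    exact ⟨sh R x, sh_mem_XS _ hx, (hR _ _ (move y x fun j hj => (hxy j hj).symm)).le⟩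
end

section
/- Let X be a locally connected compact metric space and let T: X → X be an expansive homeomorphism. Then (X,T) is not chaotic almost minimal. -/
/-!
The proof shows that an expansive system in which every closed invariant set missing some periodic
point `p` is finite contains no nondegenerate continuum (`no_continuum`). A locally connected
compact space has finitely many components, so without nondegenerate continua it is finite, and
then some nonzero power of `T` is the identity.

Let `ε` be an expansivity constant. A continuum is called unstable if all its backward iterates
have diameter at most `ε`. Given a nondegenerate continuum, either some nondegenerate continuum is
unstable for `T⁻¹`, or one that is unstable for `T` arises as a limit of forward iterates of smaller
and smaller subcontinua, stopped just before their diameter exceeds `ε`. So it suffices to exclude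
nondegenerate unstable continua (`no_unstable`).

Let `O` be the orbit of `p`. By expansivity an unstable continuum grows, in a uniformly bounded time
if its diameter is bounded below, until its diameter exceeds `ε`; boundary bumping then gives a
subcontinuum of definite size at a definite distance from `O`, which is again unstable
(`Unst.exists_good`). Repeating this yields two things: points in each such continuum whose forward
orbit avoids a neighbourhood of `O` (`Good.exists_forward`), and, in the limit, an unstable continuum
`E` all of whose backward iterates avoid a neighbourhood of `O` (`Good.exists_backward`). Two periodic
points of `E` would stay `ε`-close for all time, so `E` has at most one, and some nondegenerate
subcontinuum `E₁` has none. Growing `E₁` gives a point `y ∈ E₁` whose past and eventual future both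
avoid a neighbourhood of `p`. As `y` is not periodic, the closure of its orbit misses `p` and is
infinite, a contradiction.

Limits of continua are taken along a nonprincipal ultrafilter on `ℕ` (`ulim`).
-/


open Set MeasureTheory

namespace ExpansiveCAM

open Filter Topology

variable {X : Type*} [MetricSpace X]

/-! ### Continua -/

/-- If no connected component of a compact Hausdorff space meets both closed sets `A` and `B`, then
a clopen set separates them; it is pulled back from the profinite space of components. -/
lemma exists_clopen_separating {K : Type*} [TopologicalSpace K] [CompactSpace K] [T2Space K]
    {A B : Set K} (hA : IsClosed A) (hB : IsClosed B)
    (h : ∀ a ∈ A, ∀ b ∈ B, b ∉ connectedComponent a) :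
    ∃ Z : Set K, IsClopen Z ∧ A ⊆ Z ∧ Disjoint B Z := by
  have hc : Continuous (ConnectedComponents.mk : K → ConnectedComponents K) :=
    ConnectedComponents.continuous_coe
  have hA' : IsClosed (ConnectedComponents.mk '' A) := (hA.isCompact.image hc).isClosed
  have hB' : IsClosed (ConnectedComponents.mk '' B) := (hB.isCompact.image hc).isClosed
  have hsub : ConnectedComponents.mk '' A ⊆ (ConnectedComponents.mk '' B)ᶜ := by
    rintro _ ⟨a, ha, rfl⟩ ⟨b, hb, hab⟩
    exact h a ha b hb (ConnectedComponents.coe_eq_coe'.1 hab)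
  obtain ⟨C, hC, hAC, hCB⟩ := exists_clopen_of_closed_subset_open hA' hB'.isOpen_compl hsub
  refine ⟨ConnectedComponents.mk ⁻¹' C, hC.preimage hc, fun a ha => hAC ⟨a, ha, rfl⟩, ?_⟩
  rw [Set.disjoint_left]
  exact fun b hb hbC => hCB hbC ⟨b, hb, rfl⟩

/-- Boundary bumping: a continuum on which `g` takes values `≤ a` and `≥ b` contains a
subcontinuum inside `a ≤ g ≤ b` that reaches both levels. -/
lemma exists_crossing {C : Set X} (hC : IsCompact C) (hCc : IsPreconnected C) {g : X → ℝ}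
    (hg : Continuous g) {a b : ℝ} (hab : a < b) {c d : X} (hc : c ∈ C) (hd : d ∈ C)
    (hca : g c ≤ a) (hdb : b ≤ g d) :
    ∃ D ⊆ C, IsCompact D ∧ IsPreconnected D ∧ (∀ x ∈ D, a ≤ g x ∧ g x ≤ b) ∧
      (∃ x ∈ D, g x = a) ∧ (∃ y ∈ D, g y = b) := by
  set K : Set X := C ∩ g ⁻¹' (Icc a b) with hK
  have hKc : IsCompact K := hC.inter_right (isClosed_Icc.preimage hg)
  have : CompactSpace K := isCompact_iff_compactSpace.1 hKc
  have hgv : Continuous fun x : K => g x := hg.comp continuous_subtype_val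
  by_contra hno
  have hsep : ∀ x ∈ {x : K | g x = a}, ∀ y ∈ {y : K | g y = b}, y ∉ connectedComponent x := by
    intro x hx y hy hxy
    refine hno ⟨Subtype.val '' connectedComponent x, ?_, ?_, ?_, ?_, ?_, ?_⟩
    · rintro _ ⟨z, _, rfl⟩
      exact z.2.1
    · exact isClosed_connectedComponent.isCompact.image continuous_subtype_val
    · exact isPreconnected_connectedComponent.image _ continuous_subtype_val.continuousOn
    · rintro _ ⟨z, _, rfl⟩
      exact z.2.2
    · exact ⟨x, ⟨x, mem_connectedComponent, rfl⟩, hx⟩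
    · exact ⟨y, ⟨y, hxy, rfl⟩, hy⟩
  obtain ⟨Z, hZ, hAZ, hBZ⟩ := exists_clopen_separating
    (isClosed_eq hgv continuous_const) (isClosed_eq hgv continuous_const) hsep
  have hZ1 : IsClosed (Subtype.val '' Z : Set X) :=
    (hZ.isClosed.isCompact.image continuous_subtype_val).isClosed
  have hZ2 : IsClosed (Subtype.val '' Zᶜ : Set X) :=
    (hZ.compl.isClosed.isCompact.image continuous_subtype_val).isClosed
  have hCl : IsClosed C := hC.isClosed
  have key := (isPreconnected_iff_subset_of_fully_disjoint_closed hCl).1 hCc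
    ((C ∩ {x | g x ≤ a}) ∪ Subtype.val '' Z) ((C ∩ {x | b ≤ g x}) ∪ Subtype.val '' Zᶜ)
    ((hCl.inter (isClosed_le hg continuous_const)).union hZ1)
    ((hCl.inter (isClosed_le continuous_const hg)).union hZ2) ?_ ?_
  · rcases key with key | key
    · rcases key hd with h | ⟨z, hz, hzd⟩
      · have := h.2
        simp only [mem_ofPred_eq] at this
        linarith
      · have hzb : g z = b := le_antisymm z.2.2.2 (by rw [hzd]; exact hdb)
        exact Set.disjoint_left.1 hBZ hzb hz
    · rcases key hc with h | ⟨z, hz, hzc⟩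
      · have := h.2
        simp only [mem_ofPred_eq] at this
        linarith
      · have hza : g z = a := le_antisymm (by rw [hzc]; exact hca) z.2.2.1
        exact hz (hAZ hza)
  · intro x hx
    by_cases h1 : g x ≤ a
    · exact Or.inl (Or.inl ⟨hx, h1⟩)
    by_cases h2 : b ≤ g x
    · exact Or.inr (Or.inl ⟨hx, h2⟩)
    have hxK : x ∈ K := ⟨hx, (not_le.1 h1).le, (not_le.1 h2).le⟩
    by_cases h3 : (⟨x, hxK⟩ : K) ∈ Z
    · exact Or.inl (Or.inr ⟨_, h3, rfl⟩)
    · exact Or.inr (Or.inr ⟨⟨x, hxK⟩, h3, rfl⟩)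
  · rw [Set.disjoint_left]
    rintro x (⟨_, h1⟩ | ⟨z, hz, rfl⟩) (⟨_, h2⟩ | ⟨w, hw, hwx⟩)
    · simp only [mem_ofPred_eq] at h1 h2
      linarith
    · subst hwx
      have hza : g w = a := le_antisymm h1 w.2.2.1
      exact hw (hAZ hza)
    · have hzb : g z = b := le_antisymm z.2.2.2 h2
      exact Set.disjoint_left.1 hBZ hzb hz
    · rw [Subtype.val_injective hwx] at hw
      exact hw hz

/-- The set `E` has diameter at least `h`, and this is witnessed by two of its points. -/
def Big (h : ℝ) (E : Set X) : Prop := ∃ x ∈ E, ∃ y ∈ E, h ≤ dist x y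

/-- The limit of a sequence of sets along a nonprincipal ultrafilter. -/
def ulim (E : ℕ → Set X) : Set X :=
  {y | ∀ U ∈ 𝓝 y, ∀ᶠ n in (hyperfilter ℕ : Filter ℕ), (E n ∩ U).Nonempty}

lemma isClosed_ulim (E : ℕ → Set X) : IsClosed (ulim E) := by
  refine isClosed_of_closure_subset fun y hy U hU => ?_
  obtain ⟨V, hVU, hV, hyV⟩ := mem_nhds_iff.1 hU
  obtain ⟨z, hzV, hz⟩ := mem_closure_iff.1 hy V hV hyV
  exact (hz V (hV.mem_nhds hzV)).mono fun n hn => hn.mono (inter_subset_inter_right _ hVU)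

/-- Any sequence of points converges along the ultrafilter. -/
lemma exists_ultra_limit [CompactSpace X] (x : ℕ → X) : ∃ y, Tendsto x (hyperfilter ℕ : Filter ℕ) (𝓝 y) := by
  obtain ⟨y, _, hy⟩ := isCompact_univ.ultrafilter_le_nhds ((hyperfilter ℕ).map x) (by simp)
  exact ⟨y, hy⟩

lemma mem_ulim {E : ℕ → Set X} {x : ℕ → X} {y : X}
    (hx : ∀ᶠ n in (hyperfilter ℕ : Filter ℕ), x n ∈ E n)
    (hy : Tendsto x (hyperfilter ℕ : Filter ℕ) (𝓝 y)) : y ∈ ulim E := by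
  intro U hU
  filter_upwards [hx, hy hU] with n h1 h2 using ⟨x n, h1, h2⟩

lemma isPreconnected_ulim [CompactSpace X] {E : ℕ → Set X} (hE : ∀ n, IsPreconnected (E n)) :
    IsPreconnected (ulim E) := by
  rw [isPreconnected_iff_subset_of_fully_disjoint_closed (isClosed_ulim E)]
  intro u v hu hv huv hd
  by_contra! hcon
  obtain ⟨h1, h2⟩ := hcon
  obtain ⟨y, hy, hyu⟩ := not_subset.1 h1
  obtain ⟨z, hz, hzv⟩ := not_subset.1 h2
  have hyv : y ∈ v := (huv hy).resolve_left hyu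
  have hzu : z ∈ u := (huv hz).resolve_right hzv
  obtain ⟨U, V, hU, hV, huU, hvV, hUV⟩ := normal_separation hu hv hd
  have hev : ∀ᶠ n in (hyperfilter ℕ : Filter ℕ), ∃ x ∈ E n, x ∉ U ∪ V := by
    filter_upwards [hy V (hV.mem_nhds (hvV hyv)), hz U (hU.mem_nhds (huU hzu))] with n hnV hnU
    by_contra! hc
    obtain ⟨w, _, hw⟩ := hE n U V hU hV hc hnU hnV
    exact Set.disjoint_left.1 hUV hw.1 hw.2
  have hch : ∀ n, ∃ x : X, (∃ x ∈ E n, x ∉ U ∪ V) → x ∈ E n ∧ x ∉ U ∪ V := fun n => by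
    by_cases h : ∃ x ∈ E n, x ∉ U ∪ V
    · obtain ⟨x, hx⟩ := h
      exact ⟨x, fun _ => hx⟩
    · exact ⟨y, fun h' => absurd h' h⟩
  choose x hx using hch
  obtain ⟨w, hw⟩ := exists_ultra_limit x
  have hwE : w ∈ ulim E := mem_ulim (hev.mono fun n hn => (hx n hn).1) hw
  have hwUV : w ∈ (U ∪ V)ᶜ :=
    (hU.union hV).isClosed_compl.mem_of_tendsto hw (hev.mono fun n hn => (hx n hn).2)
  exact hwUV ((huv hwE).imp (fun h => huU h) fun h => hvV h)

/-- Closed binary relations that hold on almost all `E n` hold on the limit. -/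
lemma ulim_closed_rel {E : ℕ → Set X} {R : X → X → Prop} (hR : IsClosed {p : X × X | R p.1 p.2})
    (h : ∀ᶠ n in atTop, ∀ x ∈ E n, ∀ y ∈ E n, R x y) :
    ∀ x ∈ ulim E, ∀ y ∈ ulim E, R x y := by
  intro x hx y hy
  by_contra hxy
  have hmem : {p : X × X | R p.1 p.2}ᶜ ∈ 𝓝 (x, y) := hR.isOpen_compl.mem_nhds hxy
  rw [nhds_prod_eq] at hmem
  obtain ⟨U, hU, V, hV, hUV⟩ := mem_prod_iff.1 hmem
  have hat : (hyperfilter ℕ : Filter ℕ) ≤ atTop := Nat.hyperfilter_le_atTop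
  obtain ⟨n, hn, ⟨u, huE, huU⟩, ⟨v, hvE, hvV⟩⟩ :=
    ((Eventually.filter_mono hat h).and ((hx U hU).and (hy V hV))).exists
  exact hUV (mk_mem_prod huU hvV) (hn u huE v hvE)

lemma big_ulim [CompactSpace X] {E : ℕ → Set X} {h : ℝ} (hE : ∀ n, Big h (E n)) : Big h (ulim E) := by
  choose x hx y hy hxy using hE
  obtain ⟨a, ha⟩ := exists_ultra_limit x
  obtain ⟨b, hb⟩ := exists_ultra_limit y
  exact ⟨a, mem_ulim (Eventually.of_forall hx) ha, b, mem_ulim (Eventually.of_forall hy) hb,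
    ge_of_tendsto' (ha.dist hb) hxy⟩

/-! ### Expansive flows and unstable continua -/

/-- The family of iterates `n ↦ f n` of a homeomorphism, as an action of `ℤ` by continuous maps.
Replacing `f n` by `f (-n)` exchanges the past and the future. -/
structure IsFlow (f : ℤ → X → X) : Prop where
  zero : ∀ x, f 0 x = x
  add : ∀ m n x, f (m + n) x = f m (f n x)
  cont : ∀ n, Continuous (f n)

/-- `ε` is an expansivity constant of the flow. -/
def IsExp (f : ℤ → X → X) (ε : ℝ) : Prop :=
  ∀ x y, x ≠ y → ∃ n : ℤ, ε < dist (f n x) (f n y)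

lemma IsFlow.neg {f : ℤ → X → X} (hf : IsFlow f) : IsFlow fun n => f (-n) where
  zero x := by simpa using hf.zero x
  add m n x := by rw [← hf.add]; congr 1; ring
  cont n := hf.cont _

lemma IsExp.neg {f : ℤ → X → X} {ε : ℝ} (h : IsExp f ε) : IsExp (fun n => f (-n)) ε := by
  intro x y hxy
  obtain ⟨n, hn⟩ := h x y hxy
  exact ⟨-n, by simpa using hn⟩

lemma IsFlow.neg_apply {f : ℤ → X → X} (hf : IsFlow f) (n : ℤ) (x : X) : f (-n) (f n x) = x := by
  rw [← hf.add, neg_add_cancel, hf.zero]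

/-- An `ε`-unstable continuum: all its backward iterates have diameter at most `ε`. -/
structure Unst (f : ℤ → X → X) (ε : ℝ) (E : Set X) : Prop where
  compact : IsCompact E
  conn : IsPreconnected E
  small : ∀ n : ℕ, ∀ x ∈ E, ∀ y ∈ E, dist (f (-(n : ℤ)) x) (f (-(n : ℤ)) y) ≤ ε

/-- An unstable continuum of diameter at least `h` at distance at least `h` from `O`. -/
structure Good (f : ℤ → X → X) (ε h : ℝ) (O : Finset X) (E : Set X) : Prop where
  unst : Unst f ε E
  big : Big h E
  avoid : ∀ x ∈ E, ∀ o ∈ O, h ≤ dist x o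

/-- Among the `#O + 1` annuli of width `w` around `u`, one contains no point of `O`. -/
lemma exists_free_annulus (O : Finset X) (u : X) {w : ℝ} (hw : 0 < w) :
    ∃ j : ℕ, j ≤ O.card ∧ ∀ o ∈ O, dist u o < j * w ∨ (j + 1) * w ≤ dist u o := by
  classical
  have hcard : (O.image fun o => ⌊dist u o / w⌋₊).card < (Finset.range (O.card + 1)).card := by
    rw [Finset.card_range]
    exact Nat.lt_succ_of_le Finset.card_image_le
  obtain ⟨j, hj, hjO⟩ := Finset.exists_mem_notMem_of_card_lt_card hcard
  refine ⟨j, Nat.lt_succ_iff.1 (Finset.mem_range.1 hj), fun o ho => ?_⟩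
  by_contra! hcon
  refine hjO (Finset.mem_image.2 ⟨o, ho, ?_⟩)
  rw [Nat.floor_eq_iff (by positivity)]
  exact ⟨(le_div_iff₀ hw).2 hcon.1, (div_lt_iff₀ hw).2 hcon.2⟩

/-- An unstable continuum whose diameter exceeds `ε` at time `M`, iterated until this first happens,
contains a good continuum, cut out of an annulus that misses `O`. Minimality of the time `n` keeps
the intermediate iterates small, so that the piece is again unstable. -/
lemma Unst.exists_good {f : ℤ → X → X} (hf : IsFlow f) {ε : ℝ} (hε : 0 < ε) (O : Finset X)
    {E : Set X} (hE : Unst f ε E) {M : ℕ}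
    (hM : ∃ x ∈ E, ∃ y ∈ E, ε < dist (f M x) (f M y)) :
    ∃ n : ℕ, 0 < n ∧ n ≤ M ∧ ∃ E' ⊆ f n '' E, Good f ε (ε / (6 * (O.card + 1))) O E' := by
  classical
  have hex : ∃ n : ℕ, ∃ x ∈ E, ∃ y ∈ E, ε < dist (f n x) (f n y) := ⟨M, hM⟩
  obtain ⟨x, hx, y, hy, hxy⟩ := Nat.find_spec hex
  have hmin : ∀ m < Nat.find hex, ∀ x ∈ E, ∀ y ∈ E, dist (f m x) (f m y) ≤ ε := by
    intro m hm x hx y hy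
    by_contra! hc
    exact Nat.find_min hex hm ⟨x, hx, y, hy, hc⟩
  have hle : Nat.find hex ≤ M := Nat.find_min' hex hM
  set n := Nat.find hex
  have hn : 0 < n := by
    rcases Nat.eq_zero_or_pos n with h | h
    · rw [h] at hxy
      exact absurd hxy (not_lt.2 (by simpa using hE.small 0 x hx y hy))
    · exact h
  refine ⟨n, hn, hle, ?_⟩
  set k : ℝ := (O.card : ℝ) + 1 with hk
  have hk0 : 0 < k := by positivity
  set h := ε / (6 * k) with hh
  have hh0 : 0 < h := by positivity
  have h6 : 6 * k * h = ε := by rw [hh]; field_simp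
  obtain ⟨j, hj, hjO⟩ := exists_free_annulus O (f n x) (w := 3 * h) (by positivity)
  have hjk : (j : ℝ) + 1 ≤ k := by
    rw [hk]
    exact_mod_cast Nat.succ_le_succ hj
  have hjh : ((j : ℝ) + 1) * h ≤ k * h := mul_le_mul_of_nonneg_right hjk hh0.le
  have hj0 : 0 ≤ (j : ℝ) * h := by positivity
  obtain ⟨D, hDE, hDc, hDp, hDg, ⟨a, ha, hga⟩, ⟨b, hb, hgb⟩⟩ := exists_crossing
    (hE.compact.image (hf.cont n)) (hE.conn.image _ (hf.cont n).continuousOn)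
    (g := fun z => dist (f n x) z) (continuous_const.dist continuous_id)
    (a := 3 * j * h + h) (b := 3 * j * h + 2 * h) (by linarith)
    (mem_image_of_mem _ hx) (mem_image_of_mem _ hy) (by simp; nlinarith) (by nlinarith)
  refine ⟨D, hDE, ⟨hDc, hDp, ?_⟩, ⟨a, ha, b, hb, ?_⟩, ?_⟩
  · intro m u hu v hv
    rcases Nat.eq_zero_or_pos m with rfl | hm
    · have h1 := dist_triangle_left u v (f n x)
      have h2 := (hDg u hu).2
      have h3 := (hDg v hv).2
      simp only [Nat.cast_zero, neg_zero, hf.zero]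
      nlinarith
    obtain ⟨u', hu', rfl⟩ := hDE hu
    obtain ⟨v', hv', rfl⟩ := hDE hv
    rw [← hf.add, ← hf.add]
    rcases le_total m n with hmn | hmn
    · have : -(m : ℤ) + n = ((n - m : ℕ) : ℤ) := by omega
      rw [this]
      exact hmin _ (by omega) _ hu' _ hv'
    · have : -(m : ℤ) + n = -((m - n : ℕ) : ℤ) := by omega
      rw [this]
      exact hE.small _ _ hu' _ hv'
  · have h1 := dist_triangle (f n x) a b
    linarith
  · intro z hz o ho
    have h1 := dist_triangle (f n x) z o
    have h2 := dist_triangle_right (f n x) z o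
    have h3 := hDg z hz
    rcases hjO o ho with h4 | h4
    · linarith [h3.1]
    · linarith [h3.2]

/-- Points of an unstable continuum can be `ε`-separated only at positive times. -/
lemma Unst.exists_sep {f : ℤ → X → X} {ε : ℝ} {E : Set X} (hE : Unst f ε E) {x y : X}
    (hx : x ∈ E) (hy : y ∈ E) {n : ℤ} (hn : ε < dist (f n x) (f n y)) : 0 < n := by
  by_contra! hc
  have h1 := hE.small n.natAbs x hx y hy
  have h2 : -(n.natAbs : ℤ) = n := by omega
  rw [h2] at h1
  linarith

/-- Compactness makes expansivity uniform on pairs at distance at least `h`. -/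
lemma IsExp.uniform [CompactSpace X] {f : ℤ → X → X} (hf : IsFlow f) {ε : ℝ} (he : IsExp f ε)
    {h : ℝ} (hh : 0 < h) :
    ∃ N : ℕ, ∀ x y, h ≤ dist x y → ∃ n : ℤ, n ≤ N ∧ ε < dist (f n x) (f n y) := by
  have hc : IsCompact {p : X × X | h ≤ dist p.1 p.2} :=
    (isClosed_le continuous_const continuous_dist).isCompact
  let W : ℕ → Set (X × X) := fun N => {p | ∃ n : ℤ, n ≤ N ∧ ε < dist (f n p.1) (f n p.2)}
  have hopen : ∀ N, IsOpen (W N) := by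
    intro N
    have : W N = ⋃ n : ℤ, ⋃ _ : n ≤ N, {p : X × X | ε < dist (f n p.1) (f n p.2)} := by
      ext p
      simp [W]
    rw [this]
    exact isOpen_iUnion fun n => isOpen_iUnion fun _ => isOpen_lt continuous_const
      (((hf.cont n).comp continuous_fst).dist ((hf.cont n).comp continuous_snd))
  have hcov : {p : X × X | h ≤ dist p.1 p.2} ⊆ ⋃ N, W N := by
    rintro ⟨x, y⟩ hxy
    have hne : x ≠ y := by
      rintro rfl
      have : h ≤ dist x x := hxy
      rw [dist_self] at this
      linarith
    obtain ⟨n, hn⟩ := he x y hne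
    exact mem_iUnion.2 ⟨n.toNat, n, Int.self_le_toNat n, hn⟩
  have hmono : Monotone W := by
    rintro a b hab p ⟨n, hn, hn'⟩
    exact ⟨n, hn.trans (by exact_mod_cast hab), hn'⟩
  obtain ⟨N, hN⟩ := hc.elim_directed_cover W hopen hcov hmono.directed_le
  exact ⟨N, fun x y hxy => hN (show (x, y) ∈ {p : X × X | h ≤ dist p.1 p.2} from hxy)⟩

/-- Points away from an invariant finite set stay away from it for a bounded time. -/
lemma exists_stay_away [CompactSpace X] {f : ℤ → X → X} (hf : IsFlow f) {O : Finset X}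
    (hO : ∀ o ∈ O, ∀ n, f n o ∈ O) {h : ℝ} (hh : 0 < h) (N : ℕ) :
    ∃ r > 0, ∀ x, (∀ o ∈ O, h ≤ dist x o) → ∀ i : ℕ, i ≤ N → ∀ o ∈ O, r ≤ dist (f i x) o := by
  induction N with
  | zero =>
    refine ⟨h, hh, fun x hx i hi o ho => ?_⟩
    obtain rfl : i = 0 := by omega
    simpa [hf.zero] using hx o ho
  | succ N ih =>
    obtain ⟨r, hr, H⟩ := ih
    have huc := CompactSpace.uniformContinuous_of_continuous (hf.cont (-((N + 1 : ℕ) : ℤ)))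
    obtain ⟨δ, hδ, hδ'⟩ := Metric.uniformContinuous_iff.1 huc h hh
    refine ⟨min r δ, lt_min hr hδ, fun x hx i hi o ho => ?_⟩
    rcases Nat.lt_or_ge N i with hi' | hi'
    · obtain rfl : i = N + 1 := by omega
      refine (min_le_right _ _).trans ?_
      by_contra! hc
      have h1 := hδ' hc
      rw [hf.neg_apply] at h1
      exact absurd h1 (not_lt.2 (hx _ (hO o ho _)))
    · exact (min_le_left _ _).trans (H x hx i hi' o ho)

lemma IsFlow.periodic {f : ℤ → X → X} (hf : IsFlow f) {k : ℤ} {p : X} (hp : f k p = p) (j : ℤ) :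
    f (k * j) p = p := by
  induction j using Int.induction_on with
  | zero => simpa using hf.zero p
  | succ j ih => rw [mul_add, mul_one, hf.add, hp, ih]
  | pred j ih =>
    have h1 : f (-k) p = p := by
      conv_lhs => rw [← hp]
      exact hf.neg_apply k p
    rw [mul_sub, mul_one, sub_eq_add_neg, hf.add, h1, ih]

/-- An unstable continuum contains at most one periodic point: two of them stay `ε`-close in the
past, hence by periodicity for all time. -/
lemma Unst.periodic_unique {f : ℤ → X → X} (hf : IsFlow f) {ε : ℝ} (he : IsExp f ε) {E : Set X}
    (hE : Unst f ε E) {p q : X} (hp : p ∈ E) (hq : q ∈ E) {k l : ℕ} (hk : 0 < k) (hl : 0 < l)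
    (hpk : f k p = p) (hql : f l q = q) : p = q := by
  by_contra hne
  obtain ⟨n, hn⟩ := he p q hne
  have hp' : f ((k * l * n.natAbs : ℕ) : ℤ) p = p := by
    rw [mul_assoc, Nat.cast_mul]
    exact hf.periodic hpk _
  have hq' : f ((k * l * n.natAbs : ℕ) : ℤ) q = q := by
    rw [mul_comm k l, mul_assoc, Nat.cast_mul]
    exact hf.periodic hql _
  have h1 := hE.exists_sep (n := n - ((k * l * n.natAbs : ℕ) : ℤ)) hp hq (by
    rw [← hp', ← hq', ← hf.add, ← hf.add, sub_add_cancel]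
    exact hn)
  have h2 : n.natAbs ≤ k * l * n.natAbs := Nat.le_mul_of_pos_left _ (Nat.mul_pos hk hl)
  omega

lemma Unst.mono {f : ℤ → X → X} {ε : ℝ} {E D : Set X} (hE : Unst f ε E) (hDE : D ⊆ E)
    (hDc : IsCompact D) (hDp : IsPreconnected D) : Unst f ε D :=
  ⟨hDc, hDp, fun n x hx y hy => hE.small n x (hDE hx) y (hDE hy)⟩

/-- A limit of continua that are unstable for longer and longer times is unstable. -/
lemma unst_ulim [CompactSpace X] {f : ℤ → X → X} (hf : IsFlow f) {ε : ℝ} {E : ℕ → Set X}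
    (hE : ∀ n, IsPreconnected (E n))
    (hs : ∀ n i : ℕ, i ≤ n → ∀ x ∈ E n, ∀ y ∈ E n,
      dist (f (-(i : ℤ)) x) (f (-(i : ℤ)) y) ≤ ε) : Unst f ε (ulim E) := by
  refine ⟨(isClosed_ulim E).isCompact, isPreconnected_ulim hE, fun i => ?_⟩
  refine ulim_closed_rel (R := fun x y => dist (f (-(i : ℤ)) x) (f (-(i : ℤ)) y) ≤ ε) ?_ ?_
  · exact isClosed_le (((hf.cont _).comp continuous_fst).dist ((hf.cont _).comp continuous_snd))
      continuous_const
  · filter_upwards [eventually_ge_atTop i] with n hn using hs n i hn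

/-! ### Orbits that avoid a periodic orbit -/

/-- `N` bounds the waiting time after which a good continuum has grown enough to be cut again. -/
lemma Good.step {f : ℤ → X → X} (hf : IsFlow f) {ε : ℝ} (hε : 0 < ε) {O : Finset X} {N : ℕ}
    (hN : ∀ x y, ε / (6 * (O.card + 1)) ≤ dist x y →
      ∃ n : ℤ, n ≤ N ∧ ε < dist (f n x) (f n y))
    {E : Set X} (hE : Good f ε (ε / (6 * (O.card + 1))) O E) :
    ∃ n : ℕ, 0 < n ∧ n ≤ N ∧ ∃ E' ⊆ f n '' E, Good f ε (ε / (6 * (O.card + 1))) O E' := by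
  obtain ⟨x, hx, y, hy, hxy⟩ := hE.big
  obtain ⟨n, hnN, hn⟩ := hN x y hxy
  have hpos := hE.unst.exists_sep hx hy hn
  lift n to ℕ using hpos.le
  obtain ⟨m, hm, hmn, H⟩ := hE.unst.exists_good hf hε O ⟨x, hx, y, hy, hn⟩
  exact ⟨m, hm, hmn.trans (by exact_mod_cast hnN), H⟩

/-- A good continuum contains a point whose forward orbit stays `r`-away from `O`. -/
lemma Good.exists_forward [CompactSpace X] {f : ℤ → X → X} (hf : IsFlow f) {ε : ℝ} (hε : 0 < ε)
    {O : Finset X} {N : ℕ}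
    (hN : ∀ x y, ε / (6 * (O.card + 1)) ≤ dist x y →
      ∃ n : ℤ, n ≤ N ∧ ε < dist (f n x) (f n y)) {r : ℝ}
    (hr : ∀ x, (∀ o ∈ O, ε / (6 * (O.card + 1)) ≤ dist x o) →
      ∀ i : ℕ, i ≤ N → ∀ o ∈ O, r ≤ dist (f i x) o)
    {E : Set X} (hE : Good f ε (ε / (6 * (O.card + 1))) O E) :
    ∃ x ∈ E, ∀ i : ℕ, ∀ o ∈ O, r ≤ dist (f i x) o := by
  have key : ∀ n : ℕ, ∀ E, Good f ε (ε / (6 * (O.card + 1))) O E →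
      ∃ x ∈ E, ∀ i : ℕ, i ≤ n → ∀ o ∈ O, r ≤ dist (f i x) o := by
    intro n
    induction n using Nat.strong_induction_on with
    | _ n ih =>
      intro E hE
      rcases Nat.eq_zero_or_pos n with rfl | hn
      · obtain ⟨x, hx, -⟩ := hE.big
        exact ⟨x, hx, fun i hi => hr x (hE.avoid x hx) i (by omega)⟩
      obtain ⟨m, hm, hmN, E', hE', hg⟩ := hE.step hf hε hN
      obtain ⟨x', hx', H⟩ := ih (n - m) (by omega) E' hg
      obtain ⟨x, hx, rfl⟩ := hE' hx'
      refine ⟨x, hx, fun i hi => ?_⟩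
      rcases le_total i m with him | him
      · exact hr x (hE.avoid x hx) i (him.trans hmN)
      · have h1 := H (i - m) (by omega)
        rwa [← hf.add, Nat.cast_sub him, sub_add_cancel] at h1
  choose x hx hxr using fun n => key n E hE
  obtain ⟨y, hy⟩ := exists_ultra_limit x
  refine ⟨y, hE.unst.compact.isClosed.mem_of_tendsto hy (Eventually.of_forall hx),
    fun i o ho => ?_⟩
  refine ge_of_tendsto ((((hf.cont i).tendsto y).comp hy).dist tendsto_const_nhds) ?_
  have hat : (hyperfilter ℕ : Filter ℕ) ≤ atTop := Nat.hyperfilter_le_atTop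
  filter_upwards [hat (eventually_ge_atTop i)] with n hn using hxr n i hn o ho

/-- There are good continua whose backward iterates avoid the `r`-neighbourhood of `O` for
arbitrarily long. -/
lemma Good.exists_backward {f : ℤ → X → X} (hf : IsFlow f) {ε : ℝ} (hε : 0 < ε)
    {O : Finset X} {N : ℕ}
    (hN : ∀ x y, ε / (6 * (O.card + 1)) ≤ dist x y →
      ∃ n : ℤ, n ≤ N ∧ ε < dist (f n x) (f n y)) {r : ℝ}
    (hr : ∀ x, (∀ o ∈ O, ε / (6 * (O.card + 1)) ≤ dist x o) →
      ∀ i : ℕ, i ≤ N → ∀ o ∈ O, r ≤ dist (f i x) o)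
    {E : Set X} (hE : Good f ε (ε / (6 * (O.card + 1))) O E) (n : ℕ) :
    ∃ E', Good f ε (ε / (6 * (O.card + 1))) O E' ∧
      ∀ i : ℕ, i ≤ n → ∀ x ∈ E', ∀ o ∈ O, r ≤ dist (f (-(i : ℤ)) x) o := by
  induction n with
  | zero =>
    refine ⟨E, hE, fun i hi x hx => ?_⟩
    obtain rfl : i = 0 := by omega
    simpa using hr x (hE.avoid x hx) 0 (Nat.zero_le _)
  | succ n ih =>
    obtain ⟨D, hD, H⟩ := ih
    obtain ⟨m, hm, hmN, E', hE', hg⟩ := hD.step hf hε hN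
    refine ⟨E', hg, fun i hi x' hx' => ?_⟩
    obtain ⟨x, hx, rfl⟩ := hE' hx'
    rw [← hf.add]
    rcases le_total i m with him | him
    · have : -(i : ℤ) + m = ((m - i : ℕ) : ℤ) := by omega
      rw [this]
      exact hr x (hD.avoid x hx) _ (by omega)
    · have : -(i : ℤ) + m = -((i - m : ℕ) : ℤ) := by omega
      rw [this]
      exact H _ (by omega) x hx

/-- The orbit of a periodic point as a finite invariant set. -/
lemma IsFlow.exists_orbit {f : ℤ → X → X} (hf : IsFlow f) {k : ℕ} (hk : 0 < k) {p : X}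
    (hp : f k p = p) : ∃ O : Finset X, p ∈ O ∧ ∀ o ∈ O, ∀ n, f n o ∈ O := by
  classical
  refine ⟨(Finset.range k).image fun i : ℕ => f i p, ?_, ?_⟩
  · exact Finset.mem_image.2 ⟨0, by simpa using hk, by simpa using hf.zero p⟩
  · intro o ho n
    obtain ⟨i, -, rfl⟩ := Finset.mem_image.1 ho
    have hk' : (0 : ℤ) < k := by exact_mod_cast hk
    have h0 := Int.emod_nonneg (n + i) hk'.ne'
    have h1 := Int.emod_lt_of_pos (n + i) hk'
    refine Finset.mem_image.2 ⟨((n + i) % k).toNat, ?_, ?_⟩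
    · rw [Finset.mem_range]
      omega
    · rw [Int.toNat_of_nonneg h0, ← hf.add]
      conv_rhs => rw [← Int.emod_add_mul_ediv (n + i) k, hf.add, hf.periodic hp]

/-- If every closed invariant set missing the periodic point `p` is finite, there are no
nondegenerate unstable continua. -/
theorem no_unstable [CompactSpace X] {f : ℤ → X → X} (hf : IsFlow f) {ε : ℝ} (hε : 0 < ε)
    (he : IsExp f ε) {k : ℕ} (hk : 0 < k) {p : X} (hp : f k p = p)
    (hfin : ∀ A : Set X, IsClosed A → f 1 '' A = A → p ∉ A → A.Finite)
    {D : Set X} (hD : Unst f ε D) {a b : X} (ha : a ∈ D) (hb : b ∈ D) (hab : a ≠ b) : False := by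
  obtain ⟨O, hpO, hO⟩ := hf.exists_orbit hk hp
  have hgood : ∀ {D : Set X}, Unst f ε D → ∀ {a b : X}, a ∈ D → b ∈ D → a ≠ b →
      ∃ n : ℕ, ∃ E ⊆ f n '' D, Good f ε (ε / (6 * (O.card + 1))) O E := by
    intro D hD a b ha hb hab
    obtain ⟨n, hn⟩ := he a b hab
    have hpos := hD.exists_sep ha hb hn
    lift n to ℕ using hpos.le
    obtain ⟨m, -, -, H⟩ := hD.exists_good hf hε O ⟨a, ha, b, hb, hn⟩
    exact ⟨m, H⟩
  have hh : 0 < ε / (6 * ((O.card : ℝ) + 1)) := by positivity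
  obtain ⟨N, hN⟩ := he.uniform hf hh
  obtain ⟨r, hr0, hr⟩ := exists_stay_away hf hO hh N
  obtain ⟨-, E₀, -, hE₀⟩ := hgood hD ha hb hab
  choose F hF hFback using hE₀.exists_backward hf hε hN hr
  -- `E` is an unstable continuum all of whose backward iterates avoid a neighbourhood of `O`.
  set E := ulim F
  have hE : Unst f ε E :=
    unst_ulim hf (fun n => (hF n).unst.conn) fun n i _ => (hF n).unst.small i
  have hEback : ∀ i : ℕ, ∀ x ∈ E, ∀ o ∈ O, r ≤ dist (f (-(i : ℤ)) x) o := by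
    intro i x hx o ho
    refine ulim_closed_rel (E := F) (R := fun x _ => r ≤ dist (f (-(i : ℤ)) x) o) ?_ ?_ x hx x hx
    · exact isClosed_le continuous_const
        (((hf.cont _).comp continuous_fst).dist continuous_const)
    · filter_upwards [eventually_ge_atTop i] with n hn x hx _ _ using hFback n i hn x hx o ho
  obtain ⟨u, hu, v, hv, huv⟩ : Big _ E := big_ulim fun n => (hF n).big
  have huv' : u ≠ v := by
    rintro rfl
    rw [dist_self] at huv
    linarith
  -- Since `E` has at most one periodic point, some nondegenerate subcontinuum has none.
  obtain ⟨E₁, hE₁E, hE₁, s, hs, t, ht, hst, hnoper⟩ : ∃ E₁ ⊆ E, Unst f ε E₁ ∧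
      ∃ s ∈ E₁, ∃ t ∈ E₁, s ≠ t ∧ ∀ q ∈ E₁, ∀ l : ℕ, 0 < l → f l q ≠ q := by
    by_cases hq : ∃ q ∈ E, ∃ l : ℕ, 0 < l ∧ f l q = q
    · obtain ⟨q, hqE, l, hl, hql⟩ := hq
      obtain ⟨z, hz, hzq⟩ : ∃ z ∈ E, z ≠ q := by
        by_cases h : u = q
        · exact ⟨v, hv, fun h' => huv' (h.trans h'.symm)⟩
        · exact ⟨u, hu, h⟩
      have hd : 0 < dist q z := dist_pos.2 hzq.symm
      obtain ⟨E₁, hsub, hc, hpc, hg, ⟨s, hs, hgs⟩, ⟨t, ht, hgt⟩⟩ := exists_crossing hE.compact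
        hE.conn (g := fun x => dist q x) (continuous_const.dist continuous_id)
        (a := dist q z / 2) (b := dist q z) (by linarith) hqE hz (by simp only [dist_self]; linarith) le_rfl
      refine ⟨E₁, hsub, hE.mono hsub hc hpc, s, hs, t, ht, ?_, ?_⟩
      · rintro rfl
        linarith
      · intro q' hq' l' hl' hql'
        have := hE.periodic_unique hf he hqE (hsub hq') hl hl' hql hql'
        subst this
        have := (hg q hq').1
        simp only [dist_self] at this
        linarith
    · push Not at hq
      exact ⟨E, Subset.rfl, hE, u, hu, v, hv, huv', hq⟩
  obtain ⟨n, E₂, hE₂, hgd⟩ := hgood hE₁ hs ht hst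
  obtain ⟨x, hx, hxf⟩ := hgd.exists_forward hf hε hN hr
  obtain ⟨y, hy, rfl⟩ := hE₂ hx
  -- The orbit of `y` accumulates neither in the past nor in the future at `p`.
  have hAfin : (closure (range fun m : ℤ => f m y)).Finite := by
    refine hfin _ isClosed_closure ?_ ?_
    · rw [image_closure_of_isCompact isClosed_closure.isCompact (hf.cont 1).continuousOn]
      congr 1
      ext z
      constructor
      · rintro ⟨_, ⟨m, rfl⟩, rfl⟩
        exact ⟨1 + m, hf.add _ _ _⟩
      · rintro ⟨m, rfl⟩
        refine ⟨_, ⟨m - 1, rfl⟩, ?_⟩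
        simp only
        rw [← hf.add]
        congr 1
        ring
    · intro hpA
      have hcl : IsClosed ({z | r ≤ dist z p} ∪ (fun i : ℕ => f i y) '' (Set.Iio n)) :=
        (isClosed_le continuous_const (continuous_id.dist continuous_const)).union
          ((Set.finite_Iio n).image _).isClosed
      have hsub : (range fun m : ℤ => f m y) ⊆
          {z | r ≤ dist z p} ∪ (fun i : ℕ => f i y) '' (Set.Iio n) := by
        rintro _ ⟨m, rfl⟩
        rcases le_total m 0 with hm | hm
        · have h1 := hEback m.natAbs y (hE₁E hy) p hpO
          have h2 : -(m.natAbs : ℤ) = m := by omega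
          rw [h2] at h1
          exact Or.inl h1
        · lift m to ℕ using hm
          rcases Nat.lt_or_ge m n with hmn | hmn
          · exact Or.inr ⟨m, hmn, rfl⟩
          · have h1 := hxf (m - n) p hpO
            rw [← hf.add, Nat.cast_sub hmn, sub_add_cancel] at h1
            exact Or.inl h1
      rcases closure_minimal hsub hcl hpA with h | ⟨i, -, hi⟩
      · have h' : r ≤ dist p p := h
        rw [dist_self] at h'
        linarith
      · refine hnoper y hy k hk ?_
        have h1 : y = f (-(i : ℤ)) p := by
          rw [← hi]
          exact (hf.neg_apply _ _).symm
        rw [h1, ← hf.add, add_comm, hf.add, hp]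
  obtain ⟨i, j, hij, hfij⟩ := hAfin.exists_lt_map_eq_of_forall_mem (f := fun i : ℕ => f i y)
    fun i => subset_closure (mem_range_self (i : ℤ))
  refine hnoper y hy (j - i) (by omega) ?_
  have h1 : ((j - i : ℕ) : ℤ) = -(i : ℤ) + j := by omega
  have h2 : f i y = f j y := hfij
  rw [h1, hf.add, ← h2, hf.neg_apply]

/-! ### From an arbitrary continuum to an unstable one -/

lemma exists_delta [CompactSpace X] {f : ℤ → X → X} (hf : IsFlow f) {ε : ℝ} (hε : 0 < ε) (n : ℕ) :
    ∃ δ > 0, ∀ i : ℕ, i ≤ n → ∀ x y, dist x y < δ → dist (f i x) (f i y) < ε := by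
  induction n with
  | zero =>
    refine ⟨ε, hε, fun i hi x y hxy => ?_⟩
    obtain rfl : i = 0 := by omega
    simpa [hf.zero] using hxy
  | succ n ih =>
    obtain ⟨δ, hδ, H⟩ := ih
    obtain ⟨δ', hδ', H'⟩ := Metric.uniformContinuous_iff.1
      (CompactSpace.uniformContinuous_of_continuous (hf.cont ((n + 1 : ℕ) : ℤ))) ε hε
    refine ⟨min δ δ', lt_min hδ hδ', fun i hi x y hxy => ?_⟩
    rcases Nat.lt_or_ge n i with h | h
    · obtain rfl : i = n + 1 := by omega
      exact H' (hxy.trans_le (min_le_right _ _))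
    · exact H i h x y (hxy.trans_le (min_le_left _ _))

/-- If every closed invariant set missing the periodic point `p` is finite, there are no
nondegenerate continua at all. Either some nondegenerate continuum is stable, that is, unstable for
the inverse flow, or small subcontinua all grow in the future, and the continua reached just before
they exceed diameter `ε` accumulate on an unstable one. -/
theorem no_continuum [CompactSpace X] {f : ℤ → X → X} (hf : IsFlow f) {ε : ℝ} (hε : 0 < ε)
    (he : IsExp f ε) {k : ℕ} (hk : 0 < k) {p : X} (hp : f k p = p)
    (hfin : ∀ A : Set X, IsClosed A → f 1 '' A = A → p ∉ A → A.Finite)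
    {C : Set X} (hC : IsCompact C) (hCp : IsPreconnected C) {a b : X} (ha : a ∈ C) (hb : b ∈ C)
    (hab : a ≠ b) : False := by
  classical
  by_cases hst : ∃ D, Unst (fun n => f (-n)) ε D ∧ ∃ x ∈ D, ∃ y ∈ D, x ≠ y
  · obtain ⟨D, hD, x, hx, y, hy, hxy⟩ := hst
    refine no_unstable hf.neg hε he.neg hk (p := p) ?_ ?_ hD hx hy hxy
    · have := hf.periodic hp (-1)
      simpa using this
    · intro A hA hinv hpA
      refine hfin A hA ?_ hpA
      conv_lhs => rw [← hinv]
      rw [image_image]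
      simp [← hf.add, hf.zero]
  push Not at hst
  obtain ⟨ε₀, hε₀, hε₀'⟩ := exists_delta hf hε 1
  have key : ∀ n : ℕ, ∃ E : Set X, IsPreconnected E ∧ Big ε₀ E ∧ ∀ i : ℕ, i ≤ n →
      ∀ x ∈ E, ∀ y ∈ E, dist (f (-(i : ℤ)) x) (f (-(i : ℤ)) y) ≤ ε := by
    intro n
    obtain ⟨δ, hδ, Hδ⟩ := exists_delta hf hε n
    have hd : 0 < dist a b := dist_pos.2 hab
    obtain ⟨D, -, hDc, hDp, hDg, ⟨u, hu, hgu⟩, ⟨v, hv, hgv⟩⟩ := exists_crossing hC hCp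
      (g := fun x => dist a x) (continuous_const.dist continuous_id)
      (a := 0) (b := min (δ / 3) (dist a b)) (lt_min (by positivity) hd) ha hb (by simp)
      (min_le_right _ _)
    have huv : u ≠ v := by
      rintro rfl
      exact (lt_min (by positivity) hd : 0 < min (δ / 3) (dist a b)).ne (hgu.symm.trans hgv)
    have hsmall : ∀ i : ℕ, i ≤ n → ∀ x ∈ D, ∀ y ∈ D, dist (f i x) (f i y) ≤ ε := by
      intro i hi x hx y hy
      refine (Hδ i hi x y ?_).le
      have h1 := dist_triangle_left x y a
      have h2 := (hDg x hx).2.trans (min_le_left _ _)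
      have h3 := (hDg y hy).2.trans (min_le_left _ _)
      linarith
    have hex : ∃ m : ℕ, ∃ x ∈ D, ∃ y ∈ D, ε < dist (f m x) (f m y) := by
      by_contra! hcon
      refine huv (hst D ⟨hDc, hDp, fun m x hx y hy => ?_⟩ u hu v hv)
      simpa using hcon m x hx y hy
    obtain ⟨x, hx, y, hy, hxy⟩ := Nat.find_spec hex
    have hmin : ∀ m < Nat.find hex, ∀ x ∈ D, ∀ y ∈ D, dist (f m x) (f m y) ≤ ε := by
      intro m hm x hx y hy
      by_contra! hc
      exact Nat.find_min hex hm ⟨x, hx, y, hy, hc⟩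
    set m := Nat.find hex
    have hnm : n < m := by
      by_contra! hc
      exact absurd hxy (not_lt.2 (hsmall m hc x hx y hy))
    refine ⟨f ((m - 1 : ℕ) : ℤ) '' D, hDp.image _ (hf.cont _).continuousOn,
      ⟨_, mem_image_of_mem _ hx, _, mem_image_of_mem _ hy, ?_⟩, ?_⟩
    · by_contra! hc
      have h1 := hε₀' 1 le_rfl _ _ hc
      have h2 : ((1 : ℕ) : ℤ) + ((m - 1 : ℕ) : ℤ) = m := by omega
      rw [← hf.add, ← hf.add, h2] at h1
      linarith
    · rintro i hi _ ⟨x', hx', rfl⟩ _ ⟨y', hy', rfl⟩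
      have h2 : -(i : ℤ) + ((m - 1 : ℕ) : ℤ) = ((m - 1 - i : ℕ) : ℤ) := by omega
      rw [← hf.add, ← hf.add, h2]
      exact hmin _ (by omega) _ hx' _ hy'
  choose E hEp hEb hEs using key
  obtain ⟨x, hx, y, hy, hxy⟩ := big_ulim hEb
  refine no_unstable hf hε he hk hp hfin (unst_ulim hf hEp hEs) hx hy ?_
  rintro rfl
  rw [dist_self] at hxy
  linarith

end ExpansiveCAM

/-- A locally connected compact metric space supports no expansive
chaotic almost minimal `ℤ`-action. -/
theorem statement10 {X : Type*} [MetricSpace X] [CompactSpace X]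
    [LocallyConnectedSpace X] (T : X ≃ₜ X)
    (hexp : ∃ ε : ℝ, 0 < ε ∧
      ∀ x y : X, x ≠ y → ∃ n : ℤ, ε < dist ((T ^ n) x) ((T ^ n) y)) :
    ¬ IsCAMZ T := by
  rintro ⟨hfree, -, hdense, hmin⟩
  obtain ⟨ε, hε, he⟩ := hexp
  have hflow : ExpansiveCAM.IsFlow fun n : ℤ => ⇑(T ^ n) :=
    { zero := fun x => by rw [zpow_zero]; rfl
      add := fun m n x => by rw [zpow_add]; rfl
      cont := fun n => (T ^ n).continuous }
  -- A finite space has a finite group of homeomorphisms, so some power of `T` would be trivial.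
  have hinf : ¬ Finite X := by
    intro hX
    have : Finite (X ≃ₜ X) :=
      Finite.of_injective (fun g : X ≃ₜ X => (g : X → X)) DFunLike.coe_injective
    obtain ⟨n, hn, hT⟩ := isOfFinOrder_iff_pow_eq_one.1 (isOfFinOrder_of_finite T)
    exact hfree n (by exact_mod_cast hn.ne') (by rw [zpow_natCast]; exact hT)
  have hne : Nonempty X := by
    by_contra h
    rw [not_nonempty_iff] at h
    exact hinf inferInstance
  obtain ⟨p, k, hk, hp⟩ := hdense.nonempty
  -- A locally connected compact space has finitely many components, so one is nondegenerate.
  obtain ⟨a, b, hb, hab⟩ : ∃ a b : X, b ∈ connectedComponent a ∧ a ≠ b := by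
    by_contra! hcon
    refine hinf (Finite.of_injective (ConnectedComponents.mk : X → ConnectedComponents X) ?_)
    intro x y hxy
    exact (hcon y x (ConnectedComponents.coe_eq_coe'.1 hxy)).symm
  refine ExpansiveCAM.no_continuum hflow hε he hk (p := p) ?_ ?_
    isClosed_connectedComponent.isCompact isPreconnected_connectedComponent
    mem_connectedComponent hb hab
  · simp only [zpow_natCast]
    exact hp
  · intro A hA hinv hpA
    simp only [zpow_one] at hinv
    exact hmin A hA hinv fun h => hpA (h ▸ mem_univ p)
end

section
/- Let X be an infinite compact metric space and T: X → X an expansive homeomorphism. Then X contains an aperiodic point, i.e., there exists x ∈ X such that T^n x ≠ x for all nonzero n ∈ ℤ. -/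
/-!
Suppose every point is periodic. An infinite compact space has a non-isolated point `x`; let
`S = T ^ k` with `k > 0` fix `x`. Expansivity yields `δ > 0` such that `x` is the only point whose
whole `S`-orbit stays within `δ` of `x` (`exists_isolating_radius`).

Points `y ≠ x` very close to `x` stay `δ`-close to `x` for a long time, but must eventually leave
the ball, in forward time because they are periodic. Their positions at the first exit time
accumulate at a point `z` with `δ ≤ dist z x` whose entire strict backward orbit stays within `δ`
of `x` (`exists_backward_trapped`). Such a `z` cannot be periodic: its full orbit would be within
`δ` of `x`, forcing `z = x`.
-/

open Set MeasureTheory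

theorem zpow_add_app {X : Type*} [TopologicalSpace X] (T : X ≃ₜ X) (m n : ℤ) (x : X) :
    (T ^ (m + n)) x = (T ^ m) ((T ^ n) x) := by
  rw [zpow_add]; rfl

theorem zpow_mul_app_of_fixed {X : Type*} [TopologicalSpace X] (T : X ≃ₜ X) {m : ℤ} {x : X}
    (h : (T ^ m) x = x) (q : ℤ) : (T ^ (m * q)) x = x := by
  induction q with
  | zero => rw [mul_zero, zpow_zero]; rfl
  | succ i ih => rw [mul_add, mul_one, zpow_add_app, h, ih]
  | pred i ih =>
    have h' : (T ^ (m * (-(i : ℤ) - 1) + m)) x = x := by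
      have he : m * (-(i : ℤ) - 1) + m = m * -(i : ℤ) := by ring
      rw [he, ih]
    rwa [zpow_add_app, h] at h'

/-- If `T ^ k` fixes `x`, then near `x` expansivity passes from `T` to `T ^ k`, with a smaller
constant `δ`. -/
theorem exists_isolating_radius {X : Type*} [MetricSpace X] (T : X ≃ₜ X) {ε : ℝ} (hε : 0 < ε)
    (hexp : ∀ x y : X, x ≠ y → ∃ n : ℤ, ε < dist ((T ^ n) x) ((T ^ n) y))
    {k : ℤ} (hk : 0 < k) {x : X} (hx : (T ^ k) x = x) :
    ∃ δ : ℝ, 0 < δ ∧ ∀ w : X, (∀ n : ℤ, dist (((T ^ k) ^ n) w) x ≤ δ) → w = x := by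
  have hev : ∀ᶠ w in nhds x, ∀ r ∈ Finset.Ico (0 : ℤ) k,
      dist ((T ^ r) w) ((T ^ r) x) < ε := by
    rw [Filter.eventually_all_finset]
    intro r _
    exact (T ^ r).continuous.continuousAt.eventually (Metric.ball_mem_nhds _ hε)
  obtain ⟨η, hη, hball⟩ := Metric.eventually_nhds_iff.1 hev
  refine ⟨η / 2, by positivity, fun w hw => ?_⟩
  by_contra hne
  obtain ⟨n, hn⟩ := hexp w x hne
  have hr : n % k ∈ Finset.Ico (0 : ℤ) k :=
    Finset.mem_Ico.2 ⟨Int.emod_nonneg _ hk.ne', Int.emod_lt_of_pos _ hk⟩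
  have h1 := hball (lt_of_le_of_lt (hw (n / k)) (by linarith)) (n % k) hr
  have h2 : n = n % k + k * (n / k) := (Int.emod_add_mul_ediv n k).symm
  rw [h2, zpow_add_app, zpow_add_app, zpow_mul_app_of_fixed T hx, zpow_mul] at hn
  exact lt_asymm h1 hn

/-- If `x` is a non-isolated fixed point and every other point is outside the closed `δ`-ball
around `x` at some time `m ≥ 0`, then first exit positions accumulate at a point `z` outside the open ball whose strict backward
orbit lies in the closed ball. -/
theorem exists_backward_trapped {X : Type*} [MetricSpace X] [CompactSpace X] (S : X ≃ₜ X)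
    {x : X} (hx : S x = x) [(nhdsWithin x {x}ᶜ).NeBot] {δ : ℝ} (hδ : 0 < δ)
    (hexit : ∀ y : X, y ≠ x → ∃ m : ℕ, δ < dist ((S ^ (m : ℤ)) y) x) :
    ∃ z : X, δ ≤ dist z x ∧ ∀ i : ℕ, dist ((S ^ (-(i + 1 : ℕ) : ℤ)) z) x ≤ δ := by
  have hxn (n : ℤ) : (S ^ n) x = x := by
    have := zpow_mul_app_of_fixed S (m := 1) (by rwa [zpow_one]) n
    rwa [one_mul] at this
  let K : ℕ → Set X := fun j =>
    {z | δ ≤ dist z x ∧ ∀ i : ℕ, i < j → dist ((S ^ (-(i + 1 : ℕ) : ℤ)) z) x ≤ δ}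
  have hclosed (j : ℕ) : IsClosed (K j) := by
    have : K j = {z | δ ≤ dist z x} ∩
        ⋂ i : ℕ, ⋂ _ : i < j, {z | dist ((S ^ (-(i + 1 : ℕ) : ℤ)) z) x ≤ δ} := by
      ext z; simp [K]
    rw [this]
    refine (isClosed_le continuous_const (by fun_prop)).inter
      (isClosed_iInter fun i => isClosed_iInter fun _ => isClosed_le ?_ continuous_const)
    exact (S ^ (-(i + 1 : ℕ) : ℤ)).continuous.dist continuous_const
  have hnonempty (j : ℕ) : (K j).Nonempty := by
    have hev : ∀ᶠ y in nhds x, ∀ r ∈ Finset.range (j + 1), dist ((S ^ (r : ℤ)) y) x < δ := by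
      rw [Filter.eventually_all_finset]
      intro r _
      have hc := (S ^ (r : ℤ)).continuous.continuousAt (x := x)
      rw [ContinuousAt, hxn] at hc
      exact hc.eventually (Metric.ball_mem_nhds _ hδ)
    obtain ⟨y, hy, hyx⟩ := ((hev.filter_mono nhdsWithin_le_nhds).and
      (self_mem_nhdsWithin : {x}ᶜ ∈ nhdsWithin x {x}ᶜ)).exists
    classical
    have hex := hexit y hyx
    -- the first exit time from the closed `δ`-ball
    let m := Nat.find hex
    have hm : δ < dist ((S ^ (m : ℤ)) y) x := Nat.find_spec hex
    have hjm : j < m := by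
      by_contra hle
      exact lt_asymm hm (hy m (Finset.mem_range.2 (by omega)))
    refine ⟨(S ^ (m : ℤ)) y, hm.le, fun i hi => ?_⟩
    rw [← zpow_add_app]
    have he : (-(i + 1 : ℕ) : ℤ) + (m : ℤ) = ((m - (i + 1) : ℕ) : ℤ) := by omega
    rw [he]
    exact not_lt.1 (Nat.find_min hex (show m - (i + 1) < m by omega))
  obtain ⟨z, hz⟩ := IsCompact.nonempty_iInter_of_sequence_nonempty_isCompact_isClosed K
    (fun j z hz => ⟨hz.1, fun i hi => hz.2 i (by omega)⟩) hnonempty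
    (hclosed 0).isCompact hclosed
  rw [Set.mem_iInter] at hz
  exact ⟨z, (hz 0).1, fun i => (hz (i + 1)).2 i (by omega)⟩

/-- An expansive homeomorphism of an infinite compact metric space has an
aperiodic point. -/
theorem statement12 {X : Type*} [MetricSpace X] [CompactSpace X] [Infinite X]
    (T : X ≃ₜ X)
    (hexp : ∃ ε : ℝ, 0 < ε ∧
      ∀ x y : X, x ≠ y → ∃ n : ℤ, ε < dist ((T ^ n) x) ((T ^ n) y)) :
    ∃ x : X, ∀ n : ℤ, n ≠ 0 → (T ^ n) x ≠ x := by
  obtain ⟨ε, hε, hexp⟩ := hexp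
  by_contra hno
  have hper : ∀ y : X, ∃ p : ℤ, 0 < p ∧ (T ^ p) y = y := by
    intro y
    by_contra hy
    refine hno ⟨y, fun n hn hny => hy ⟨n * n, mul_self_pos.2 hn, zpow_mul_app_of_fixed T hny n⟩⟩
  obtain ⟨x, hacc⟩ := exists_nhds_ne_neBot X
  obtain ⟨k, hk, hx⟩ := hper x
  obtain ⟨δ, hδ, hiso⟩ := exists_isolating_radius T hε hexp hk hx
  have hperS : ∀ y : X, ∃ p : ℤ, 0 < p ∧ ((T ^ k) ^ p) y = y := by
    intro y
    obtain ⟨p, hp, hy⟩ := hper y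
    exact ⟨p, hp, by rw [← zpow_mul, mul_comm]; exact zpow_mul_app_of_fixed T hy k⟩
  generalize T ^ k = S at hx hiso hperS
  have hexit : ∀ y : X, y ≠ x → ∃ m : ℕ, δ < dist ((S ^ (m : ℤ)) y) x := by
    intro y hyx
    by_contra! hall
    refine hyx (hiso y fun n => ?_)
    obtain ⟨p, hp, hy⟩ := hperS y
    -- shift the time `n` by a multiple of the period to make it nonnegative
    have hnn : 0 ≤ n + p * |n| := by nlinarith [neg_abs_le n, abs_nonneg n]
    have := hall (n + p * |n|).toNat
    rwa [Int.toNat_of_nonneg hnn, zpow_add_app, zpow_mul_app_of_fixed S hy] at this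
  obtain ⟨z, hz, hback⟩ := exists_backward_trapped S hx hδ hexit
  have hzx : z = x := by
    refine hiso z fun n => ?_
    obtain ⟨p, hp, hzp⟩ := hperS z
    -- shift the time `n` by a multiple of the period to make it negative
    have hneg : n + p * (-(|n| + 1)) < 0 := by nlinarith [le_abs_self n, abs_nonneg n]
    have := hback (-(n + p * (-(|n| + 1))) - 1).toNat
    have he : (-((-(n + p * (-(|n| + 1))) - 1).toNat + 1 : ℕ) : ℤ) = n + p * (-(|n| + 1)) := by
      omega
    rwa [he, zpow_add_app, zpow_mul_app_of_fixed S hzp] at this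
  rw [hzx, dist_self] at hz
  exact absurd hz (not_le.2 hδ)
end

section
/- Let T be a homeomorphism of a compact metric space X. If (X,T) is chaotic almost minimal, then (X,T) is weakly chaotic almost minimal. Conversely, if T is expansive and (X,T) is weakly chaotic almost minimal, then (X,T) is chaotic almost minimal. -/
/-!
If every proper closed invariant set is finite, then an orbit closure is either everything or
finite, so every orbit is dense or finite; this needs no expansiveness.

Conversely, let `A` be a proper closed invariant set in a weakly chaotic almost minimal system. No
point of `A` has a dense orbit, so every point of `A` is periodic. It remains to see that a
compact system with an expansive homeomorphism and only periodic points is finite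
(`finite_of_expansive_of_periodic`). If it is infinite, it contains distinct points that stay
`ε`-close during the times `0, …, n`, for any `n`. Since both points are periodic, they do separate
at some nonnegative time; translating the first such time to `0` gives a pair that is separated at
time `0` and `ε`-close at the times `-1, …, -n`. By compactness there is a pair with this property
for all `n`. But a pair of periodic points that is `ε`-close at all negative times is `ε`-close at
all times (`homeo_exists_shift`), which contradicts expansiveness.
-/

open Set MeasureTheory

/-- A weakly chaotic almost minimal `ℤ`-system: faithful, topologically transitive,
dense periodic points, and every orbit is finite or dense. -/
def IsWeaklyCAMZ {X : Type*} [TopologicalSpace X] (T : X ≃ₜ X) : Prop :=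
  (∀ n : ℤ, n ≠ 0 → T ^ n ≠ 1) ∧
  (∀ U V : Set X, IsOpen U → IsOpen V → U.Nonempty → V.Nonempty →
      ∃ n : ℤ, ((T ^ n) '' U ∩ V).Nonempty) ∧
  Dense {x : X | ∃ k : ℕ, 0 < k ∧ (T ^ k) x = x} ∧
  ∀ x : X, (Set.range fun n : ℤ => (T ^ n) x).Finite ∨
    Dense (Set.range fun n : ℤ => (T ^ n) x)

/-! ### Powers of a homeomorphism -/

section Helpers

variable {X : Type*} [TopologicalSpace X]

theorem homeo_zpow_add_apply (T : X ≃ₜ X) (m n : ℤ) (x : X) :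
    (T ^ (m + n)) x = (T ^ m) ((T ^ n) x) := by
  rw [zpow_add]; rfl

theorem homeo_zpow_zero_apply (T : X ≃ₜ X) (x : X) : (T ^ (0 : ℤ)) x = x := by
  rw [zpow_zero]; rfl

theorem homeo_zpow_one_apply (T : X ≃ₜ X) (x : X) : (T ^ (1 : ℤ)) x = T x := by
  rw [zpow_one]

theorem homeo_zpow_fix_mul (T : X ≃ₜ X) {k : ℤ} {x : X} (h : (T ^ k) x = x) (j : ℤ) :
    (T ^ (k * j)) x = x := by
  have hneg : (T ^ (-k)) x = x := by
    conv_lhs => rw [← h]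
    rw [← homeo_zpow_add_apply, neg_add_cancel, homeo_zpow_zero_apply]
  induction j using Int.induction_on with
  | zero => rw [mul_zero, homeo_zpow_zero_apply]
  | succ i ih => rw [mul_add, mul_one, homeo_zpow_add_apply, h, ih]
  | pred i ih => rw [mul_sub, mul_one, sub_eq_add_neg, homeo_zpow_add_apply, hneg, ih]

theorem homeo_zpow_mem (T : X ≃ₜ X) {A : Set X} (hA : T '' A = A) {x : X} (hx : x ∈ A) (n : ℤ) :
    (T ^ n) x ∈ A := by
  have hfwd : ∀ y ∈ A, T y ∈ A := fun y hy => hA ▸ mem_image_of_mem T hy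
  have hbwd : ∀ y, T y ∈ A → y ∈ A := by
    intro y hy
    rw [← hA] at hy
    obtain ⟨z, hz, hzy⟩ := hy
    exact T.injective hzy ▸ hz
  induction n using Int.induction_on with
  | zero => rwa [homeo_zpow_zero_apply]
  | succ i ih =>
    rw [add_comm, homeo_zpow_add_apply, homeo_zpow_one_apply]
    exact hfwd _ ih
  | pred i ih =>
    apply hbwd
    rw [← homeo_zpow_one_apply T ((T ^ (-(i : ℤ) - 1)) x), ← homeo_zpow_add_apply]
    convert ih using 3
    ring

theorem homeo_image_orbit (T : X ≃ₜ X) (x : X) :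
    T '' (range fun n : ℤ => (T ^ n) x) = range fun n : ℤ => (T ^ n) x := by
  ext y
  constructor
  · rintro ⟨_, ⟨n, rfl⟩, rfl⟩
    refine ⟨1 + n, ?_⟩
    simp only [homeo_zpow_add_apply, homeo_zpow_one_apply]
  · rintro ⟨n, rfl⟩
    refine ⟨_, ⟨n - 1, rfl⟩, ?_⟩
    simp only
    rw [← homeo_zpow_one_apply T ((T ^ (n - 1)) x), ← homeo_zpow_add_apply, add_sub_cancel]

theorem homeo_exists_period (T : X ≃ₜ X) {x : X}
    (h : (range fun n : ℤ => (T ^ n) x).Finite) : ∃ k : ℤ, 0 < k ∧ (T ^ k) x = x := by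
  have hcancel : ∀ i j : ℤ, (T ^ i) x = (T ^ j) x → (T ^ (i - j)) x = x := by
    intro i j hij
    rw [sub_eq_neg_add, homeo_zpow_add_apply, hij, ← homeo_zpow_add_apply, neg_add_cancel,
      homeo_zpow_zero_apply]
  have hninj : ¬ Function.Injective fun n : ℤ => (T ^ n) x := fun hinj =>
    infinite_range_of_injective hinj h
  simp only [Function.Injective, not_forall] at hninj
  obtain ⟨i, j, hij, hne⟩ := hninj
  rcases lt_or_gt_of_ne hne with hlt | hlt
  · exact ⟨j - i, by omega, hcancel j i hij.symm⟩
  · exact ⟨i - j, by omega, hcancel i j hij⟩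

end Helpers

/-! ### Expansive homeomorphisms and periodic points -/

/-- On a pair of periodic points, the orbit pair is itself periodic, so every time index can be
replaced by a nonnegative one or by a negative one. -/
theorem homeo_exists_shift {X : Type*} [TopologicalSpace X] (T : X ≃ₜ X) {x y : X}
    (hx : ∃ k : ℤ, 0 < k ∧ (T ^ k) x = x) (hy : ∃ k : ℤ, 0 < k ∧ (T ^ k) y = y) (n : ℤ) :
    ∃ p q : ℤ, 0 ≤ p ∧ q < 0 ∧ (T ^ p) x = (T ^ n) x ∧ (T ^ p) y = (T ^ n) y ∧
      (T ^ q) x = (T ^ n) x ∧ (T ^ q) y = (T ^ n) y := by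
  obtain ⟨k, hk, hkx⟩ := hx
  obtain ⟨l, hl, hly⟩ := hy
  have hkl : 1 ≤ k * l := Int.add_one_le_iff.mpr (mul_pos hk hl)
  have hX : ∀ j : ℤ, (T ^ (n + k * l * j)) x = (T ^ n) x := fun j => by
    rw [homeo_zpow_add_apply, mul_assoc, homeo_zpow_fix_mul T hkx]
  have hY : ∀ j : ℤ, (T ^ (n + k * l * j)) y = (T ^ n) y := fun j => by
    rw [homeo_zpow_add_apply, mul_comm k l, mul_assoc, homeo_zpow_fix_mul T hly]
  have hn := neg_abs_le n
  have hn' := le_abs_self n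
  have hn0 := abs_nonneg n
  refine ⟨n + k * l * (|n| + 1), n + k * l * (-(|n| + 1)), ?_, ?_, hX _, hY _, hX _, hY _⟩ <;>
    nlinarith

/-- A closed invariant set of an expansive homeomorphism of a compact space is finite if all of its
points are periodic. If the set were infinite, a pair of distinct points staying `ε`-close for a
long time, followed up to its first separation, would produce in the limit a pair which is
separated now but `ε`-close at all negative times; periodicity then makes it `ε`-close forever. -/
theorem finite_of_expansive_of_periodic {X : Type*} [MetricSpace X] [CompactSpace X]
    (T : X ≃ₜ X) {ε : ℝ} (hε : 0 < ε)
    (hexp : ∀ x y : X, x ≠ y → ∃ n : ℤ, ε < dist ((T ^ n) x) ((T ^ n) y))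
    {A : Set X} (hAc : IsClosed A) (hAT : T '' A = A)
    (hper : ∀ x ∈ A, ∃ k : ℤ, 0 < k ∧ (T ^ k) x = x) : A.Finite := by
  by_contra hinf
  have hinf : A.Infinite := hinf
  obtain ⟨p, hp⟩ := hinf.exists_accPt_principal
  have hpA : p ∈ A := hAc.closure_eq ▸ mem_closure_iff_clusterPt.mpr (AccPt.clusterPt hp)
  -- pairs that are separated at time `0` and `ε`-close at the times `-1, …, -n`
  let K : ℕ → Set (X × X) := fun n =>
    {z | z.1 ∈ A ∧ z.2 ∈ A ∧ ε ≤ dist z.1 z.2 ∧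
      ∀ i : ℕ, 1 ≤ i → i ≤ n → dist ((T ^ (-(i : ℤ))) z.1) ((T ^ (-(i : ℤ))) z.2) ≤ ε}
  have hKclosed : ∀ n, IsClosed (K n) := by
    intro n
    have hclose : IsClosed {z : X × X | ∀ i : ℕ, 1 ≤ i → i ≤ n →
        dist ((T ^ (-(i : ℤ))) z.1) ((T ^ (-(i : ℤ))) z.2) ≤ ε} := by
      have heq : {z : X × X | ∀ i : ℕ, 1 ≤ i → i ≤ n →
          dist ((T ^ (-(i : ℤ))) z.1) ((T ^ (-(i : ℤ))) z.2) ≤ ε} =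
          ⋂ (i : ℕ) (_ : 1 ≤ i) (_ : i ≤ n),
            {z : X × X | dist ((T ^ (-(i : ℤ))) z.1) ((T ^ (-(i : ℤ))) z.2) ≤ ε} := by
        ext z
        simp only [mem_iInter, mem_ofPred_eq]
      rw [heq]
      refine isClosed_iInter fun i => isClosed_iInter fun _ => isClosed_iInter fun _ => ?_
      exact isClosed_le (((T ^ (-(i : ℤ))).continuous.comp continuous_fst).dist
        ((T ^ (-(i : ℤ))).continuous.comp continuous_snd)) continuous_const
    exact (hAc.preimage continuous_fst).inter ((hAc.preimage continuous_snd).inter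
      ((isClosed_le continuous_const continuous_dist).inter hclose))
  have hKne : ∀ n, (K n).Nonempty := by
    intro n
    have hW : {y | ∀ i ∈ Finset.range (n + 1),
        dist ((T ^ (i : ℤ)) p) ((T ^ (i : ℤ)) y) < ε} ∈ nhds p := by
      refine (Filter.eventually_all_finset _).mpr fun i _ => ?_
      have hc : Continuous fun y => dist ((T ^ (i : ℤ)) p) ((T ^ (i : ℤ)) y) :=
        continuous_const.dist (T ^ (i : ℤ)).continuous
      exact hc.continuousAt.eventually_lt continuousAt_const (by simpa using hε)
    obtain ⟨y, ⟨hyW, hyA⟩, hyp⟩ := accPt_iff_nhds.mp hp _ hW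
    obtain ⟨r, hr⟩ := hexp p y hyp.symm
    obtain ⟨s, -, hs0, -, hsp, hsy, -, -⟩ := homeo_exists_shift T (hper p hpA) (hper y hyA) r
    have hex : ∃ m : ℕ, ε < dist ((T ^ (m : ℤ)) p) ((T ^ (m : ℤ)) y) := by
      refine ⟨s.toNat, ?_⟩
      rwa [Int.toNat_of_nonneg hs0, hsp, hsy]
    classical
    let m := Nat.find hex
    have hm : ε < dist ((T ^ (m : ℤ)) p) ((T ^ (m : ℤ)) y) := Nat.find_spec hex
    have hnm : n < m := by
      by_contra hle
      exact absurd hm (hyW m (Finset.mem_range.mpr (by omega))).not_gt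
    refine ⟨((T ^ (m : ℤ)) p, (T ^ (m : ℤ)) y), homeo_zpow_mem T hAT hpA _,
      homeo_zpow_mem T hAT hyA _, hm.le, fun i hi hin => ?_⟩
    have hmi : -(i : ℤ) + (m : ℤ) = ((m - i : ℕ) : ℤ) := by omega
    simp only [← homeo_zpow_add_apply, hmi]
    exact not_lt.mp (Nat.find_min hex (show m - i < m by omega))
  obtain ⟨⟨u, v⟩, huv⟩ := IsCompact.nonempty_iInter_of_sequence_nonempty_isCompact_isClosed K
    (fun n z hz => ⟨hz.1, hz.2.1, hz.2.2.1, fun i hi hin => hz.2.2.2 i hi (by omega)⟩)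
    hKne (hKclosed 0).isCompact hKclosed
  rw [mem_iInter] at huv
  obtain ⟨huA, hvA, hd, -⟩ := huv 0
  have hne : u ≠ v := dist_pos.mp (hε.trans_le hd)
  obtain ⟨r, hr⟩ := hexp u v hne
  obtain ⟨-, q, -, hq, -, -, hqu, hqv⟩ := homeo_exists_shift T (hper u huA) (hper v hvA) r
  have hclose := (huv q.natAbs).2.2.2 q.natAbs (by omega) le_rfl
  have hqabs : -(q.natAbs : ℤ) = q := by omega
  simp only [hqabs, hqu, hqv] at hclose
  exact absurd hr hclose.not_gt

/-- CAM implies weakly CAM; for expansive homeomorphisms, weakly CAM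
implies CAM. -/
theorem statement13 {X : Type*} [MetricSpace X] [CompactSpace X] (T : X ≃ₜ X) :
    (IsCAMZ T → IsWeaklyCAMZ T) ∧
    ((∃ ε : ℝ, 0 < ε ∧
        ∀ x y : X, x ≠ y → ∃ n : ℤ, ε < dist ((T ^ n) x) ((T ^ n) y)) →
      IsWeaklyCAMZ T → IsCAMZ T) := by
  constructor
  · rintro ⟨h1, h2, h3, h4⟩
    refine ⟨h1, h2, h3, fun x => ?_⟩
    by_cases hd : Dense (range fun n : ℤ => (T ^ n) x)
    · exact Or.inr hd
    · refine Or.inl ((h4 (closure (range fun n : ℤ => (T ^ n) x)) isClosed_closure ?_ ?_).subset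
        subset_closure)
      · rw [T.image_closure, homeo_image_orbit]
      · rwa [Ne, ← dense_iff_closure_eq]
  · rintro ⟨ε, hε, hexp⟩ ⟨h1, h2, h3, h4⟩
    refine ⟨h1, h2, h3, fun A hAc hAT hAne => ?_⟩
    refine finite_of_expansive_of_periodic T hε hexp hAc hAT fun x hx => ?_
    refine homeo_exists_period T ((h4 x).resolve_right fun hd => hAne ?_)
    -- a dense orbit inside the closed set `A` would force `A` to be the whole space
    have hsub : (range fun n : ℤ => (T ^ n) x) ⊆ A := by
      rintro _ ⟨n, rfl⟩
      exact homeo_zpow_mem T hAT hx n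
    exact univ_subset_iff.mp (hd.closure_eq ▸ closure_minimal hsub hAc)
end

section
/- Let G be a group acting faithfully by homeomorphisms on a compact metric space X such that the set of points with finite G-orbit is dense in X. Then G is residually finite. In particular, every group admitting a chaotic almost minimal action is residually finite. -/
/-!
If `g ≠ 1`, faithfulness and density give a point `x` with finite orbit and `T g x ≠ x`: otherwise
`T g` would agree with the identity on a dense set, hence everywhere. The permutation
representation of `G` on the finite orbit of `x` is then a homomorphism to a finite group that does
not kill `g`.
-/

open Set MeasureTheory

/-- A group acting faithfully by homeomorphisms on a compact metric space
with a dense set of points with finite orbit is residually finite; in particular every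
group admitting a chaotic almost minimal action is residually finite. -/
theorem statement14 {G X : Type*} [Group G] [MetricSpace X] [CompactSpace X]
    (T : G →* (X ≃ₜ X)) (hfaith : Function.Injective T)
    (hdense : Dense {x : X | (Set.range fun g : G => T g x).Finite}) :
    ∀ g : G, g ≠ 1 →
      ∃ (H : Type) (_ : Group H) (_ : Finite H) (φ : G →* H), φ g ≠ 1 := by
  intro g hg
  have hx : ∃ x : X, (Set.range fun h : G => T h x).Finite ∧ T g x ≠ x := by
    by_contra! hfix
    refine hg (hfaith ?_)
    rw [map_one]
    refine Homeomorph.ext fun y => ?_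
    have heq : (T g : X → X) = id :=
      Continuous.ext_on hdense (T g).continuous continuous_id fun x hx => hfix x hx
    exact congrFun heq y
  obtain ⟨x, hfin, hgx⟩ := hx
  letI : MulAction G X :=
    { smul := fun h y => T h y
      one_smul := fun y => by
        change T 1 y = y
        rw [map_one]
        rfl
      mul_smul := fun a b y => by
        change T (a * b) y = T a (T b y)
        rw [map_mul]
        rfl }
  haveI : Finite (MulAction.orbit G x) := hfin
  -- Transporting along a bijection with `Fin n` puts the target group in `Type`.
  obtain ⟨n, ⟨e⟩⟩ := Finite.exists_equiv_fin (MulAction.orbit G x)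
  refine ⟨Equiv.Perm (Fin n), inferInstance, inferInstance,
    e.permCongrHom.toMonoidHom.comp (MulAction.toPermHom G (MulAction.orbit G x)), fun h1 => ?_⟩
  have h2 : MulAction.toPermHom G (MulAction.orbit G x) g = 1 :=
    e.permCongrHom.injective (h1.trans (map_one _).symm)
  have h3 := DFunLike.congr_fun h2 ⟨x, MulAction.mem_orbit_self x⟩
  exact hgx (congrArg Subtype.val h3)
end

section
/- Let (X,T) be a chaotic almost minimal topological G-system and let H be a finite-index normal subgroup of G with left coset representatives g_1, …, g_m (so G = g_1 H ∪ … ∪ g_m H). Let Y ⊆ X be a compact H-invariant subset containing a point whose H-orbit is infinite. Then ⋃_{i=1}^m T_{g_i}(Y) = X, and the set of points of Y with finite H-orbit is dense in Y. -/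
/-!
The union of the translates `T_{gᵢ}(Y)` is closed, `G`-invariant (left multiplication permutes the
left cosets of `H`) and infinite, hence it is all of `X` by almost minimality: `cover_of_infinite`.

For density, let `y ∈ Y` have infinite `H`-orbit and let `Z ⊆ Y` be the closure of that orbit. The
covering statement applies to `Z`, so finitely many translates of `Z` cover `X`, and by Baire `Z`
has nonempty interior. The interior is `H`-invariant and meets the dense orbit of `y`, so it
contains `y`. As points with finite `G`-orbit are dense in `X`, they accumulate at `y` inside `Z`.
-/

open Set MeasureTheory

lemma action_mul {G X : Type*} [Group G] [TopologicalSpace X] (T : G →* (X ≃ₜ X))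
    (a b : G) (x : X) : T (a * b) x = T a (T b x) := by
  rw [map_mul]; rfl

lemma action_one {G X : Type*} [Group G] [TopologicalSpace X] (T : G →* (X ≃ₜ X))
    (x : X) : T 1 x = x := by
  rw [map_one]; rfl

lemma action_inv_cancel {G X : Type*} [Group G] [TopologicalSpace X] (T : G →* (X ≃ₜ X))
    (a : G) (x : X) : T a (T a⁻¹ x) = x := by
  rw [← action_mul, mul_inv_cancel, action_one]

/-- Invariance under a group follows from forward invariance under all of its elements. -/
lemma image_eq_of_mapsTo {G X : Type*} [Group G] [TopologicalSpace X] (T : G →* (X ≃ₜ X))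
    (H : Subgroup G) (A : Set X) (hA : ∀ h ∈ H, ∀ x ∈ A, T h x ∈ A) (h : G) (hh : h ∈ H) :
    T h '' A = A := by
  apply Subset.antisymm
  · rintro _ ⟨x, hx, rfl⟩
    exact hA h hh x hx
  · intro x hx
    exact ⟨T h⁻¹ x, hA _ (H.inv_mem hh) x hx, action_inv_cancel T h x⟩

/-- The translates of a closed `H`-invariant set with an infinite `H`-orbit cover `X`. -/
lemma cover_of_infinite {G X : Type*} [Group G] [TopologicalSpace X]
    (T : G →* (X ≃ₜ X)) (hcam : IsCAM T) (H : Subgroup G) (m : ℕ) (g : Fin m → G)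
    (hcoset : ∀ a : G, ∃ i : Fin m, (g i)⁻¹ * a ∈ H)
    (Y : Set X) (hYcl : IsClosed Y) (hYinv : ∀ h : G, h ∈ H → T h '' Y = Y)
    (horb : ∃ y ∈ Y, (Set.range fun h : H => T (h : G) y).Infinite) :
    (⋃ i : Fin m, T (g i) '' Y) = Set.univ := by
  have hmem : ∀ h ∈ H, ∀ x ∈ Y, T h x ∈ Y := fun h hh x hx => by
    rw [← hYinv h hh]; exact mem_image_of_mem _ hx
  -- Writing `b = gⱼ h` with `h ∈ H`, the point `T_b y` lies in `T_{gⱼ}(Y)`.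
  have hsub : ∀ b : G, ∀ y ∈ Y, T b y ∈ ⋃ i : Fin m, T (g i) '' Y := fun b y hy => by
    obtain ⟨j, hj⟩ := hcoset b
    refine mem_iUnion.2 ⟨j, T ((g j)⁻¹ * b) y, hmem _ hj y hy, ?_⟩
    rw [← action_mul, mul_inv_cancel_left]
  by_contra hne
  have hfin := hcam.2.2.2 (⋃ i : Fin m, T (g i) '' Y)
    (isClosed_iUnion_of_finite fun i => (T (g i)).isClosedMap _ hYcl)
    (fun a => image_eq_of_mapsTo T ⊤ _ (by
      intro b _ x hx
      obtain ⟨i, y, hy, rfl⟩ := mem_iUnion.1 hx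
      rw [← action_mul]
      exact hsub _ y hy) a trivial) hne
  obtain ⟨y, hy, hinf⟩ := horb
  refine hinf (hfin.subset ?_)
  rintro _ ⟨h, rfl⟩
  exact hsub h y hy

/-- A point with infinite `H`-orbit is interior to the closure of its `H`-orbit. -/
lemma mem_interior_orbit_closure {G X : Type*} [Group G] [TopologicalSpace X] [BaireSpace X]
    (T : G →* (X ≃ₜ X)) (hcam : IsCAM T) (H : Subgroup G) (m : ℕ) (g : Fin m → G)
    (hcoset : ∀ a : G, ∃ i : Fin m, (g i)⁻¹ * a ∈ H)
    (y : X) (hinf : (Set.range fun h : H => T (h : G) y).Infinite) :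
    y ∈ interior (closure (Set.range fun h : H => T (h : G) y)) := by
  set O := Set.range fun h : H => T (h : G) y
  have hOinv : ∀ h ∈ H, T h '' O = O := image_eq_of_mapsTo T H O (by
    rintro h hh _ ⟨k, rfl⟩
    exact ⟨⟨h * k, H.mul_mem hh k.2⟩, action_mul T h k y⟩)
  have hZinv : ∀ h ∈ H, T h '' closure O = closure O := fun h hh => by
    rw [Homeomorph.image_closure, hOinv h hh]
  have hyO : y ∈ O := ⟨1, action_one T y⟩
  have hcov := cover_of_infinite T hcam H m g hcoset (closure O) isClosed_closure hZinv
    ⟨y, subset_closure hyO, hinf⟩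
  have : Nonempty X := ⟨y⟩
  obtain ⟨i, hi⟩ := nonempty_interior_of_iUnion_of_closed
    (fun i => (T (g i)).isClosedMap _ isClosed_closure) hcov
  rw [← Homeomorph.image_interior] at hi
  obtain ⟨z, hz⟩ := hi.of_image
  -- The orbit of `y` is dense in its closure, so it meets the interior at some `T_h y`.
  obtain ⟨_, hw, ⟨h, rfl⟩⟩ :=
    mem_closure_iff.1 (interior_subset hz) _ isOpen_interior hz
  rw [← hZinv h h.2, ← Homeomorph.image_interior] at hw
  obtain ⟨x, hx, hxy⟩ := hw
  exact (T (h : G)).injective hxy ▸ hx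

/-- If `(X,T)` is a CAM `G`-system, `H` a finite-index normal subgroup of
`G` with left coset representatives `g 1, …, g m`, and `Y ⊆ X` a compact `H`-invariant
subset containing a point with infinite `H`-orbit, then `⋃ᵢ T_{gᵢ}(Y) = X` and the
points of `Y` with finite `H`-orbit are dense in `Y`. -/
theorem statement15 {G X : Type*} [Group G] [MetricSpace X] [CompactSpace X]
    (T : G →* (X ≃ₜ X)) (hcam : IsCAM T)
    (H : Subgroup G) (hnorm : H.Normal)
    (m : ℕ) (g : Fin m → G)
    (hcoset : ∀ a : G, ∃ i : Fin m, (g i)⁻¹ * a ∈ H)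
    (Y : Set X) (hYcomp : IsCompact Y)
    (hYinv : ∀ h : G, h ∈ H → T h '' Y = Y)
    (horb : ∃ y ∈ Y, (Set.range fun h : H => T (h : G) y).Infinite) :
    (⋃ i : Fin m, T (g i) '' Y) = Set.univ ∧
    ∀ y ∈ Y, y ∈ closure {z | z ∈ Y ∧ (Set.range fun h : H => T (h : G) z).Finite} := by
  have hmem : ∀ h ∈ H, ∀ x ∈ Y, T h x ∈ Y := fun h hh x hx => by
    rw [← hYinv h hh]; exact mem_image_of_mem _ hx
  refine ⟨cover_of_infinite T hcam H m g hcoset Y hYcomp.isClosed hYinv horb, fun y hy => ?_⟩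
  by_cases hfin : (Set.range fun h : H => T (h : G) y).Finite
  · exact subset_closure ⟨hy, hfin⟩
  have hyint := mem_interior_orbit_closure T hcam H m g hcoset y hfin
  have hZY : closure (Set.range fun h : H => T (h : G) y) ⊆ Y :=
    closure_minimal (by rintro _ ⟨h, rfl⟩; exact hmem h h.2 y hy) hYcomp.isClosed
  rw [mem_closure_iff]
  intro U hU hyU
  obtain ⟨z, ⟨hzU, hzi⟩, hz⟩ :=
    hcam.2.2.1.inter_open_nonempty _ (hU.inter isOpen_interior) ⟨y, hyU, hyint⟩
  refine ⟨z, hzU, hZY (interior_subset hzi), Set.Finite.subset hz ?_⟩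
  rintro _ ⟨h, rfl⟩
  exact ⟨h, rfl⟩
end
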